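/- Let λ > 1, let α be Diophantine, and let θ ∈ ℝ satisfy δ(α,θ) < ln λ. Let {φ_s}_{s≥1} be an orthonormal basis of ℓ²(ℤ) consisting of eigenfunctions of the almost Mathieu operator H_{λ,α,θ}, and for each s let m_s ∈ ℤ be a global maximum of |φ_s|. Then d_- := liminf_{L→∞} #{s : |m_s| ≤ L}/(2L+1) ≥ 1 − δ(α,θ)/ln λ. -/

import Mathlib

noncomputable section

open Filter Real

def distToInt (x : ℝ) : ℝ := |x - round x|

def IsDiophantine (α : ℝ) : Prop :=
  ∃ κ τ : ℝ, 0 < κ ∧ 0 < τ ∧ ∀ k : ℤ, k ≠ 0 → τ / |(k : ℝ)| ^ κ ≤ distToInt (k * α)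

def deltaPhase (α θ : ℝ) : ℝ :=
  limsup (fun n : ℤ => -Real.log (distToInt (2 * θ + n * α)) / |(n : ℝ)|) cofinite

def amoPot (lam α θ : ℝ) : ℤ → ℝ := fun n => 2 * lam * Real.cos (2 * Real.pi * (θ + n * α))

def IsEigenfunction (g : ℤ → ℝ) (E : ℝ) (φ : ℤ → ℝ) : Prop :=
  ∀ n : ℤ, φ (n + 1) + φ (n - 1) + g n * φ n = E * φ n

def deltaPot (g : ℤ → ℝ) : ℝ :=
  limsup (fun n : ℤ => -Real.log (⨆ m : ℤ, |g (n - m) - g m|) / |(n : ℝ)|) cofinite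

def matNorm (M : Matrix (Fin 2) (Fin 2) ℝ) : ℝ := ⨆ p : Fin 2 × Fin 2, |M p.1 p.2|

def transfer (g : ℤ → ℝ) (E : ℝ) : ℕ → ℤ → Matrix (Fin 2) (Fin 2) ℝ
  | 0, _ => 1
  | n + 1, k => !![E - g (k + n), -1; 1, 0] * transfer g E n k

def LyapSup (g : ℤ → ℝ) (E : ℝ) : ℝ :=
  limsup (fun n : ℕ => ⨆ k : ℤ, Real.log (matNorm (transfer g E n k)) / n) atTop

def HasSULE (g : ℤ → ℝ) : Prop :=
  ∃ (Φ : HilbertBasis ℕ ℝ (lp (fun _ : ℤ => ℝ) 2)) (ns : ℕ → ℤ) (γ : ℝ),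
    0 < γ ∧
    (∀ s : ℕ, ∃ E : ℝ, IsEigenfunction g E (fun n => Φ s n)) ∧
    ∀ ε : ℝ, 0 < ε → ∃ C : ℝ,
      ∀ (s : ℕ) (n : ℤ),
        |Φ s n| ≤ C * Real.exp (ε * |(ns s : ℝ)|) * Real.exp (-γ * |(n : ℝ) - (ns s : ℝ)|)


namespace AMO

/-- continuant -/
def P (V : ℝ → ℝ) (α : ℝ) : ℕ → ℝ → ℝ
  | 0, _ => 1
  | 1, x => V x
  | k + 2, x => V (x + (k + 1) * α) * P V α (k + 1) x - P V α k x

theorem P_zero (V : ℝ → ℝ) (α x : ℝ) : P V α 0 x = 1 := by simp [P]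
theorem P_one (V : ℝ → ℝ) (α x : ℝ) : P V α 1 x = V x := by simp [P]
theorem P_succ (V : ℝ → ℝ) (α x : ℝ) (k : ℕ) :
    P V α (k + 2) x = V (x + (k + 1) * α) * P V α (k + 1) x - P V α k x := by simp [P]

theorem P_left (V : ℝ → ℝ) (α : ℝ) (k : ℕ) : ∀ x, 
    P V α (k + 2) x = V x * P V α (k + 1) (x + α) - P V α k (x + 2 * α) := by
  induction k using Nat.strong_induction_on with
  | _ k ih =>
    intro x
    rcases k with _ | _ | k
    · simp [P_succ, P_one, P_zero]; ring
    · rw [P_succ, P_succ, P_succ, P_one, P_one, P_one]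
      simp only [P_zero, Nat.cast_zero, Nat.cast_one]
      push_cast
      rw [show x + α + (0 + 1) * α = x + 2 * α by ring, show x + (0 + 1 : ℝ) * α = x + α by ring,
        show x + (1 + 1 : ℝ) * α = x + 2 * α by ring]
      ring
    · rw [P_succ V α x (k + 2), ih (k + 1) (by omega) x, ih k (by omega) x,
        P_succ V α (x + α) (k + 1), P_succ V α (x + 2 * α) k]
      push_cast
      rw [show x + α + (k + 1 + 1 : ℝ) * α = x + (k + 2 + 1) * α by ring,
        show x + 2 * α + (k + 1 : ℝ) * α = x + (k + 2 + 1) * α by ring]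
      ring

theorem P_concat (V : ℝ → ℝ) (α x : ℝ) (k l : ℕ) :
    P V α (k + 1 + (l + 1)) x = P V α (k + 1) x * P V α (l + 1) (x + (k + 1) * α)
      - P V α k x * P V α l (x + (k + 2) * α) := by
  induction l using Nat.strong_induction_on with
  | _ l ih =>
    rcases l with _ | _ | l
    · rw [show k + 1 + (0 + 1) = k + 2 by ring, P_succ]
      simp [P_one, P_zero]; ring
    · rw [show k + 1 + (0 + 1 + 1) = (k + 1) + 2 by ring, P_succ, P_succ V α x k, P_succ]
      simp only [P_zero, P_one, Nat.cast_zero, zero_add]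
      push_cast
      rw [show x + (k + 1 : ℝ) * α + 1 * α = x + (k + 1 + 1) * α by ring,
        show x + (k + 2 : ℝ) * α  = x + (k + 1 + 1) * α by ring]
      ring
    · have h1 := ih (l + 1) (by omega)
      have h0 := ih l (by omega)
      rw [show k + 1 + (l + 1 + 1 + 1) = (k + 1 + (l + 1)) + 2 by ring, P_succ,
        show k + 1 + (l + 1) + 1 = k + 1 + (l + 1 + 1) by ring, h1, h0,
        P_succ V α (x + (k + 1) * α) (l + 1), P_succ V α (x + (k + 2) * α) l]
      push_cast
      rw [show x + (k + 1 + (l + 1) + 1 : ℝ) * α = x + (k + l + 3) * α by ring,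
        show x + (k + 1 : ℝ) * α + (l + 1 + 1) * α = x + (k + l + 3) * α by ring,
        show x + (k + 2 : ℝ) * α + (l + 1) * α = x + (k + l + 3) * α by ring]
      ring

/-- solutions -/
def IsSol (V : ℝ → ℝ) (α θ : ℝ) (u : ℤ → ℝ) : Prop :=
  ∀ n : ℤ, u (n + 1) = V (θ + n * α) * u n - u (n - 1)

theorem green0 {V : ℝ → ℝ} {α θ : ℝ} {u : ℤ → ℝ} (hu : IsSol V α θ u) (a : ℤ) (j : ℕ) :
    P V α (j + 1) (θ + a * α) * u (a + j) = u (a - 1) + P V α j (θ + a * α) * u (a + j + 1) := by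
  induction j with
  | zero => have := hu a; simp [P_one, P_zero]; rw [this]; ring
  | succ j ih =>
    have := hu (a + j + 1)
    rw [P_succ]
    push_cast at *
    rw [show a + (j : ℤ) + 1 - 1 = a + j by ring] at this
    rw [show a + ((j : ℤ) + 1) + 1 = a + j + 1 + 1 by ring, this, show a + ((j : ℤ) + 1) = a + j + 1 by ring]
    rw [show θ + (a + j + 1 : ℝ) * α = θ + a * α + (j + 1) * α by ring]
    linear_combination ih

theorem green {V : ℝ → ℝ} {α θ : ℝ} {u : ℤ → ℝ} (hu : IsSol V α θ u) (a : ℤ) (j r : ℕ) :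
    P V α (j + 1 + r) (θ + a * α) * u (a + j) = P V α r (θ + (a + j + 1) * α) * u (a - 1)
      + P V α j (θ + a * α) * u (a + j + r + 1) := by
  induction r using Nat.strong_induction_on with
  | _ r ih =>
    rcases r with _ | _ | r
    · have := green0 hu a j
      simp only [P_zero, Nat.cast_zero, add_zero, one_mul]; exact this
    · have h0 := green0 hu a j
      have h2 := hu (a + j + 1)
      rw [show j + 1 + (0 + 1) = j + 2 by ring, P_succ]
      simp only [zero_add, P_one]
      push_cast at *
      rw [show a + (j : ℤ) + 1 - 1 = a + j by ring] at h2
      rw [h2]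
      rw [show θ + (a + j + 1 : ℝ) * α = θ + a * α + (j + 1) * α by ring]
      linear_combination (V (θ + a * α + (j + 1) * α)) * h0
    · have h1 := ih (r + 1) (by omega)
      have h0 := ih r (by omega)
      have h2 := hu (a + j + r + 2)
      rw [show j + 1 + (r + 1 + 1) = (j + 1 + r) + 2 by ring, P_succ, P_succ V α _ r]
      rw [show j + 1 + (r + 1) = j + 1 + r + 1 by ring] at h1
      push_cast at *
      rw [show a + (j : ℤ) + r + 2 - 1 = a + j + r + 1 by ring, show a + (j : ℤ) + r + 2 + 1 = a + j + r + 3 by ring] at h2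
      rw [show a + (j : ℤ) + (r + 1 + 1) + 1 = a + j + r + 3 by ring, h2]
      rw [show a + (j : ℤ) + (r + 1) + 1 = a + j + r + 2 by ring] at h1
      rw [show θ + a * α + (j + 1 + r + 1 : ℝ) * α = θ + (a + j + r + 2) * α by ring,
        show θ + (a + j + 1 : ℝ) * α + (r + 1) * α = θ + (a + j + r + 2) * α by ring]
      linear_combination (V (θ + (a + j + r + 2) * α)) * h1 - h0

/-- the two-sided solution with values `1` at `0` and `0` at `-1` -/
def sol (V : ℝ → ℝ) (α x : ℝ) : ℤ → ℝ
  | Int.ofNat n => P V α n x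
  | Int.negSucc 0 => 0
  | Int.negSucc (n + 1) => - P V α n (x - (n + 1) * α)

theorem sol_isSol (V : ℝ → ℝ) (α x : ℝ) : IsSol V α x (sol V α x) := by
  intro n
  rcases n with n | n
  · rcases n with _ | n
    · show P V α 1 x = V (x + ((0 : ℕ) : ℤ) * α) * P V α 0 x - 0
      simp [P_one, P_zero]
    · have e : Int.ofNat (n + 1) - 1 = Int.ofNat n := by simp
      rw [e]
      show P V α (n + 2) x = V (x + ((n + 1 : ℕ) : ℤ) * α) * P V α (n + 1) x - P V α n x
      rw [P_succ]; push_cast; rfl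
  · rcases n with _ | _ | n
    · show P V α 0 x = V _ * 0 - (- P V α 0 _)
      simp [P_zero]
    · show (0 : ℝ) = V (x + ((Int.negSucc 1 : ℤ) : ℝ) * α) * (- P V α 0 _) - (- P V α 1 _)
      rw [P_zero, P_one]
      have : ((Int.negSucc 1 : ℤ) : ℝ) = -2 := by rw [Int.cast_negSucc]; norm_num
      rw [this]; push_cast
      rw [show x - (1 + 1) * α = x + -2 * α by ring]; simp
    · show -P V α n (x - (n + 1) * α) = V (x + ((Int.negSucc (n + 2) : ℤ) : ℝ) * α) *
        (- P V α (n + 1) (x - ((n + 1 : ℕ) + 1) * α)) - (- P V α (n + 2) (x - ((n + 2 : ℕ) + 1) * α))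
      rw [P_left]
      have : ((Int.negSucc (n + 2) : ℤ) : ℝ) = -(n + 3) := by rw [Int.cast_negSucc]; push_cast; ring
      rw [this]; push_cast
      rw [show x - ((n : ℝ) + 2 + 1) * α = x + -(n + 3) * α by ring,
        show x + -((n : ℝ) + 3) * α + α = x - (n + 1 + 1) * α by ring,
        show x + -((n : ℝ) + 3) * α + 2 * α = x - (n + 1) * α by ring]
      ring

theorem sol_zero (V : ℝ → ℝ) (α x : ℝ) : sol V α x 0 = 1 := by
  show P V α 0 x = 1
  simp [P_zero]

/-- reversal symmetry -/
theorem P_rev {V : ℝ → ℝ} (hV : ∀ x, V (-x) = V x) (α : ℝ) (k : ℕ) : ∀ x,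
    P V α k (-x - ((k : ℝ) - 1) * α) = P V α k x := by
  induction k using Nat.strong_induction_on with
  | _ k ih =>
    intro x
    rcases k with _ | _ | k
    · simp [P_zero]
    · simp [P_one, hV]
    · rw [P_succ, P_left]
      have h1 := ih (k + 1) (by omega) (x + α)
      have h0 := ih k (by omega) (x + 2 * α)
      push_cast at *
      rw [show -x - ((k : ℝ) + 1 + 1 - 1) * α + (k + 1) * α = -x by ring, hV,
        ← h1, ← h0]
      rw [show -(x + α) - ((k : ℝ) + 1 - 1) * α = -x - ((k : ℝ) + 1 + 1 - 1) * α by ring,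
        show -(x + 2 * α) - ((k : ℝ) - 1) * α = -x - ((k : ℝ) + 1 + 1 - 1) * α by ring]

theorem P_bound {V : ℝ → ℝ} {M : ℝ} (hM : 0 ≤ M) (hV : ∀ x, |V x| ≤ M) (α : ℝ) (k : ℕ) : ∀ x,
    |P V α k x| ≤ (M + 1) ^ k := by
  induction k using Nat.strong_induction_on with
  | _ k ih =>
    intro x
    rcases k with _ | _ | k
    · simp [P_zero]
    · simp [P_one]; linarith [hV x]
    · rw [P_succ]
      have h1 := ih (k + 1) (by omega) x
      have h0 := ih k (by omega) x
      have h3 := hV (x + (k + 1) * α)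
      have hp : 0 < (M + 1) ^ k := by positivity
      calc _ ≤ |V (x + (k + 1) * α) * P V α (k + 1) x| + |P V α k x| := abs_sub _ _
        _ ≤ M * (M + 1) ^ (k + 1) + (M + 1) ^ k := by
          rw [abs_mul]; gcongr
        _ ≤ _ := by
          have : (M+1)^(k+1+1) - (M * (M + 1) ^ (k + 1) + (M + 1) ^ k) = (M+1)^k * M := by ring
          nlinarith

/-- the AMO function -/
def W (lam E : ℝ) : ℝ → ℝ := fun x => E - 2 * lam * Real.cos (2 * π * x)

theorem W_even (lam E x : ℝ) : W lam E (-x) = W lam E x := by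
  simp [W]

theorem W_bound {lam E : ℝ} (h : 0 ≤ lam) (x : ℝ) : |W lam E x| ≤ |E| + 2 * lam := by
  unfold W
  have := Real.abs_cos_le_one (2 * π * x)
  calc _ ≤ |E| + |2 * lam * Real.cos (2 * π * x)| := abs_sub _ _
    _ ≤ _ := by
      rw [abs_mul, abs_of_nonneg (by linarith : (0:ℝ) ≤ 2 * lam)]
      nlinarith

end AMO


namespace AMO
open Polynomial in
def pz (lam E α : ℝ) : ℕ → Polynomial ℂ
  | 0 => 1
  | 1 => C (E : ℂ) * X - C (lam : ℂ) * (X ^ 2 + 1)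
  | k + 2 => (C (E : ℂ) * X - C (lam : ℂ) * (C (Complex.exp ((2 * π * ((k + 1) * α) : ℝ) * Complex.I)) * X ^ 2
      + C (Complex.exp (-((2 * π * ((k + 1) * α) : ℝ) * Complex.I))))) * pz lam E α (k + 1)
      - X ^ 2 * pz lam E α k

theorem two_cos_exp (t : ℝ) : (2 * Real.cos t : ℂ) = Complex.exp (t * Complex.I) + Complex.exp (-(t * Complex.I)) := by
  rw [Complex.ofReal_cos, Complex.cos]; ring_nf

theorem pz_eval (lam E α y : ℝ) (k : ℕ) :
    (pz lam E α k).eval (Complex.exp ((2 * π * y : ℝ) * Complex.I))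
      = Complex.exp ((2 * π * y : ℝ) * Complex.I) ^ k * ((P (W lam E) α k y : ℝ) : ℂ) := by
  have key : ∀ c : ℝ, Complex.exp ((2 * π * y : ℝ) * Complex.I) * ((W lam E (y + c) : ℝ) : ℂ)
      = E * Complex.exp ((2 * π * y : ℝ) * Complex.I) - lam *
      (Complex.exp ((2 * π * c : ℝ) * Complex.I) * Complex.exp ((2 * π * y : ℝ) * Complex.I) ^ 2
        + Complex.exp (-((2 * π * c : ℝ) * Complex.I))) := by
    intro c
    have h := two_cos_exp (2 * π * (y + c))
    have e1 : Complex.exp ((2 * π * (y + c) : ℝ) * Complex.I) =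
      Complex.exp ((2 * π * y : ℝ) * Complex.I) * Complex.exp ((2 * π * c : ℝ) * Complex.I) := by
      rw [← Complex.exp_add]; push_cast; ring_nf
    have e2 : Complex.exp ((2 * π * y : ℝ) * Complex.I) * Complex.exp (-((2 * π * (y + c) : ℝ) * Complex.I)) =
       Complex.exp (-((2 * π * c : ℝ) * Complex.I)) := by
      rw [← Complex.exp_add]; push_cast; ring_nf
    have e3 : ((W lam E (y + c) : ℝ) : ℂ) = E - lam * (2 * Real.cos (2 * π * (y + c)) : ℂ) := by
      unfold W; push_cast; ring
    rw [e3, h, e1]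
    linear_combination (-(lam : ℂ)) * e2
  induction k using Nat.strong_induction_on with
  | _ k ih =>
    rcases k with _ | _ | k
    · simp [pz, P_zero]
    · have := key 0
      simp only [add_zero, mul_zero, Complex.ofReal_zero, zero_mul, Complex.exp_zero, neg_zero] at this
      simp only [pz, P_one, zero_add, pow_one, this]
      simp
    · have h1 := ih (k + 1) (by omega)
      have h0 := ih k (by omega)
      have hk := key ((k + 1) * α)
      rw [pz, P_succ]
      simp only [Polynomial.eval_sub, Polynomial.eval_mul, Polynomial.eval_add, Polynomial.eval_pow,
        Polynomial.eval_C, Polynomial.eval_X]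
      rw [h1, h0, ← hk]
      push_cast
      ring

theorem pz_natDegree (lam E α : ℝ) (k : ℕ) : (pz lam E α k).natDegree ≤ 2 * k := by
  induction k using Nat.strong_induction_on with
  | _ k ih =>
    rcases k with _ | _ | k
    · simp [pz]
    · rw [pz]; compute_degree
    · have h1 := ih (k + 1) (by omega)
      have h0 := ih k (by omega)
      rw [pz]
      refine (Polynomial.natDegree_sub_le _ _).trans (max_le ?_ ?_)
      · refine Polynomial.natDegree_mul_le.trans ?_
        have : ∀ a b c d : ℂ, (Polynomial.C a * Polynomial.X - Polynomial.C b *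
          (Polynomial.C c * Polynomial.X ^ 2 + Polynomial.C d)).natDegree ≤ 2 := by
          intro a b c d; compute_degree
        have := this E lam (Complex.exp ((2 * π * ((k + 1) * α) : ℝ) * Complex.I))
          (Complex.exp (-((2 * π * ((k + 1) * α) : ℝ) * Complex.I)))
        omega
      · refine Polynomial.natDegree_mul_le.trans ?_
        simp only [Polynomial.natDegree_X_pow]; omega

theorem pz_zero {lam : ℝ} (hl : 0 ≤ lam) (E α : ℝ) (k : ℕ) : ‖(pz lam E α k).eval 0‖ = lam ^ k := by
  induction k using Nat.strong_induction_on with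
  | _ k ih =>
    rcases k with _ | _ | k
    · simp [pz]
    · simp [pz, abs_of_nonneg hl]
    · have h1 := ih (k + 1) (by omega)
      rw [pz]
      simp only [Polynomial.eval_sub, Polynomial.eval_mul, Polynomial.eval_add, Polynomial.eval_pow,
        Polynomial.eval_C, Polynomial.eval_X]
      simp only [mul_zero, zero_sub, ne_eq, OfNat.ofNat_ne_zero, not_false_eq_true, zero_pow, zero_add, zero_mul, sub_zero,
        norm_mul, norm_neg, h1]
      rw [← neg_mul, ← Complex.ofReal_neg, Complex.norm_exp_ofReal_mul_I]
      simp [abs_of_nonneg hl]; ring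

theorem herman {lam : ℝ} (hl : 0 ≤ lam) (E α : ℝ) (k : ℕ) {B : ℝ} (hB : ∀ x, |P (W lam E) α k x| ≤ B) :
    lam ^ k ≤ B := by
  rw [← pz_zero hl E α k]
  apply Complex.norm_le_of_forall_mem_frontier_norm_le (U := Metric.ball (0:ℂ) 1) Metric.isBounded_ball
    (f := fun z => (pz lam E α k).eval z)
  · exact (Polynomial.differentiable _).diffContOnCl
  · intro z hz
    rw [frontier_ball _ one_ne_zero, mem_sphere_zero_iff_norm] at hz
    obtain ⟨t, rfl⟩ := (Complex.norm_eq_one_iff z).1 hz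
    have := pz_eval lam E α (t / (2 * π)) k
    rw [show 2 * π * (t / (2 * π)) = t by field_simp] at this
    rw [this, norm_mul, norm_pow, Complex.norm_exp_ofReal_mul_I]
    simpa using hB _
  · exact subset_closure (by simp)

theorem cos_poly (lam E α : ℝ) (k : ℕ) : ∃ Q : Polynomial ℝ, Q.natDegree ≤ k ∧
    ∀ y, P (W lam E) α k (y - ((k : ℝ) - 1) * α / 2) = Q.eval (Real.cos (2 * π * y)) := by
  set f : ℝ → ℝ := fun y => P (W lam E) α k (y - ((k : ℝ) - 1) * α / 2) with hf
  set c0 : ℝ := - (((k : ℝ) - 1) * α / 2) with hc0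
  have heven : ∀ y, f (-y) = f y := by
    intro y
    have := P_rev (W_even lam E) α k (y - ((k : ℝ) - 1) * α / 2)
    simp only [hf]; rw [← this]; congr 1; ring
  set c : ℕ → ℂ := fun i => (pz lam E α k).coeff i * Complex.exp ((2 * π * (((i : ℝ) - k) * c0) : ℝ) * Complex.I) with hc
  have hfe : ∀ y, ((f y : ℝ) : ℂ) = ∑ i ∈ Finset.range (2 * k + 1), c i * Complex.exp (((((i : ℤ) - k : ℤ)) * (2 * π * y) : ℝ) * Complex.I) := by
    intro y
    have h := pz_eval lam E α (y + c0) k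
    rw [Polynomial.eval_eq_sum_range' (Nat.lt_succ_of_le (pz_natDegree lam E α k))] at h
    have hne : Complex.exp ((2 * π * (y + c0) : ℝ) * Complex.I) ^ k ≠ 0 := pow_ne_zero _ (Complex.exp_ne_zero _)
    have : ((f y : ℝ) : ℂ) = (Complex.exp ((2 * π * (y + c0) : ℝ) * Complex.I) ^ k)⁻¹ * ∑ i ∈ Finset.range (2 * k).succ,
        (pz lam E α k).coeff i * Complex.exp (↑(2 * π * (y + c0)) * Complex.I) ^ i := by
      rw [h]; field_simp; simp only [hf, hc0]; congr 2
    rw [this, Finset.mul_sum]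
    refine Finset.sum_congr rfl fun i _ => ?_
    simp only [hc]
    rw [← Complex.exp_nat_mul, ← Complex.exp_nat_mul, ← Complex.exp_neg, mul_left_comm, ← Complex.exp_add, mul_assoc ((pz lam E α k).coeff i), ← Complex.exp_add]
    congr 2
    push_cast; ring
  clear_value c
  refine ⟨∑ i ∈ Finset.range (2 * k + 1), Polynomial.C (c i).re * Polynomial.Chebyshev.T ℝ ((i : ℤ) - k), ?_, ?_⟩
  · refine Polynomial.natDegree_sum_le_of_forall_le _ _ fun i hi => ?_
    refine Polynomial.natDegree_mul_le.trans ?_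
    rw [Finset.mem_range] at hi
    have := Polynomial.Chebyshev.natDegree_T ℝ ((i : ℤ) - k)
    rw [this]; simp; omega
  · intro y
    have h1 := congrArg Complex.re (hfe y)
    have h2 := congrArg Complex.re (hfe (-y))
    rw [heven] at h2
    rw [Complex.ofReal_re, Complex.re_sum] at h1 h2
    show f y = _
    have : f y = (f y + f y) / 2 := by ring
    rw [this]
    nth_rewrite 1 [h1]
    rw [h2, ← Finset.sum_add_distrib, Finset.sum_div, Polynomial.eval_finsetSum]
    refine Finset.sum_congr rfl fun i _ => ?_
    simp only [Polynomial.eval_mul, Polynomial.eval_C, Polynomial.Chebyshev.T_real_cos, Complex.mul_re,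
      Complex.exp_ofReal_mul_I_re, Complex.exp_ofReal_mul_I_im, mul_neg, Real.cos_neg, Real.sin_neg]
    ring

/-- sup -/
def S (V : ℝ → ℝ) (α : ℝ) (k : ℕ) : ℝ := sSup {y | ∃ j ≤ k, ∃ x, y = |P V α j x|}

section
variable {V : ℝ → ℝ} {M : ℝ} (hM : 0 ≤ M) (hV : ∀ x, |V x| ≤ M) (α : ℝ)
include hM hV
theorem S_bdd (k : ℕ) : ∀ y ∈ {y | ∃ j ≤ k, ∃ x, y = |P V α j x|}, y ≤ (M + 1) ^ k := by
  rintro y ⟨j, hj, x, rfl⟩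
  exact (P_bound hM hV α j x).trans (pow_le_pow_right₀ (by linarith) hj)

theorem le_S {j k : ℕ} (h : j ≤ k) (x : ℝ) : |P V α j x| ≤ S V α k :=
  le_csSup ⟨_, S_bdd hM hV α k⟩ ⟨j, h, x, rfl⟩

theorem S_le (k : ℕ) : S V α k ≤ (M + 1) ^ k :=
  csSup_le ⟨_, 0, Nat.zero_le _, 0, rfl⟩ (S_bdd hM hV α k)

theorem one_le_S (k : ℕ) : 1 ≤ S V α k := by
  have := le_S hM hV α (Nat.zero_le k) 0
  simpa [P_zero] using this

theorem S_near (k : ℕ) : ∃ j ≤ k, ∃ x, S V α k / 2 ≤ |P V α j x| := by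
  have h1 := one_le_S hM hV α k
  obtain ⟨y, ⟨j, hj, x, rfl⟩, h⟩ := exists_lt_of_lt_csSup (s := {y | ∃ j ≤ k, ∃ x, y = |P V α j x|})
    ⟨_, 0, Nat.zero_le _, 0, rfl⟩ (show S V α k / 2 < S V α k by linarith)
  exact ⟨j, hj, x, h.le⟩

theorem S_add (k l : ℕ) : S V α (k + l) ≤ 2 * S V α k * S V α l := by
  have h1 := one_le_S hM hV α k
  have h2 := one_le_S hM hV α l
  refine csSup_le ⟨_, 0, Nat.zero_le _, 0, rfl⟩ ?_
  rintro y ⟨j, hj, x, rfl⟩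
  by_cases hjk : j ≤ k
  · have := le_S hM hV α hjk x
    nlinarith
  by_cases hjl : j ≤ l
  · have := le_S hM hV α hjl x
    nlinarith
  obtain ⟨r, rfl⟩ : ∃ r, j = k + (r + 1) := ⟨j - k - 1, by omega⟩
  rcases k with _ | k
  · omega
  rw [P_concat]
  have a1 := le_S hM hV α (le_refl (k + 1)) x
  have a2 := le_S hM hV α (show k ≤ k + 1 by omega) x
  have a3 := le_S hM hV α (show r + 1 ≤ l by omega) (x + (k + 1) * α)
  have a4 := le_S hM hV α (show r ≤ l by omega) (x + (k + 2) * α)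
  calc _ ≤ |P V α (k + 1) x * P V α (r + 1) (x + (k + 1) * α)| + |P V α k x * P V α r (x + (k + 2) * α)| := abs_sub _ _
    _ ≤ S V α (k + 1) * S V α l + S V α (k + 1) * S V α l := by
      rw [abs_mul, abs_mul]; gcongr
    _ = _ := by ring
end
end AMO


namespace AMO

theorem S_mono {V : ℝ → ℝ} {M : ℝ} (hM : 0 ≤ M) (hV : ∀ x, |V x| ≤ M) (α : ℝ) {k l : ℕ} (h : k ≤ l) :
    S V α k ≤ S V α l := by
  refine csSup_le ⟨_, 0, Nat.zero_le _, 0, rfl⟩ ?_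
  rintro y ⟨j, hj, x, rfl⟩
  exact le_S hM hV α (hj.trans h) x

theorem pigeon (f : ℕ → ℝ) (A : ℝ) (N : ℕ) (hN : 0 < N) (h : f 0 - f N ≤ A) :
    ∃ i < N, f i - f (i + 1) ≤ A / N := by
  by_contra! hc
  have h1 : ∑ i ∈ Finset.range N, (f i - f (i + 1)) = f 0 - f N := Finset.sum_range_sub' f N
  have h2 : ∑ i ∈ Finset.range N, (A / N) < ∑ i ∈ Finset.range N, (f i - f (i + 1)) :=
    Finset.sum_lt_sum_of_nonempty (by simpa using hN.ne') fun i hi => hc i (Finset.mem_range.1 hi)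
  have hN' : (0 : ℝ) < N := by exact_mod_cast hN
  rw [h1, Finset.sum_const, Finset.card_range, nsmul_eq_mul, mul_div_cancel₀ _ hN'.ne'] at h2
  linarith

set_option maxHeartbeats 1000000 in
theorem scale {lam : ℝ} (hl : 1 < lam) (α Emax : ℝ) (hE0 : 0 ≤ Emax) {ν : ℝ} (hν : 0 < ν) :
    ∃ κ : ℝ, 0 < κ ∧ ∃ X1 : ℕ, ∀ E : ℝ, |E| ≤ Emax → ∀ X : ℕ, X1 ≤ X →
    ∃ (k : ℕ) (Γ : ℝ), Real.log lam ≤ Γ ∧ Γ ≤ Real.log (2 * (Emax + 2 * lam + 1)) ∧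
      (∀ (j : ℕ) (x : ℝ), |P (W lam E) α j x| ≤ Real.exp (Γ * j + ν * k)) ∧
      (∃ x0, Real.exp (Γ * k - ν * k) ≤ |P (W lam E) α k x0|) ∧ κ * X ≤ k ∧ (k : ℝ) ≤ ν * X := by
  set A := Real.log (2 * (Emax + 2 * lam + 1)) with hA
  set Λ := Real.log lam with hΛ
  have hΛ0 : 0 < Λ := Real.log_pos hl
  have hA0 : 0 < A := Real.log_pos (by linarith)
  obtain ⟨M, hM⟩ := exists_nat_ge (1 / ν + 2 * A / ν + 8 * A / Λ + 1)
  obtain ⟨N, hN⟩ := exists_nat_ge (4 * A / ν + 8 * A / Λ + 1)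
  have p1 : 0 < 1 / ν := by positivity
  have p2 : 0 < 2 * A / ν := by positivity
  have p3 : 0 < 8 * A / Λ := by positivity
  have p4 : 0 < 4 * A / ν := by positivity
  have hM1 : (1 : ℝ) ≤ M := by linarith
  have hN1 : (1 : ℝ) ≤ N := by linarith
  have hMν : 1 ≤ ν * M := by
    have : 1 / ν ≤ M := by linarith
    rwa [div_le_iff₀' hν] at this
  have hMA : 2 * A ≤ ν * M := by
    have : 2 * A / ν ≤ M := by linarith
    rwa [div_le_iff₀' hν] at this
  have hMΛ : 8 * A ≤ Λ * M := by
    have : 8 * A / Λ ≤ M := by linarith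
    rwa [div_le_iff₀' hΛ0] at this
  have hNA : 4 * A ≤ ν * N := by
    have : 4 * A / ν ≤ N := by linarith
    rwa [div_le_iff₀' hν] at this
  have hNΛ : 8 * A ≤ Λ * N := by
    have : 8 * A / Λ ≤ N := by linarith
    rwa [div_le_iff₀' hΛ0] at this
  have hM1' : 0 < M := by exact_mod_cast (by linarith : (0:ℝ) < M)
  have hN1' : 0 < N := by exact_mod_cast (by linarith : (0:ℝ) < N)
  have hMp : (0 : ℝ) < (M : ℝ) ^ (N + 1) := by positivity
  obtain ⟨X2, hX2⟩ := exists_nat_ge (4 * (M : ℝ) ^ (N + 1) * (2 * Real.log 4 / ν + 4 * Real.log 4 / Λ))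
  refine ⟨1 / (4 * (M : ℝ) ^ (N + 1)), by positivity, max X2 (M ^ (N + 1)), fun E hE X hX => ?_⟩
  have hVM : ∀ x, |W lam E x| ≤ Emax + 2 * lam := fun x =>
    (W_bound (by linarith) x).trans (by linarith)
  have hM0 : 0 ≤ Emax + 2 * lam := by linarith
  set V := W lam E with hV
  set t : ℕ → ℝ := fun k => Real.log (2 * S V α k) with ht
  have S1 := one_le_S hM0 hVM α
  have tadd : ∀ k l, t (k + l) ≤ t k + t l := by
    intro k l
    simp only [ht]
    rw [← Real.log_mul (by linarith [S1 k]) (by linarith [S1 l])]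
    exact Real.log_le_log (by linarith [S1 (k + l)]) (by linarith [S_add hM0 hVM α k l])
  have tmono : ∀ {k l}, k ≤ l → t k ≤ t l := by
    intro k l h
    exact Real.log_le_log (by linarith [S1 k]) (by linarith [S_mono hM0 hVM α h])
  have t0 : ∀ k, 0 ≤ t k := fun k => Real.log_nonneg (by linarith [S1 k])
  have tmul : ∀ n b, t ((n + 1) * b) ≤ (n + 1) * t b := by
    intro n b
    induction n with
    | zero => simp
    | succ n ih =>
      have := tadd ((n + 1) * b) b
      rw [show (n + 1 + 1) * b = (n + 1) * b + b by ring]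
      push_cast; linarith
  have tup : ∀ k, 1 ≤ k → t k ≤ A * k := by
    intro k hk
    have h1 := S_le hM0 hVM α k
    have hk' : (1 : ℝ) ≤ k := by exact_mod_cast hk
    have : t k ≤ Real.log ((2 * (Emax + 2 * lam + 1)) ^ k) := by
      apply Real.log_le_log (by linarith [S1 k])
      rw [mul_pow]
      have h2 : (2 : ℝ) ≤ 2 ^ k := by
        calc (2 : ℝ) = 2 ^ 1 := by norm_num
          _ ≤ 2 ^ k := pow_le_pow_right₀ (by norm_num) hk
      have h3 : 0 ≤ S V α k := by linarith [S1 k]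
      exact mul_le_mul h2 h1 h3 (by positivity)
    rw [Real.log_pow] at this
    linarith
  have tlow : ∀ k, Λ * k ≤ t k := by
    intro k
    have h1 : lam ^ k ≤ S V α k := herman (by linarith) E α k (fun x => le_S hM0 hVM α le_rfl x)
    have : Real.log (lam ^ k) ≤ t k := Real.log_le_log (by positivity) (by linarith [S1 k])
    rw [Real.log_pow] at this; linarith
  set q := X / M ^ (N + 1) with hq
  have hX' : M ^ (N + 1) ≤ X := le_trans (le_max_right _ _) hX
  have hX2' : X2 ≤ X := le_trans (le_max_left _ _) hX
  have hq1 : 1 ≤ q := (Nat.one_le_div_iff (by positivity)).2 hX'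
  have hqX : q * M ^ (N + 1) ≤ X := Nat.div_mul_le_self _ _
  have hqX' : (X : ℝ) ≤ 2 * q * M ^ (N + 1) := by
    have := Nat.lt_div_mul_add (a := X) (b := M ^ (N + 1)) (by positivity)
    have h2 : M ^ (N + 1) ≤ q * M ^ (N + 1) := Nat.le_mul_of_pos_left _ hq1
    have : X ≤ 2 * q * M ^ (N + 1) := by
      have : X < q * M ^ (N + 1) + M ^ (N + 1) := this
      rw [show 2 * q * M ^ (N + 1) = q * M ^ (N + 1) + q * M ^ (N + 1) by ring]
      exact this.le.trans (Nat.add_le_add_left h2 _)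
    exact_mod_cast this
  set kk : ℕ → ℕ := fun i => q * M ^ i with hkk
  have kk1 : ∀ i, 1 ≤ kk i := fun i => Nat.mul_pos hq1 (by positivity)
  have kk1' : ∀ i, (0 : ℝ) < kk i := fun i => by exact_mod_cast kk1 i
  set f : ℕ → ℝ := fun i => t (kk i) / kk i with hf
  have f_up : ∀ i, f i ≤ A := fun i => by rw [hf]; simp only; rw [div_le_iff₀ (kk1' i)]; exact tup _ (kk1 i)
  have f_low : ∀ i, Λ ≤ f i := fun i => by rw [hf]; simp only; rw [le_div_iff₀ (kk1' i)]; exact tlow _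
  obtain ⟨i, hi, hfi⟩ := pigeon f A N hN1' (by linarith [f_up 0, f_low N])
  set b := kk i with hb
  set k0 := kk (i + 1) with hk0
  have hk0b : (k0 : ℝ) = M * b := by simp only [hk0, hb, hkk]; push_cast; ring
  have hbpos : (0 : ℝ) < b := kk1' i
  have hk0pos : (0 : ℝ) < k0 := kk1' (i + 1)
  set Γ := f i with hΓ
  have hΓb : t b = Γ * b := by simp only [hΓ, hf]; rw [← hb]; field_simp
  have hΓΛ : Λ ≤ Γ := f_low i
  have hΓA : Γ ≤ A := f_up i
  have hΓ0 : 0 < Γ := by linarith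
  have tj : ∀ j : ℕ, t j ≤ Γ * j + Γ * b := by
    intro j
    have h1 : j ≤ (j / b + 1) * b := by
      have := Nat.lt_div_mul_add (a := j) (b := b) (kk1 i)
      rw [add_mul, one_mul]; exact this.le
    have h2 := (tmono h1).trans (tmul (j / b) b)
    have h3 : ((j / b : ℕ) : ℝ) * b ≤ j := by exact_mod_cast Nat.div_mul_le_self j b
    rw [hΓb] at h2
    have h4 := mul_le_mul_of_nonneg_left h3 hΓ0.le
    linarith
  have tk0 : Γ * k0 - A / N * k0 ≤ t k0 := by
    have : t k0 = f (i + 1) * k0 := by simp only [hf]; rw [← hk0]; field_simp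
    rw [this]
    have h4 := mul_le_mul_of_nonneg_right hfi hk0pos.le
    linarith
  obtain ⟨k, hk, x0, hx0⟩ := S_near hM0 hVM α k0
  have hkk0 : (k : ℝ) ≤ k0 := by exact_mod_cast hk
  have Pup : ∀ (j : ℕ) (x : ℝ), |P V α j x| ≤ Real.exp (Γ * j + Γ * b) := by
    intro j x
    refine le_trans ?_ (Real.exp_le_exp.2 (tj j))
    simp only [ht]
    rw [Real.exp_log (by linarith [S1 j])]
    linarith [S1 j, le_S hM0 hVM α (le_refl j) x]
  have Plow : Real.exp (Γ * k0 - A / N * k0 - Real.log 4) ≤ |P V α k x0| := by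
    rw [Real.exp_sub, Real.exp_log (by norm_num)]
    have : Real.exp (Γ * k0 - A / N * k0) ≤ 2 * S V α k0 := by
      rw [← Real.le_log_iff_exp_le (by linarith [S1 k0])]; exact tk0
    linarith
  have hcmp : Γ * k0 - A / N * k0 - Real.log 4 ≤ Γ * k + Γ * b :=
    Real.exp_le_exp.1 (Plow.trans (Pup k x0))
  have hANk : A / N * k0 ≤ Λ / 8 * k0 := by
    apply mul_le_mul_of_nonneg_right _ hk0pos.le
    rw [div_le_iff₀ (by linarith)]; linarith
  have hANk' : A / N * k0 ≤ ν / 4 * k0 := by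
    apply mul_le_mul_of_nonneg_right _ hk0pos.le
    rw [div_le_iff₀ (by linarith)]; linarith
  have hΓb1 : Γ * b ≤ Λ / 8 * k0 := by
    rw [hk0b]
    have h4 := mul_le_mul_of_nonneg_right hMΛ hbpos.le
    have h5 := mul_le_mul_of_nonneg_right hΓA hbpos.le
    linarith
  have hΓb2 : Γ * b ≤ ν / 2 * k0 := by
    rw [hk0b]
    have h4 := mul_le_mul_of_nonneg_right hMA hbpos.le
    have h5 := mul_le_mul_of_nonneg_right hΓA hbpos.le
    linarith
  have hl4 : 0 < Real.log 4 := Real.log_pos (by norm_num)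
  have hqk : (q : ℝ) ≤ k0 := by
    have : q ≤ k0 := Nat.le_mul_of_pos_right _ (by positivity)
    exact_mod_cast this
  have hqlow : 2 * (2 * Real.log 4 / ν + 4 * Real.log 4 / Λ) ≤ q := by
    have h1 : (X2 : ℝ) ≤ X := by exact_mod_cast hX2'
    have h2 : 4 * (M : ℝ) ^ (N + 1) * (2 * Real.log 4 / ν + 4 * Real.log 4 / Λ) ≤ 2 * q * M ^ (N + 1) := by linarith
    refine le_of_mul_le_mul_right ?_ hMp
    linarith
  have q1 : 0 < 2 * Real.log 4 / ν := by positivity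
  have q2 : 0 < 4 * Real.log 4 / Λ := by positivity
  have l1 : 4 * Real.log 4 ≤ Λ * k0 := by
    have : 4 * Real.log 4 / Λ ≤ k0 := by linarith
    rwa [div_le_iff₀' hΛ0] at this
  have l2 : 4 * Real.log 4 ≤ ν * k0 := by
    have : 2 * Real.log 4 / ν ≤ k0 / 2 := by linarith
    rw [div_le_iff₀' hν] at this; linarith
  have hkhalf : (k0 : ℝ) ≤ 2 * k := by
    by_contra! hcon
    have : Γ * (2 * k) < Γ * k0 := mul_lt_mul_of_pos_left hcon hΓ0
    have h5 := mul_le_mul_of_nonneg_right hΓΛ hk0pos.le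
    linarith
  refine ⟨k, Γ, hΓΛ, hΓA, fun j x => (Pup j x).trans ?_, ⟨x0, le_trans ?_ Plow⟩, ?_, ?_⟩
  · apply Real.exp_le_exp.2
    have := mul_le_mul_of_nonneg_left hkhalf hν.le
    linarith
  · apply Real.exp_le_exp.2
    have := mul_le_mul_of_nonneg_left hkhalf hν.le
    have := mul_le_mul_of_nonneg_left hkk0 hΓ0.le
    linarith
  · rw [div_mul_eq_mul_div, div_le_iff₀ (by positivity)]
    have := mul_le_mul_of_nonneg_right (hqk.trans hkhalf) hMp.le
    linarith
  · have h1 : k0 * M ≤ q * M ^ (N + 1) := by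
      simp only [hk0, hkk]
      rw [mul_assoc, ← pow_succ]
      exact Nat.mul_le_mul_left _ (pow_le_pow_right₀ hM1' (by omega))
    have h2 : (k0 * M : ℝ) ≤ X := by exact_mod_cast h1.trans hqX
    have h3 := mul_le_mul_of_nonneg_left h2 hν.le
    have h4 := mul_le_mul_of_nonneg_left hMν hk0pos.le
    linarith
end AMO


namespace AMO

/-- unit circle point -/
def ee (y : ℝ) : ℂ := Complex.exp ((2 * π * y : ℝ) * Complex.I)
/-- chord -/
def sn (y : ℝ) : ℝ := ‖1 - ee y‖

theorem ee_norm (y : ℝ) : ‖ee y‖ = 1 := Complex.norm_exp_ofReal_mul_I _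
theorem ee_add (x y : ℝ) : ee (x + y) = ee x * ee y := by
  unfold ee; rw [← Complex.exp_add]; congr 1; push_cast; ring
theorem ee_nat (y : ℝ) (n : ℕ) : ee (n * y) = ee y ^ n := by
  unfold ee; rw [← Complex.exp_nat_mul]; congr 1; push_cast; ring
theorem ee_zero : ee 0 = 1 := by simp [ee]
theorem sn_nonneg (y : ℝ) : 0 ≤ sn y := norm_nonneg _
theorem sn_le_two (y : ℝ) : sn y ≤ 2 := by
  unfold sn
  calc _ ≤ ‖(1:ℂ)‖ + ‖ee y‖ := norm_sub_le _ _
    _ = 2 := by rw [ee_norm]; norm_num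
theorem sn_add (x y : ℝ) : sn (x + y) ≤ sn x + sn y := by
  unfold sn
  rw [ee_add, show (1:ℂ) - ee x * ee y = (1 - ee x) + ee x * (1 - ee y) by ring]
  calc _ ≤ ‖1 - ee x‖ + ‖ee x * (1 - ee y)‖ := norm_add_le _ _
    _ = _ := by rw [norm_mul, ee_norm, one_mul]
theorem sn_neg (x : ℝ) : sn (-x) = sn x := by
  unfold sn
  have h : ee x * ee (-x) = 1 := by rw [← ee_add]; simp [ee_zero]
  have : 1 - ee x = - ee x * (1 - ee (-x)) := by linear_combination -h
  rw [this, norm_mul, norm_neg, ee_norm, one_mul]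
theorem sn_sub (x y : ℝ) : sn (x - y) ≤ sn x + sn y := by
  rw [sub_eq_add_neg, ← sn_neg y]; exact sn_add _ _

theorem sn_eq (y : ℝ) : sn y = 2 * |Real.sin (π * y)| := by
  have h0 : 0 ≤ 2 * |Real.sin (π * y)| := by positivity
  rw [← sq_eq_sq₀ (sn_nonneg y) h0]
  unfold sn ee
  rw [← Complex.normSq_eq_norm_sq, Complex.normSq_apply]
  simp only [Complex.sub_re, Complex.one_re, Complex.sub_im, Complex.one_im,
    Complex.exp_ofReal_mul_I_re, Complex.exp_ofReal_mul_I_im]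
  rw [mul_pow, sq_abs, show 2 * π * y = 2 * (π * y) by ring, Real.cos_two_mul', Real.sin_two_mul]
  have := Real.sin_sq_add_cos_sq (π * y)
  linear_combination (-2 + Real.cos (π * y) ^2 +  Real.sin (π * y) ^2 + 1) * this

theorem sn_cos (a b : ℝ) : |Real.cos (2 * π * a) - Real.cos (2 * π * b)| = sn (a - b) * sn (a + b) / 2 := by
  rw [sn_eq, sn_eq, Real.cos_sub_cos, abs_mul, abs_mul]
  rw [show (2 * π * a + 2 * π * b) / 2 = π * (a + b) by ring, show (2 * π * a - 2 * π * b) / 2 = π * (a - b) by ring]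
  norm_num; ring

theorem sn_int (y : ℝ) (k : ℤ) : sn (y - k) = sn y := by
  rw [sn_eq, sn_eq, mul_sub, mul_comm π (k:ℝ), Real.sin_sub_int_mul_pi, abs_mul, abs_zpow, abs_neg, abs_one, one_zpow, one_mul]

theorem sn_lower (y : ℝ) : 4 * |y - round y| ≤ sn y := by
  rw [← sn_int y (round y), sn_eq]
  have h := abs_sub_round y
  set t := y - round y
  have hp := Real.pi_pos
  have h1 : |Real.sin (π * t)| = Real.sin (π * |t|) := by
    rcases abs_cases t with ⟨h1, h2⟩ | ⟨h1, h2⟩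
    · rw [h1, abs_of_nonneg]; apply Real.sin_nonneg_of_nonneg_of_le_pi <;> nlinarith
    · rw [h1, mul_neg, Real.sin_neg, abs_of_nonpos]; apply Real.sin_nonpos_of_nonpos_of_neg_pi_le <;> nlinarith
  rw [h1]
  have := Real.mul_le_sin (x := π * |t|) (by positivity) (by nlinarith)
  have h3 : 2 / π * (π * |t|) = 2 * |t| := by field_simp
  linarith

theorem sn_upper (y : ℝ) : sn y ≤ 2 * π * |y - round y| := by
  rw [← sn_int y (round y), sn_eq]
  have : |Real.sin (π * (y - round y))| ≤ |π * (y - round y)| := Real.abs_sin_le_abs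
  rw [abs_mul, abs_of_pos Real.pi_pos] at this
  linarith

/-- polynomial Diophantine condition -/
def Dio (α c : ℝ) (p : ℕ) : Prop := 0 < c ∧ c ≤ 1 ∧ ∀ k : ℤ, k ≠ 0 → c / |(k : ℝ)| ^ p ≤ sn (k * α)

theorem chord_lower {r : ℝ} (hr : 0 ≤ r) (y : ℝ) : (1 + r) / 2 * sn y ≤ ‖1 - r * ee y‖ := by
  refine (sq_le_sq₀ (by have := sn_nonneg y; positivity) (norm_nonneg _)).1 ?_
  rw [mul_pow]
  unfold sn ee
  rw [← Complex.normSq_eq_norm_sq, ← Complex.normSq_eq_norm_sq, Complex.normSq_apply, Complex.normSq_apply]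
  simp only [Complex.sub_re, Complex.one_re, Complex.sub_im, Complex.one_im, Complex.re_ofReal_mul, Complex.im_ofReal_mul,
    Complex.exp_ofReal_mul_I_re, Complex.exp_ofReal_mul_I_im]
  have h1 := Real.sin_sq_add_cos_sq (2 * π * y)
  have h2 := Real.neg_one_le_cos (2 * π * y)
  have h3 : 0 ≤ (1 - r) ^ 2 * (1 + Real.cos (2 * π * y)) := by
    apply mul_nonneg (sq_nonneg _); linarith
  set C := Real.cos (2 * π * y)
  set Sn := Real.sin (2 * π * y)
  have : ((1 - r * C) * (1 - r * C) + (0 - r * Sn) * (0 - r * Sn)) - ((1 + r) / 2) ^ 2 * ((1 - C) * (1 - C) + (0 - Sn) * (0 - Sn))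
    = (1 - r) ^ 2 * (1 + C) / 2 := by
    have e : Sn ^ 2 = 1 - C ^ 2 := by linarith
    linear_combination (r ^ 2 - ((1 + r) / 2) ^ 2) * e
  linarith

theorem chord_pos {r : ℝ} (hr : 0 ≤ r) (y : ℝ) : 1 - r ≤ ‖1 - r * ee y‖ := by
  have := norm_sub_norm_le (1 : ℂ) (r * ee y)
  rw [norm_mul, ee_norm] at this
  simpa [abs_of_nonneg hr] using this

theorem chord_upper {r : ℝ} (hr1 : r ≤ 1) (y : ℝ) : ‖1 - r * ee y‖ ≤ sn y + (1 - r) := by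
  have : 1 - r * ee y = (1 - ee y) + (1 - r) * ee y := by ring
  rw [this]
  refine (norm_add_le _ _).trans ?_
  rw [norm_mul, ee_norm, mul_one]
  have : ‖(1 : ℂ) - r‖ = 1 - r := by
    rw [← Complex.ofReal_one, ← Complex.ofReal_sub, Complex.norm_real, Real.norm_of_nonneg (by linarith)]
  rw [this]; rfl

theorem chord_two {r : ℝ} (hr : 0 ≤ r) (hr1 : r ≤ 1) (y : ℝ) : ‖1 - r * ee y‖ ≤ 2 := by
  refine (norm_sub_le _ _).trans ?_
  rw [norm_mul, ee_norm]; simp [abs_of_nonneg hr]; linarith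

theorem expsum {α c : ℝ} {p : ℕ} (hd : Dio α c p) (y : ℝ) (n j : ℕ) (hj : j ≠ 0) :
    ‖∑ i ∈ Finset.range n, ee (y + i * α) ^ j‖ ≤ 2 / c * j ^ p := by
  have h1 : ∀ i : ℕ, ee (y + i * α) ^ j = ee y ^ j * ee (j * α) ^ i := by
    intro i
    rw [← ee_nat, ← ee_nat, ← ee_nat, ← ee_add]; congr 1; ring
  simp_rw [h1]
  rw [← Finset.mul_sum, norm_mul, norm_pow, ee_norm, one_pow, one_mul]
  have hs := hd.2.2 j (by exact_mod_cast hj)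
  have hj0 : (0 : ℝ) < (j : ℝ) ^ p := by positivity
  simp only [Int.cast_natCast, Nat.abs_cast] at hs
  have hsp : 0 < sn (j * α) := lt_of_lt_of_le (div_pos hd.1 hj0) hs
  have hne : ee (j * α) ≠ 1 := by
    intro h; unfold sn at hsp; rw [h] at hsp; simp at hsp
  rw [geom_sum_eq hne, norm_div, norm_sub_rev (ee (j * α)) 1]
  show _ / sn (j * α) ≤ _
  have h2 : ‖ee (↑j * α) ^ n - 1‖ ≤ 2 := by
    refine (norm_sub_le _ _).trans ?_
    rw [norm_pow, ee_norm]; norm_num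
  calc _ ≤ 2 / (c / j ^ p) := by
        have := div_pos hd.1 hj0
        gcongr
    _ = _ := by field_simp

theorem logsum {α c : ℝ} {p : ℕ} (hd : Dio α c p) (y : ℝ) (n : ℕ) {r : ℝ} (hr : 0 ≤ r) (hr1 : r < 1) :
    |∑ i ∈ Finset.range n, Real.log ‖1 - r * ee (y + i * α)‖| ≤ 2 / c * p.factorial / (1 - r) ^ (p + 1) := by
  have hn : ∀ i : ℕ, ‖(r : ℂ) * ee (y + i * α)‖ < 1 := by
    intro i; rw [norm_mul, ee_norm]; simpa [abs_of_nonneg hr] using hr1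
  have hs := hasSum_sum (s := Finset.range n) fun i _ => Complex.hasSum_taylorSeries_neg_log (hn i)
  have h1 : HasSum (fun j : ℕ => 2 / c * p.factorial * (((j + p).choose p : ℝ) * r ^ j)) (2 / c * p.factorial * (1 / (1 - r) ^ (p + 1))) := by
    apply HasSum.mul_left
    apply hasSum_choose_mul_geometric_of_norm_lt_one
    rwa [Real.norm_of_nonneg hr]
  have hc := hd.1
  have h2 := tsum_of_norm_bounded (f := fun j : ℕ => ∑ i ∈ Finset.range n, (↑r * ee (y + ↑i * α)) ^ j / (j : ℂ)) h1 (by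
    intro j
    rcases Nat.eq_zero_or_pos j with rfl | hj
    · simp; positivity
    rw [← Finset.sum_div]
    simp_rw [mul_pow]
    rw [← Finset.mul_sum, norm_div, norm_mul, norm_pow, Complex.norm_real, Real.norm_of_nonneg hr, Complex.norm_natCast]
    have h3 := expsum hd y n j hj.ne'
    have hj1 : (1 : ℝ) ≤ j := by exact_mod_cast hj
    have h4 : (j : ℝ) ^ p ≤ p.factorial * ((j + p).choose p) := by
      have := Nat.pow_succ_le_ascFactorial (j + 1) p
      rw [Nat.ascFactorial_eq_factorial_mul_choose] at this
      have h5 : j ^ p ≤ p.factorial * ((j + p).choose p) := (Nat.pow_le_pow_left (by omega) p).trans this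
      exact_mod_cast h5
    have hrj : 0 ≤ r ^ j := by positivity
    calc _ ≤ r ^ j * (2 / c * j ^ p) / 1 := by gcongr
      _ ≤ r ^ j * (2 / c * (p.factorial * ((j + p).choose p))) / 1 := by gcongr
      _ = _ := by ring)
  rw [hs.tsum_eq] at h2
  have h3 : |∑ i ∈ Finset.range n, Real.log ‖1 - r * ee (y + i * α)‖| ≤ ‖∑ i ∈ Finset.range n, -Complex.log (1 - ↑r * ee (y + ↑i * α))‖ := by
    rw [Finset.sum_neg_distrib, norm_neg]
    have := Complex.abs_re_le_norm (∑ i ∈ Finset.range n, Complex.log (1 - ↑r * ee (y + ↑i * α)))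
    rw [Complex.re_sum] at this
    simp_rw [Complex.log_re] at this
    exact this
  refine h3.trans (h2.trans (le_of_eq ?_)); ring
end AMO


namespace AMO

theorem small_count {α c : ℝ} {p : ℕ} (hd : Dio α c p) (y : ℝ) (n g : ℕ) (hg : 1 ≤ g) :
    ((Finset.range n).filter (fun i : ℕ => sn (y + i * α) < c / (2 * (g : ℝ) ^ p))).card ≤ n / g + 1 := by
  rw [← Finset.card_range (n / g + 1)]
  apply Finset.card_le_card_of_injOn (fun i => i / g)
  · intro i hi
    simp only [Finset.coe_filter, Finset.mem_range, Set.mem_ofPred_eq] at hi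
    simp only [Finset.coe_range, Set.mem_Iio]
    exact Nat.lt_succ_of_le (Nat.div_le_div_right hi.1.le)
  · intro i hi j hj hij
    simp only [Finset.coe_filter, Finset.mem_range, Set.mem_ofPred_eq] at hi hj
    by_contra hne
    have h1 := sn_sub (y + i * α) (y + j * α)
    rw [show y + i * α - (y + j * α) = (((i : ℤ) - j : ℤ) : ℝ) * α by push_cast; ring] at h1
    have h2 := hd.2.2 ((i : ℤ) - j) (by omega)
    have h3 : |(i : ℤ) - j| ≤ g := by
      have a1 := Nat.div_add_mod i g
      have a2 := Nat.div_add_mod j g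
      have a3 := Nat.mod_lt i hg
      have a4 := Nat.mod_lt j hg
      simp only at hij
      rw [hij] at a1
      generalize g * (j / g) = w at a1 a2
      rw [abs_le]; constructor <;> omega
    have h3' : |(((i : ℤ) - j : ℤ) : ℝ)| ≤ g := by exact_mod_cast h3
    have h4 : 0 < |(((i : ℤ) - j : ℤ) : ℝ)| := abs_pos.2 (by exact_mod_cast (by omega : (i : ℤ) - j ≠ 0))
    have hc := hd.1
    have h5 : c / (g : ℝ) ^ p ≤ c / |(((i : ℤ) - j : ℤ) : ℝ)| ^ p := by gcongr
    have h6 : c / (2 * (g : ℝ) ^ p) + c / (2 * (g : ℝ) ^ p) = c / (g : ℝ) ^ p := by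
      have : (0 : ℝ) < g := by exact_mod_cast hg
      field_simp; norm_num
    linarith [hi.2, hj.2]

theorem prod_upper {α c : ℝ} {p : ℕ} (hd : Dio α c p) (y : ℝ) (n : ℕ) {ρ : ℝ} (h0 : 0 < ρ) (h1 : ρ ≤ 1)
    (J : Finset ℕ) (hJ : J ⊆ Finset.range n) (hJ2 : (Finset.range n \ J).card ≤ 2) :
    ∏ i ∈ J, sn (y + i * α) ≤ Real.exp (n * ρ + 2 / c * p.factorial / ρ ^ (p + 1) + 2 / ρ) := by
  set r := 1 - ρ with hr
  have hr0 : 0 ≤ r := by linarith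
  have hls := (abs_le.1 (logsum hd y n hr0 (by linarith : r < 1))).2
  rw [show 1 - r = ρ by ring] at hls
  set w : ℕ → ℝ := fun i => ‖1 - r * ee (y + i * α)‖ with hw
  have hwp : ∀ i, ρ ≤ w i := fun i => by have := chord_pos hr0 (y + i * α); simp only [hw]; linarith
  have hstep : ∀ i ∈ J, sn (y + i * α) ≤ Real.exp ρ * w i := by
    intro i _
    have h := chord_lower hr0 (y + i * α)
    have he : 1 ≤ Real.exp ρ * ((1 + r) / 2) := by
      have : ρ + 1 ≤ Real.exp ρ := Real.add_one_le_exp ρ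
      have h2 : 1 ≤ (ρ + 1) * ((1 + r) / 2) := by rw [hr]; nlinarith
      have h3 : 0 ≤ (1 + r) / 2 := by linarith
      nlinarith
    have hs := sn_nonneg (y + i * α)
    calc sn (y + i * α) ≤ (Real.exp ρ * ((1 + r) / 2)) * sn (y + i * α) := by nlinarith
      _ = Real.exp ρ * ((1 + r) / 2 * sn (y + i * α)) := by ring
      _ ≤ _ := by gcongr
  have hlogJ : ∑ i ∈ J, Real.log (w i) ≤ 2 / c * p.factorial / ρ ^ (p + 1) + 2 / ρ := by
    have hsplit := Finset.sum_sdiff hJ (f := fun i => Real.log (w i))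
    have hrem : -(2 / ρ) ≤ ∑ i ∈ Finset.range n \ J, Real.log (w i) := by
      have : ∀ i ∈ Finset.range n \ J, -(1 / ρ) ≤ Real.log (w i) := by
        intro i _
        have h2 : Real.log ρ ≤ Real.log (w i) := Real.log_le_log h0 (hwp i)
        have h3 := Real.one_sub_inv_le_log_of_pos h0
        rw [one_div]; linarith
      have h4 := Finset.card_nsmul_le_sum _ _ _ this
      rw [nsmul_eq_mul] at h4
      have h5 : ((Finset.range n \ J).card : ℝ) ≤ 2 := by exact_mod_cast hJ2
      have h6 : 0 < 1 / ρ := by positivity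
      have : 2 / ρ = 2 * (1 / ρ) := by ring
      nlinarith
    linarith
  calc ∏ i ∈ J, sn (y + i * α) ≤ ∏ i ∈ J, (Real.exp ρ * w i) :=
        Finset.prod_le_prod (fun i _ => sn_nonneg _) hstep
    _ = Real.exp ρ ^ J.card * Real.exp (∑ i ∈ J, Real.log (w i)) := by
        rw [Finset.prod_mul_distrib, Finset.prod_const, Real.exp_sum]
        congr 1
        refine Finset.prod_congr rfl fun i _ => ?_
        rw [Real.exp_log (lt_of_lt_of_le h0 (hwp i))]
    _ = Real.exp (J.card * ρ + ∑ i ∈ J, Real.log (w i)) := by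
        rw [← Real.exp_nat_mul, ← Real.exp_add]
    _ ≤ _ := by
        apply Real.exp_le_exp.2
        have : (J.card : ℝ) ≤ n := by
          have := Finset.card_le_card hJ
          rw [Finset.card_range] at this
          exact_mod_cast this
        nlinarith

theorem prod_lower {α c : ℝ} {p : ℕ} (hd : Dio α c p) (y : ℝ) (n g : ℕ) (hg : 1 ≤ g) {σ ρ : ℝ} (hσ : 0 < σ)
    (hσ1 : σ ≤ 1) (hρ : ρ = c / (2 * (g : ℝ) ^ p) / g)
    (J : Finset ℕ) (hJ : J ⊆ Finset.range n) (hJ2 : (Finset.range n \ J).card ≤ 2)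
    (hw : ∀ i ∈ J, σ ≤ sn (y + i * α)) :
    Real.exp (-(n / g + 2 / c * p.factorial / ρ ^ (p + 1) + 2 + (n / g + 1) * Real.log (2 / σ)))
      ≤ ∏ i ∈ J, sn (y + i * α) := by
  set t := c / (2 * (g : ℝ) ^ p) with ht
  have hc := hd.1
  have hg1 : (1 : ℝ) ≤ g := by exact_mod_cast hg
  have hg0 : (0 : ℝ) < g := by linarith
  have ht0 : 0 < t := by positivity
  have hρ0 : 0 < ρ := by rw [hρ]; positivity
  have ht1 : t ≤ 1 := by
    rw [ht, div_le_one (by positivity)]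
    have : (1 : ℝ) ≤ (g : ℝ) ^ p := one_le_pow₀ hg1
    linarith [hd.2.1]
  have hρ1 : ρ ≤ 1 := by rw [hρ]; exact div_le_one_of_le₀ (by linarith) hg0.le
  set r := 1 - ρ with hr
  have hr0 : 0 ≤ r := by linarith
  have hls := (abs_le.1 (logsum hd y n hr0 (by linarith : r < 1))).1
  rw [show 1 - r = ρ by ring] at hls
  set w : ℕ → ℝ := fun i => ‖1 - r * ee (y + i * α)‖ with hwdef
  have hwp : ∀ i, ρ ≤ w i := fun i => by have := chord_pos hr0 (y + i * α); simp only [hwdef]; linarith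
  set B := (Finset.range n).filter (fun i : ℕ => sn (y + i * α) < t) with hB
  have hBc : (B.card : ℝ) ≤ n / g + 1 := by
    have h : B.card ≤ n / g + 1 := small_count hd y n g hg
    have h2 : (B.card : ℝ) ≤ ((n / g : ℕ) : ℝ) + 1 := by exact_mod_cast h
    exact h2.trans (by gcongr; exact Nat.cast_div_le)
  have hl2 : 0 ≤ Real.log (2 / σ) := Real.log_nonneg (by rw [le_div_iff₀ hσ]; linarith)
  have hlog : ∀ i ∈ J, Real.log (w i) ≤ Real.log (sn (y + i * α)) + 1 / g + (if i ∈ B then Real.log (2 / σ) else 0) := by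
    intro i hi
    have hs : 0 < sn (y + i * α) := lt_of_lt_of_le hσ (hw i hi)
    by_cases hiB : i ∈ B
    · rw [if_pos hiB]
      have h1 : w i ≤ sn (y + i * α) * (2 / σ) := by
        refine (chord_two hr0 (by linarith) _).trans ?_
        rw [mul_div_assoc', le_div_iff₀ hσ]; nlinarith [hw i hi]
      have h2 := Real.log_le_log (lt_of_lt_of_le hρ0 (hwp i)) h1
      rw [Real.log_mul hs.ne' (by positivity)] at h2
      have : 0 < 1 / (g : ℝ) := by positivity
      linarith
    · rw [if_neg hiB]
      have hti : t ≤ sn (y + i * α) := by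
        by_contra! hlt
        exact hiB (Finset.mem_filter.2 ⟨hJ hi, hlt⟩)
      have h1 : w i ≤ sn (y + i * α) * Real.exp (1 / g) := by
        refine (chord_upper (by linarith) _).trans ?_
        rw [show 1 - r = ρ by ring]
        have h3 : 1 / (g : ℝ) + 1 ≤ Real.exp (1 / g) := Real.add_one_le_exp _
        have h4 : ρ = t * (1 / g) := by rw [hρ]; ring
        have h5 : 0 < 1 / (g : ℝ) := by positivity
        rw [h4]
        nlinarith
      have h2 := Real.log_le_log (lt_of_lt_of_le hρ0 (hwp i)) h1
      rw [Real.log_mul hs.ne' (Real.exp_pos _).ne', Real.log_exp] at h2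
      linarith
  have hsum := Finset.sum_le_sum hlog
  rw [Finset.sum_add_distrib, Finset.sum_add_distrib, Finset.sum_const, nsmul_eq_mul, ← Finset.sum_filter, Finset.sum_const,
    nsmul_eq_mul] at hsum
  have hJn : (J.card : ℝ) ≤ n := by
    have := Finset.card_le_card hJ
    rw [Finset.card_range] at this
    exact_mod_cast this
  have hfB : (((J.filter (· ∈ B)).card : ℕ) : ℝ) ≤ n / g + 1 := by
    refine le_trans ?_ hBc
    exact_mod_cast Finset.card_le_card (fun i hi => (Finset.mem_filter.1 hi).2)
  have hsplit := Finset.sum_sdiff hJ (f := fun i => Real.log (w i))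
  have hrem : ∑ i ∈ Finset.range n \ J, Real.log (w i) ≤ 2 := by
    have : ∀ i ∈ Finset.range n \ J, Real.log (w i) ≤ 1 := by
      intro i _
      have h2 : w i ≤ 2 := chord_two hr0 (by linarith) _
      have := Real.log_le_sub_one_of_pos (lt_of_lt_of_le hρ0 (hwp i))
      linarith
    have h4 := Finset.sum_le_card_nsmul _ _ _ this
    rw [nsmul_eq_mul] at h4
    have h5 : ((Finset.range n \ J).card : ℝ) ≤ 2 := by exact_mod_cast hJ2
    linarith
  have hmain : -(n / g + 2 / c * p.factorial / ρ ^ (p + 1) + 2 + (n / g + 1) * Real.log (2 / σ)) ≤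
      ∑ i ∈ J, Real.log (sn (y + i * α)) := by
    have h1 : (J.card : ℝ) * (1 / g) ≤ n / g := by rw [mul_one_div]; gcongr
    have h2 := mul_le_mul_of_nonneg_right hfB hl2
    linarith
  refine (Real.exp_le_exp.2 hmain).trans (le_of_eq ?_)
  rw [Real.exp_sum]
  refine Finset.prod_congr rfl fun i hi => ?_
  rw [Real.exp_log (lt_of_lt_of_le hσ (hw i hi))]

theorem exists_g (q Q : ℕ) (K : ℝ) (hK : 0 ≤ K) {ε : ℝ} (hε : 0 < ε) : ∃ X0 : ℕ, ∀ X : ℕ, X0 ≤ X → ∃ g : ℕ, 1 ≤ g ∧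
    1 ≤ Real.log X ∧ Real.log X ≤ g ∧ X / g * (2 + q * Real.log X) + K * (g : ℝ) ^ Q ≤ ε * X := by
  set C := 2 * (2 + q) / ε + 1 with hC
  have hC1 : 1 ≤ C := by rw [hC]; have : 0 ≤ 2 * (2 + (q:ℝ)) / ε := by positivity
                         linarith
  have hlo : ∀ᶠ x : ℝ in atTop, K * (4 * C) ^ Q * Real.log x ^ Q ≤ ε / 2 * x := by
    have h := (isLittleO_pow_log_id_atTop (n := Q)).const_mul_left (K * (4 * C) ^ Q)
    have h2 := h.bound (show 0 < ε / 2 by linarith)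
    filter_upwards [h2, eventually_ge_atTop 0] with x hx hx0
    simp only [id, Real.norm_of_nonneg hx0] at hx
    exact (le_abs_self _).trans hx
  have hl1 : ∀ᶠ x : ℝ in atTop, 1 ≤ Real.log x := Real.tendsto_log_atTop.eventually_ge_atTop 1
  have hall := tendsto_natCast_atTop_atTop (R := ℝ) |>.eventually (hlo.and (hl1.and (eventually_ge_atTop 1)))
  obtain ⟨X0, hX0⟩ := eventually_atTop.1 hall
  refine ⟨X0, fun X hX => ?_⟩
  obtain ⟨h1, h2, h3⟩ := hX0 X hX
  set l := Real.log X with hl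
  have hCl : 1 ≤ C * (l + 1) := by nlinarith
  have hg1 : C * (l + 1) ≤ (⌈C * (l + 1)⌉₊ : ℝ) := Nat.le_ceil _
  have hg2 : (⌈C * (l + 1)⌉₊ : ℝ) < C * (l + 1) + 1 := Nat.ceil_lt_add_one (by linarith)
  set g := ⌈C * (l + 1)⌉₊ with hg
  have hg0 : (1 : ℝ) ≤ g := by linarith
  refine ⟨g, by exact_mod_cast hg0, h2, by nlinarith, ?_⟩
  have hu : (g : ℝ) ≤ 4 * C * l := by nlinarith
  have hb : K * (g : ℝ) ^ Q ≤ ε / 2 * X := by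
    refine le_trans ?_ h1
    rw [mul_assoc, ← mul_pow]
    gcongr
  have ha : X / g * (2 + q * l) ≤ ε / 2 * X := by
    rw [div_mul_eq_mul_div, div_le_iff₀ (by linarith)]
    have e1 : (2 + (q : ℝ)) ≤ ε / 2 * C := by rw [hC]; field_simp; nlinarith
    have e2 : (2 + (q : ℝ) * l) ≤ (2 + q) * (l + 1) := by
      have : (0 : ℝ) ≤ q := Nat.cast_nonneg q
      nlinarith
    have e3 : (2 + (q : ℝ)) * (l + 1) ≤ ε / 2 * C * (l + 1) := by gcongr
    have e4 : ε / 2 * (C * (l + 1)) ≤ ε / 2 * g := by gcongr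
    have e5 : (2 + (q : ℝ) * l) ≤ ε / 2 * g := by linarith
    nlinarith
  linarith

theorem prodT {α c : ℝ} {p : ℕ} (hd : Dio α c p) (q : ℕ) {ε : ℝ} (hε : 0 < ε) : ∃ X0 : ℕ, ∀ X : ℕ, X0 ≤ X →
    ∀ n ≤ X, ∀ (y : ℝ) (J : Finset ℕ), J ⊆ Finset.range n → (Finset.range n \ J).card ≤ 2 →
    (∏ i ∈ J, sn (y + i * α) ≤ Real.exp (ε * X)) ∧
    ((∀ i ∈ J, 1 / (X : ℝ) ^ q ≤ sn (y + i * α)) → Real.exp (-(ε * X)) ≤ ∏ i ∈ J, sn (y + i * α)) := by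
  have hc := hd.1
  set Q := (p + 1) * (p + 1) with hQ
  set K := 2 / c * p.factorial * (2 / c) ^ (p + 1) + 4 / c + 4 + q with hK
  obtain ⟨X0, hX0⟩ := exists_g q Q K (by positivity) hε
  refine ⟨max X0 1, fun X hX n hn y J hJ hJ2 => ?_⟩
  obtain ⟨g, hg, hlog1, hlog, hmain⟩ := hX0 X ((le_max_left _ _).trans hX)
  have hX1 : (1 : ℝ) ≤ X := by exact_mod_cast (le_max_right _ _).trans hX
  have hg1 : (1 : ℝ) ≤ g := by exact_mod_cast hg
  have hg0 : (0 : ℝ) < g := by linarith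
  have hnX : (n : ℝ) ≤ X := by exact_mod_cast hn
  set ρ := c / (2 * (g : ℝ) ^ p) / g with hρ
  have hρinv : 1 / ρ = 2 / c * (g : ℝ) ^ (p + 1) := by rw [hρ, pow_succ]; field_simp
  have hρ0 : 0 < ρ := by positivity
  have hgp : (1 : ℝ) ≤ (g : ℝ) ^ p := one_le_pow₀ hg1
  have hρg : ρ ≤ 1 / g := by
    rw [hρ]
    gcongr
    rw [div_le_one (by positivity)]
    linarith [hd.2.1]
  have hρ1 : ρ ≤ 1 := hρg.trans (by rw [div_le_one hg0]; exact hg1)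
  have hB : 2 / c * p.factorial / ρ ^ (p + 1) = 2 / c * p.factorial * (2 / c) ^ (p + 1) * (g : ℝ) ^ Q := by
    rw [div_eq_mul_one_div _ (ρ ^ (p + 1)), ← one_div_pow, hρinv, mul_pow, ← pow_mul]; ring
  have hgQ1 : (g : ℝ) ^ (p + 1) ≤ (g : ℝ) ^ Q := pow_le_pow_right₀ hg1 (by rw [hQ]; nlinarith)
  have hgQ2 : (g : ℝ) ≤ (g : ℝ) ^ Q := by
    calc (g : ℝ) = (g : ℝ) ^ 1 := by ring
      _ ≤ _ := pow_le_pow_right₀ hg1 (by rw [hQ]; nlinarith)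
  have hρ2 : 2 / ρ ≤ 4 / c * (g : ℝ) ^ Q := by
    have : 2 / ρ = 2 * (1 / ρ) := by ring
    rw [this, hρinv]
    calc _ = 4 / c * (g : ℝ) ^ (p + 1) := by ring
      _ ≤ _ := by gcongr
  have hq : (q : ℝ) * Real.log X ≤ q * (g : ℝ) ^ Q := by gcongr; linarith
  have h4 : (4 : ℝ) ≤ 4 * (g : ℝ) ^ Q := by linarith
  have hKe : K * (g : ℝ) ^ Q = 2 / c * p.factorial * (2 / c) ^ (p + 1) * (g : ℝ) ^ Q + 4 / c * (g : ℝ) ^ Q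
      + 4 * (g : ℝ) ^ Q + q * (g : ℝ) ^ Q := by rw [hK]; ring
  have hXg : 0 ≤ (X : ℝ) / g := by positivity
  have hnXg : (n : ℝ) / g ≤ X / g := by gcongr
  have hql : 0 ≤ (q : ℝ) * Real.log X := by positivity
  have hm2 : X / g * (2 + q * Real.log X) = X / g + X / g + X / g * (q * Real.log X) := by ring
  have hm3 : 0 ≤ X / g * (q * Real.log X) := by positivity
  constructor
  · refine (prod_upper hd y n hρ0 hρ1 J hJ hJ2).trans (Real.exp_le_exp.2 ?_)
    rw [hB]
    have : n * ρ ≤ X / g := by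
      calc n * ρ ≤ X * (1 / g) := by gcongr
        _ = _ := by ring
    have hpos : 0 ≤ q * (g : ℝ) ^ Q := by positivity
    linarith
  · intro hw
    refine le_trans (Real.exp_le_exp.2 ?_) (prod_lower hd y n g hg (σ := 1 / (X : ℝ) ^ q) (by positivity)
      (by rw [div_le_one (by positivity)]; exact one_le_pow₀ hX1) hρ J hJ hJ2 hw)
    rw [hB]
    have hl : Real.log (2 / (1 / (X : ℝ) ^ q)) ≤ 1 + q * Real.log X := by
      rw [div_div_eq_mul_div, div_one, Real.log_mul (by norm_num) (by positivity), Real.log_pow]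
      linarith [Real.log_two_lt_d9]
    have hn0 : 0 ≤ (n : ℝ) / g := by positivity
    have h5 : ((n : ℝ) / g + 1) * Real.log (2 / (1 / (X : ℝ) ^ q)) ≤ (X / g + 1) * (1 + q * Real.log X) := by
      calc _ ≤ ((n : ℝ) / g + 1) * (1 + q * Real.log X) := by gcongr
        _ ≤ _ := by gcongr
    have h6 : 0 ≤ 4 / c * (g : ℝ) ^ Q := by positivity
    linarith
end AMO


namespace AMO

theorem prodT_int {α c : ℝ} {p : ℕ} (hd : Dio α c p) (q : ℕ) {ε : ℝ} (hε : 0 < ε) : ∃ X0 : ℕ, ∀ X : ℕ, X0 ≤ X →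
    ∀ n ≤ X, ∀ (y : ℝ) (a : ℤ) (J : Finset ℤ), J ⊆ Finset.Ico a (a + n) → (Finset.Ico a (a + n) \ J).card ≤ 2 →
    (∏ i ∈ J, sn (y + i * α) ≤ Real.exp (ε * X)) ∧
    ((∀ i ∈ J, 1 / (X : ℝ) ^ q ≤ sn (y + i * α)) → Real.exp (-(ε * X)) ≤ ∏ i ∈ J, sn (y + i * α)) := by
  obtain ⟨X0, hX0⟩ := prodT hd q hε
  refine ⟨X0, fun X hX n hn y a J hJ hJ2 => ?_⟩
  set J' := (Finset.range n).filter (fun i : ℕ => a + (i : ℤ) ∈ J) with hJ'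
  have h1 : (Finset.range n \ J').card ≤ 2 := by
    refine le_trans ?_ hJ2
    apply Finset.card_le_card_of_injOn (fun i : ℕ => a + (i : ℤ))
    · intro i hi
      simp only [hJ', Finset.coe_sdiff, Set.mem_diff, Finset.mem_coe, Finset.mem_range, Finset.mem_filter, not_and] at hi
      simp only [Finset.coe_sdiff, Set.mem_diff, Finset.mem_coe, Finset.mem_Ico]
      exact ⟨by omega, hi.2 hi.1⟩
    · intro i _ j _ hij
      simp only at hij; omega
  have h2 : ∏ i ∈ J, sn (y + i * α) = ∏ i ∈ J', sn ((y + a * α) + i * α) := by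
    symm
    refine Finset.prod_bij (fun i _ => a + (i : ℤ)) ?_ ?_ ?_ ?_
    · intro i hi; exact (Finset.mem_filter.1 hi).2
    · intro i _ j _ hij; omega
    · intro b hb
      have := Finset.mem_Ico.1 (hJ hb)
      refine ⟨(b - a).toNat, Finset.mem_filter.2 ⟨Finset.mem_range.2 (by omega), ?_⟩, by omega⟩
      rw [show a + ((b - a).toNat : ℤ) = b by omega]; exact hb
    · intro i _; congr 1; push_cast; ring
  have h3 := hX0 X hX n hn (y + a * α) J' (Finset.filter_subset _ _) h1
  rw [h2]
  refine ⟨h3.1, fun h => h3.2 fun i hi => ?_⟩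
  have := h _ (Finset.mem_filter.1 hi).2
  rw [show y + a * α + i * α = y + ((a + (i : ℤ) : ℤ) : ℝ) * α by push_cast; ring]
  exact this

theorem prodU {α c : ℝ} {p : ℕ} (hd : Dio α c p) (q : ℕ) {ε : ℝ} (hε : 0 < ε) : ∃ X0 : ℕ, ∀ X : ℕ, X0 ≤ X →
    ∀ n1 ≤ X, ∀ n2 ≤ X, ∀ (y : ℝ) (a1 a2 : ℤ) (J : Finset ℤ),
    Disjoint (Finset.Ico a1 (a1 + n1)) (Finset.Ico a2 (a2 + n2)) →
    J ⊆ Finset.Ico a1 (a1 + n1) ∪ Finset.Ico a2 (a2 + n2) →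
    ((Finset.Ico a1 (a1 + n1) ∪ Finset.Ico a2 (a2 + n2)) \ J).card ≤ 2 →
    (∏ i ∈ J, sn (y + i * α) ≤ Real.exp (ε * X)) ∧
    ((∀ i ∈ J, 1 / (X : ℝ) ^ q ≤ sn (y + i * α)) → Real.exp (-(ε * X)) ≤ ∏ i ∈ J, sn (y + i * α)) := by
  obtain ⟨X0, hX0⟩ := prodT_int hd q (half_pos hε)
  refine ⟨X0, fun X hX n1 hn1 n2 hn2 y a1 a2 J hdis hJ hJ2 => ?_⟩
  set I1 := Finset.Ico a1 (a1 + n1)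
  set I2 := Finset.Ico a2 (a2 + n2)
  have e : J = (J ∩ I1) ∪ (J ∩ I2) := by
    rw [← Finset.inter_union_distrib_left]; exact (Finset.inter_eq_left.2 hJ).symm
  have hd' : Disjoint (J ∩ I1) (J ∩ I2) := hdis.mono Finset.inter_subset_right Finset.inter_subset_right
  have hprod : ∏ i ∈ J, sn (y + i * α) = (∏ i ∈ J ∩ I1, sn (y + i * α)) * ∏ i ∈ J ∩ I2, sn (y + i * α) := by
    rw [← Finset.prod_union hd', ← e]
  have c1 : (I1 \ (J ∩ I1)).card ≤ 2 := by
    refine le_trans (Finset.card_le_card ?_) hJ2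
    intro x; simp only [Finset.mem_sdiff, Finset.mem_inter, Finset.mem_union]; tauto
  have c2 : (I2 \ (J ∩ I2)).card ≤ 2 := by
    refine le_trans (Finset.card_le_card ?_) hJ2
    intro x; simp only [Finset.mem_sdiff, Finset.mem_inter, Finset.mem_union]; tauto
  have h1 := hX0 X hX n1 hn1 y a1 (J ∩ I1) Finset.inter_subset_right c1
  have h2 := hX0 X hX n2 hn2 y a2 (J ∩ I2) Finset.inter_subset_right c2
  rw [hprod]
  constructor
  · calc _ ≤ Real.exp (ε / 2 * X) * Real.exp (ε / 2 * X) := by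
          apply mul_le_mul h1.1 h2.1 (Finset.prod_nonneg fun i _ => sn_nonneg _) (Real.exp_pos _).le
      _ = _ := by rw [← Real.exp_add]; congr 1; ring
  · intro h
    have h1' := h1.2 fun i hi => h i (Finset.mem_inter.1 hi).1
    have h2' := h2.2 fun i hi => h i (Finset.mem_inter.1 hi).1
    calc _ = Real.exp (-(ε / 2 * X)) * Real.exp (-(ε / 2 * X)) := by rw [← Real.exp_add]; congr 1; ring
      _ ≤ _ := mul_le_mul h1' h2' (Real.exp_pos _).le (Finset.prod_nonneg fun i _ => sn_nonneg _)

theorem lagrange_bound (Q : Polynomial ℝ) (k : ℕ) (hQ : Q.natDegree ≤ k) (J : Finset ℤ) (hJ : J.card = k + 1)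
    (v : ℤ → ℝ) (hv : Set.InjOn v J) (ξ R : ℝ)
    (hR : ∀ j ∈ J, ∏ i ∈ J.erase j, |ξ - v i| ≤ R * ∏ i ∈ J.erase j, |v j - v i|) :
    ∃ j ∈ J, |Q.eval ξ| ≤ |Q.eval (v j)| * ((k + 1) * R) := by
  have hne : J.Nonempty := Finset.card_pos.1 (by omega)
  obtain ⟨j, hj, hmax⟩ := Finset.exists_max_image J (fun j => |Q.eval (v j)|) hne
  refine ⟨j, hj, ?_⟩
  have hdeg : Q.degree < J.card := by
    refine lt_of_le_of_lt Polynomial.degree_le_natDegree ?_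
    rw [hJ]; exact_mod_cast Nat.lt_succ_of_le hQ
  have h := Lagrange.eq_interpolate hv hdeg
  have he : Q.eval ξ = ∑ i ∈ J, Q.eval (v i) * ∏ l ∈ J.erase i, ((v i - v l)⁻¹ * (ξ - v l)) := by
    conv_lhs => rw [h]
    rw [Lagrange.interpolate_apply, Polynomial.eval_finsetSum]
    refine Finset.sum_congr rfl fun i _ => ?_
    rw [Polynomial.eval_mul, Polynomial.eval_C, Lagrange.basis, Polynomial.eval_prod]
    congr 1
    refine Finset.prod_congr rfl fun l _ => ?_
    simp [Lagrange.basisDivisor]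
  rw [he]
  refine (Finset.abs_sum_le_sum_abs _ _).trans ?_
  have hterm : ∀ i ∈ J, |Q.eval (v i) * ∏ l ∈ J.erase i, ((v i - v l)⁻¹ * (ξ - v l))| ≤ |Q.eval (v j)| * R := by
    intro i hi
    rw [abs_mul, Finset.abs_prod]
    have hpos : 0 < ∏ l ∈ J.erase i, |v i - v l| := by
      apply Finset.prod_pos
      intro l hl
      have := Finset.mem_erase.1 hl
      exact abs_pos.2 (sub_ne_zero.2 fun hh => this.1 (hv hi this.2 hh).symm)
    have : ∏ l ∈ J.erase i, |(v i - v l)⁻¹ * (ξ - v l)| ≤ R := by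
      simp_rw [abs_mul, abs_inv]
      rw [Finset.prod_mul_distrib, Finset.prod_inv_distrib, inv_mul_le_iff₀ hpos, mul_comm]
      exact hR i hi
    exact mul_le_mul (hmax i hi) this (Finset.prod_nonneg fun _ _ => abs_nonneg _) (abs_nonneg _)
  refine (Finset.sum_le_card_nsmul _ _ _ hterm).trans (le_of_eq ?_)
  rw [hJ, nsmul_eq_mul]; push_cast; ring
end AMO


namespace AMO

theorem dio_lower {α c : ℝ} {p : ℕ} (hd : Dio α c p) {X : ℕ} (hX : 2 ^ (p + 1) / c ≤ (X : ℝ)) (i : ℤ) (hi : i ≠ 0)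
    (hiX : |i| ≤ 2 * X) : 2 / (X : ℝ) ^ (p + 1) ≤ sn (i * α) := by
  obtain ⟨hc, hc1, h⟩ := hd
  refine le_trans ?_ (h i hi)
  have hX0 : 0 < (X : ℝ) := lt_of_lt_of_le (by positivity) hX
  have hi1 : |(i : ℝ)| ≤ 2 * X := by exact_mod_cast hiX
  have hi0 : 0 < |(i : ℝ)| := by positivity
  rw [div_le_iff₀ hc] at hX
  have h2 : |(i : ℝ)| ^ p ≤ (2 * X) ^ p := by gcongr
  rw [div_le_div_iff₀ (by positivity) (by positivity)]
  have h3 : 2 * |(i : ℝ)| ^ p ≤ 2 ^ (p + 1) * (X : ℝ) ^ p := by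
    rw [mul_pow] at h2; rw [pow_succ]; linarith
  have h4 := mul_le_mul_of_nonneg_right hX (by positivity : 0 ≤ (X : ℝ) ^ p)
  have h5 : c * (X : ℝ) ^ (p + 1) = X * c * (X : ℝ) ^ p := by ring
  rw [h5]; linarith

theorem prodV {α c : ℝ} {p : ℕ} (hd : Dio α c p) {ε : ℝ} (hε : 0 < ε) : ∃ X0 : ℕ, ∀ X : ℕ, X0 ≤ X →
    ∀ n1 ≤ X, ∀ n2 ≤ X, ∀ (y β : ℝ) (a1 a2 : ℤ) (j : ℤ), 0 < β → β ≤ 1 →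
    Disjoint (Finset.Ico a1 (a1 + n1)) (Finset.Ico a2 (a2 + n2)) →
    (∀ i ∈ Finset.Ico a1 (a1 + n1) ∪ Finset.Ico a2 (a2 + n2), |i| ≤ X) →
    (∀ i ∈ (Finset.Ico a1 (a1 + n1) ∪ Finset.Ico a2 (a2 + n2)).erase j, β ≤ sn (y + i * α)) →
    β * Real.exp (-(ε * X)) ≤ ∏ i ∈ (Finset.Ico a1 (a1 + n1) ∪ Finset.Ico a2 (a2 + n2)).erase j, sn (y + i * α) := by
  obtain ⟨X0, hX0⟩ := prodU hd (p + 1) hε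
  obtain ⟨X1, hX1⟩ := exists_nat_ge (2 ^ (p + 1) / c)
  refine ⟨max X0 X1, fun X hX n1 hn1 n2 hn2 y β a1 a2 j hβ hβ1 hdis hJX hβJ => ?_⟩
  have hXX1 : 2 ^ (p + 1) / c ≤ (X : ℝ) := hX1.trans (by exact_mod_cast (le_max_right X0 X1).trans hX)
  have hXp : 0 < (X : ℝ) := lt_of_lt_of_le (div_pos (by positivity) hd.1) hXX1
  set J := Finset.Ico a1 (a1 + (n1 : ℤ)) ∪ Finset.Ico a2 (a2 + (n2 : ℤ)) with hJ
  have hU := fun J' => hX0 X ((le_max_left _ _).trans hX) n1 hn1 n2 hn2 y a1 a2 J' hdis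
  by_cases hb : ∀ i ∈ J.erase j, 1 / (X : ℝ) ^ (p + 1) ≤ sn (y + i * α)
  · have := (hU (J.erase j) (Finset.erase_subset _ _) (by
      rw [← hJ]
      refine (Finset.card_le_card (t := {j}) ?_).trans (by simp)
      intro i; simp; tauto)).2 hb
    refine le_trans ?_ this
    exact mul_le_of_le_one_left (Real.exp_pos _).le hβ1
  · push Not at hb
    obtain ⟨i0, hi0, hi0s⟩ := hb
    rw [← Finset.mul_prod_erase _ _ hi0]
    have := (hU ((J.erase j).erase i0) ((Finset.erase_subset _ _).trans (Finset.erase_subset _ _)) (by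
      rw [← hJ]
      refine (Finset.card_le_card (t := {j, i0}) ?_).trans (Finset.card_le_two)
      intro i; simp; tauto)).2 (by
      intro i hi
      by_contra hcon
      push Not at hcon
      have hne : i - i0 ≠ 0 := sub_ne_zero.2 (Finset.ne_of_mem_erase hi)
      have hiJ := hJX i (Finset.mem_of_mem_erase (Finset.mem_of_mem_erase hi))
      have hi0J := hJX i0 (Finset.mem_of_mem_erase hi0)
      have h1 := dio_lower hd hXX1 (i - i0) hne (by rw [abs_le] at *; omega)
      have h2 := sn_sub (y + i * α) (y + i0 * α)
      have h3 : (y + i * α) - (y + i0 * α) = ((i - i0 : ℤ) : ℝ) * α := by push_cast; ring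
      rw [h3] at h2
      have h4 : 2 / (X : ℝ) ^ (p + 1) = 1 / (X : ℝ) ^ (p + 1) + 1 / (X : ℝ) ^ (p + 1) := by ring
      linarith)
    exact mul_le_mul (hβJ i0 hi0) this (Real.exp_pos _).le (sn_nonneg _)

theorem prodW {α c : ℝ} {p : ℕ} (hd : Dio α c p) {ε : ℝ} (hε : 0 < ε) : ∃ X0 : ℕ, ∀ X : ℕ, X0 ≤ X →
    ∀ n1 ≤ X, ∀ n2 ≤ X, ∀ (a1 a2 : ℤ) (j : ℤ), j ∈ Finset.Ico a1 (a1 + n1) ∪ Finset.Ico a2 (a2 + n2) →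
    Disjoint (Finset.Ico a1 (a1 + n1)) (Finset.Ico a2 (a2 + n2)) →
    (∀ i ∈ Finset.Ico a1 (a1 + n1) ∪ Finset.Ico a2 (a2 + n2), |i| ≤ X) →
    Real.exp (-(ε * X)) ≤ ∏ i ∈ (Finset.Ico a1 (a1 + n1) ∪ Finset.Ico a2 (a2 + n2)).erase j, sn (-j * α + i * α) := by
  obtain ⟨X0, hX0⟩ := prodU hd (p + 1) hε
  obtain ⟨X1, hX1⟩ := exists_nat_ge (2 ^ (p + 1) / c)
  refine ⟨max X0 X1, fun X hX n1 hn1 n2 hn2 a1 a2 j hj hdis hJX => ?_⟩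
  have hXX1 : 2 ^ (p + 1) / c ≤ (X : ℝ) := hX1.trans (by exact_mod_cast (le_max_right X0 X1).trans hX)
  have hXp : 0 < (X : ℝ) := lt_of_lt_of_le (div_pos (by positivity) hd.1) hXX1
  set J := Finset.Ico a1 (a1 + (n1 : ℤ)) ∪ Finset.Ico a2 (a2 + (n2 : ℤ)) with hJ
  refine (hX0 X ((le_max_left _ _).trans hX) n1 hn1 n2 hn2 (-j * α) a1 a2 (J.erase j) hdis (Finset.erase_subset _ _) (by
      rw [← hJ]
      refine (Finset.card_le_card (t := {j}) ?_).trans (by simp)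
      intro i; simp; tauto)).2 ?_
  intro i hi
  have hiJ := hJX i (Finset.mem_of_mem_erase hi)
  have hjJ := hJX j hj
  have h1 := dio_lower hd hXX1 (i - j) (sub_ne_zero.2 (Finset.ne_of_mem_erase hi)) (by rw [abs_le] at *; omega)
  have h3 : -j * α + i * α = ((i - j : ℤ) : ℝ) * α := by push_cast; ring
  rw [h3]
  refine le_trans ?_ h1
  gcongr; norm_num

theorem lemR {α c : ℝ} {p : ℕ} (hd : Dio α c p) {ε : ℝ} (hε : 0 < ε) : ∃ X0 : ℕ, ∀ X : ℕ, X0 ≤ X →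
    ∀ (lam E θ x0 β : ℝ) (k n1 n2 : ℕ) (a1 a2 : ℤ), n1 + n2 = k + 1 → k + 1 ≤ X → 0 < β → β ≤ 1 →
    Disjoint (Finset.Ico a1 (a1 + n1)) (Finset.Ico a2 (a2 + n2)) →
    (∀ i ∈ Finset.Ico a1 (a1 + n1) ∪ Finset.Ico a2 (a2 + n2), |i| ≤ X) →
    (∀ i ∈ Finset.Ico a1 (a1 + n1) ∪ Finset.Ico a2 (a2 + n2),
      ∀ j ∈ Finset.Ico a1 (a1 + n1) ∪ Finset.Ico a2 (a2 + n2), i ≠ j →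
      β ≤ sn (2 * θ + ((i + j + k - 1 : ℤ) : ℝ) * α)) →
    ∃ j ∈ Finset.Ico a1 (a1 + n1) ∪ Finset.Ico a2 (a2 + n2),
      |P (W lam E) α k x0| ≤ |P (W lam E) α k (θ + j * α)| * (Real.exp (ε * X) / β) := by
  have hε5 : 0 < ε / 5 := by positivity
  obtain ⟨Xu, hXu⟩ := prodU hd 0 hε5
  obtain ⟨Xv, hXv⟩ := prodV hd hε5
  obtain ⟨Xw, hXw⟩ := prodW hd hε5
  have hev : ∀ᶠ X : ℕ in atTop, (X : ℝ) ≤ Real.exp (ε / 5 * X) := by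
    have h := (isLittleO_pow_exp_pos_mul_atTop 1 hε5).comp_tendsto tendsto_natCast_atTop_atTop
    have h2 := h.bound (c := 1) one_pos
    filter_upwards [h2] with X hX
    simpa using hX
  obtain ⟨Xe, hXe⟩ := eventually_atTop.1 hev
  refine ⟨max (max Xu Xv) (max Xw Xe), fun X hX lam E θ x0 β k n1 n2 a1 a2 hk hkX hβ hβ1 hdis hJX hs => ?_⟩
  simp only [max_le_iff] at hX
  obtain ⟨⟨hX1, hX2⟩, hX3, hX4⟩ := hX
  obtain ⟨Q, hQd, hQ⟩ := cos_poly lam E α k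
  set J := Finset.Ico a1 (a1 + (n1 : ℤ)) ∪ Finset.Ico a2 (a2 + (n2 : ℤ)) with hJ
  have hcard : J.card = k + 1 := by
    rw [hJ, Finset.card_union_of_disjoint hdis]; simp; omega
  set t : ℝ := ((k : ℝ) - 1) * α / 2 with ht
  set v : ℤ → ℝ := fun i => Real.cos (2 * π * (θ + i * α + t)) with hv
  have hvv : ∀ i j, |v j - v i| = sn (-j * α + i * α) * sn (2 * θ + j * α + 2 * t + i * α) / 2 := by
    intro i j
    rw [hv]; simp only
    rw [sn_cos, ← sn_neg]
    congr 3 <;> ring_nf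
  have hsum : ∀ i j : ℤ, 2 * θ + j * α + 2 * t + i * α = 2 * θ + ((i + j + k - 1 : ℤ) : ℝ) * α := by
    intro i j; rw [ht]; push_cast; ring
  have hU := fun y j => hXu X hX1 n1 (by omega) n2 (by omega) y a1 a2 (J.erase j) hdis (Finset.erase_subset _ _) (by
      rw [← hJ]
      refine (Finset.card_le_card (t := {j}) ?_).trans (by simp)
      intro i; simp; tauto)
  have hVl : ∀ j ∈ J, β * Real.exp (-(ε / 5 * X)) ≤ ∏ i ∈ J.erase j, sn (2 * θ + j * α + 2 * t + i * α) := by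
    intro j hj
    refine hXv X hX2 n1 (by omega) n2 (by omega) (2 * θ + j * α + 2 * t) β a1 a2 j hβ hβ1 hdis hJX ?_
    intro i hi
    rw [hsum]
    exact hs i (Finset.mem_of_mem_erase hi) j hj (Finset.ne_of_mem_erase hi)
  have hWl : ∀ j ∈ J, Real.exp (-(ε / 5 * X)) ≤ ∏ i ∈ J.erase j, sn (-j * α + i * α) := by
    intro j hj
    exact hXw X hX3 n1 (by omega) n2 (by omega) a1 a2 j hj hdis hJX
  set ξ := Real.cos (2 * π * (x0 + t)) with hξ
  have hξv : ∀ i : ℤ, |ξ - v i| = sn ((θ - x0) + i * α) * sn ((x0 + θ + 2 * t) + i * α) / 2 := by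
    intro i
    rw [hv, hξ]; simp only
    rw [sn_cos, ← sn_neg]
    congr 3 <;> ring_nf
  have hR : ∀ j ∈ J, ∏ i ∈ J.erase j, |ξ - v i| ≤ (Real.exp (4 * (ε / 5 * X)) / β) * ∏ i ∈ J.erase j, |v j - v i| := by
    intro j hj
    simp only [hvv, hξv, Finset.prod_div_distrib, Finset.prod_mul_distrib]
    have h2p : (0:ℝ) ≤ ∏ x ∈ J.erase j, 2 := by positivity
    have hu1 := (hU (θ - x0) j).1
    have hu2 := (hU (x0 + θ + 2 * t) j).1
    have hl1 := hVl j hj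
    have hl2 := hWl j hj
    refine le_trans (div_le_div_of_nonneg_right ?_ h2p) (le_of_eq (mul_div_assoc _ _ _))
    refine (mul_le_mul hu1 hu2 (Finset.prod_nonneg fun i _ => sn_nonneg _) (Real.exp_pos _).le).trans ?_
    have h3 := mul_le_mul hl2 hl1 (by positivity) (Finset.prod_nonneg fun i _ => sn_nonneg _)
    refine le_trans (le_of_eq ?_) (mul_le_mul_of_nonneg_left h3 (by positivity))
    have e1 : Real.exp (4 * (ε / 5 * X)) = Real.exp (ε / 5 * X) * Real.exp (ε / 5 * X) * Real.exp (ε / 5 * X) * Real.exp (ε / 5 * X) := by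
      rw [← Real.exp_add, ← Real.exp_add, ← Real.exp_add]; ring_nf
    rw [e1, Real.exp_neg]
    field_simp
  have hinj : Set.InjOn v J := by
    intro i hi j hj hij
    by_contra hne
    have h1 := hvv i j
    rw [hij, sub_self, abs_zero] at h1
    have h2 : 0 < ∏ i ∈ J.erase j, |v j - v i| := by
      simp only [hvv, Finset.prod_div_distrib, Finset.prod_mul_distrib]
      have h3 := lt_of_lt_of_le (by positivity) (hWl j hj)
      have h4 := lt_of_lt_of_le (by positivity) (hVl j hj)
      positivity
    have h5 : ∏ i ∈ J.erase j, |v j - v i| = 0 :=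
      Finset.prod_eq_zero (i := i) (Finset.mem_erase.2 ⟨hne, hi⟩) (by rw [hij]; simp)
    linarith
  obtain ⟨j, hj, hjb⟩ := lagrange_bound Q k hQd J hcard v hinj ξ _ hR
  refine ⟨j, hj, ?_⟩
  have e1 : P (W lam E) α k x0 = Q.eval ξ := by
    rw [hξ, ← hQ]; congr 1; rw [ht]; ring
  have e2 : P (W lam E) α k (θ + j * α) = Q.eval (v j) := by
    rw [hv]; simp only; rw [← hQ]; congr 1; rw [ht]; ring
  rw [e1, e2]
  refine hjb.trans (mul_le_mul_of_nonneg_left ?_ (abs_nonneg _))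
  have h6 : ((k : ℝ) + 1) ≤ Real.exp (ε / 5 * X) := le_trans (by exact_mod_cast hkX) (hXe X hX4)
  have e3 : Real.exp (ε * X) = Real.exp (ε / 5 * X) * Real.exp (4 * (ε / 5 * X)) := by
    rw [← Real.exp_add]; ring_nf
  rw [e3, mul_div_assoc]
  gcongr

end AMO


namespace AMO

theorem greenB {V : ℝ → ℝ} {α θ : ℝ} {u : ℤ → ℝ} (hu : IsSol V α θ u) (a : ℤ) (k : ℕ) (Γ η ν' : ℝ)
    (hup : ∀ (j : ℕ) x, |P V α j x| ≤ Real.exp (Γ * j + ν'))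
    (hlow : Real.exp (Γ * k - η) ≤ |P V α k (θ + a * α)|) (x : ℤ) (hx1 : a ≤ x) (hx2 : x < a + k) :
    |u x| ≤ Real.exp (η + ν' - Γ * (x - (a - 1))) * |u (a - 1)| + Real.exp (η + ν' - Γ * (a + k - x)) * |u (a + k)| := by
  obtain ⟨j, rfl⟩ := Int.le.dest hx1
  obtain ⟨r, rfl⟩ : ∃ r : ℕ, k = j + 1 + r := ⟨k - (j + 1), by omega⟩
  have h := green hu a j r
  have e : a + (j : ℤ) + r + 1 = a + ((j + 1 + r : ℕ) : ℤ) := by push_cast; ring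
  rw [e] at h
  have h1 : |P V α (j + 1 + r) (θ + a * α)| * |u (a + j)| ≤
      Real.exp (Γ * r + ν') * |u (a - 1)| + Real.exp (Γ * j + ν') * |u (a + ((j + 1 + r : ℕ) : ℤ))| := by
    rw [← abs_mul, h]
    refine (abs_add_le _ _).trans ?_
    rw [abs_mul, abs_mul]
    gcongr
    · exact hup _ _
    · exact hup _ _
  have h2 := (mul_le_mul_of_nonneg_right hlow (abs_nonneg (u (a + j)))).trans h1
  have h3 := mul_le_mul_of_nonneg_left h2 (Real.exp_pos (-(Γ * (j + 1 + r : ℕ) - η))).le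
  rw [← mul_assoc, ← Real.exp_add, mul_add, ← mul_assoc, ← mul_assoc, ← Real.exp_add, ← Real.exp_add, neg_add_cancel,
    Real.exp_zero, one_mul] at h3
  refine h3.trans (le_of_eq ?_)
  push_cast
  congr 3 <;> ring_nf

theorem maxPrinciple (u d : ℤ → ℝ) (Z : Finset ℤ) (B T0 G ν h : ℝ) (hG : 0 ≤ G) (hν : 0 ≤ ν) (hB : 0 ≤ B)
    (hd : ∀ x y : ℤ, d x - d y ≤ |(x : ℝ) - y|)
    (hh : 2 * Real.exp (-(ν * h)) < 1) (hub : ∀ x ∈ Z, |u x| ≤ B)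
    (hstep : ∀ x ∈ Z, T0 < d x → ∃ x1 ∈ Z, ∃ x2 ∈ Z, h ≤ |(x : ℝ) - x1| ∧ h ≤ |(x : ℝ) - x2| ∧
      |u x| ≤ Real.exp (-((G + ν) * |(x : ℝ) - x1|)) * |u x1| + Real.exp (-((G + ν) * |(x : ℝ) - x2|)) * |u x2|) :
    ∀ x ∈ Z, |u x| ≤ B * Real.exp (-(G * (d x - T0))) := by
  intro x hx
  obtain ⟨y, hy, hmax⟩ := Finset.exists_max_image Z (fun x => |u x| * Real.exp (G * d x)) ⟨x, hx⟩
  have key : |u y| * Real.exp (G * d y) ≤ B * Real.exp (G * T0) := by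
    by_cases hT : d y ≤ T0
    · gcongr
      exact hub y hy
    · push Not at hT
      obtain ⟨x1, hx1, x2, hx2, hl1, hl2, hs⟩ := hstep y hy hT
      have aux : ∀ z ∈ Z, h ≤ |(y : ℝ) - z| → Real.exp (-((G + ν) * |(y : ℝ) - z|)) * |u z| * Real.exp (G * d y) ≤
          Real.exp (-(ν * h)) * (|u y| * Real.exp (G * d y)) := by
        intro z hz hl
        have h1 : Real.exp (-((G + ν) * |(y : ℝ) - z|)) * Real.exp (G * d y) ≤ Real.exp (-(ν * h)) * Real.exp (G * d z) := by
          rw [← Real.exp_add, ← Real.exp_add]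
          apply Real.exp_le_exp.2
          have := mul_le_mul_of_nonneg_left (hd y z) hG
          have := mul_le_mul_of_nonneg_left hl hν
          linarith
        calc _ = (Real.exp (-((G + ν) * |(y : ℝ) - z|)) * Real.exp (G * d y)) * |u z| := by ring
          _ ≤ (Real.exp (-(ν * h)) * Real.exp (G * d z)) * |u z| := by gcongr
          _ = Real.exp (-(ν * h)) * (|u z| * Real.exp (G * d z)) := by ring
          _ ≤ _ := mul_le_mul_of_nonneg_left (hmax z hz) (Real.exp_pos _).le
      have a1 := aux x1 hx1 hl1
      have a2 := aux x2 hx2 hl2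
      have h3 := mul_le_mul_of_nonneg_right hs (Real.exp_pos (G * d y)).le
      rw [add_mul] at h3
      set F := |u y| * Real.exp (G * d y) with hF
      have hF0 : 0 ≤ F := by positivity
      have hF1 : F ≤ 2 * Real.exp (-(ν * h)) * F := by linarith
      have hF2 : F ≤ 0 := by
        by_contra hc
        push Not at hc
        have := mul_lt_mul_of_pos_right hh hc
        linarith
      exact hF2.trans (by positivity)
  have h4 := (hmax x hx).trans key
  have h5 := mul_le_mul_of_nonneg_right h4 (Real.exp_pos (-(G * d x))).le
  rw [mul_assoc, mul_assoc, ← Real.exp_add, ← Real.exp_add, add_neg_cancel, Real.exp_zero, mul_one] at h5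
  refine h5.trans (le_of_eq ?_)
  congr 2; ring

end AMO


namespace AMO

theorem halfBlock (k : ℕ) (hk : 100 ≤ k) (y K : ℤ) : ∃ a : ℤ, y - k + 2 + (k / 10 : ℕ) ≤ a ∧
    a + (k / 3 : ℕ) - 1 ≤ y - (k / 10 : ℕ) - 1 ∧
    ∀ i j : ℤ, a ≤ i → i < a + (k / 3 : ℕ) → a ≤ j → j < a + (k / 3 : ℕ) → i ≠ j → i + j + k - 1 ≠ K := by
  by_cases h : K ≤ 2 * y
  · refine ⟨y - (k / 10 : ℕ) - (k / 3 : ℕ), by omega, by omega, ?_⟩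
    intro i j; omega
  · refine ⟨y - k + 2 + (k / 10 : ℕ), by omega, by omega, ?_⟩
    intro i j; omega

theorem blocks (k : ℕ) (hk : 100 ≤ k) (x m K : ℤ) (h2 : (k : ℤ) ≤ |x + m - K|) :
    ∃ (n1 n2 : ℕ) (a1 a2 : ℤ), n1 + n2 = k + 1 ∧
    (x - k + 2 + (k / 10 : ℕ) ≤ a1 ∧ a1 + n1 - 1 ≤ x - (k / 10 : ℕ) - 1) ∧
    (m - k + 2 + (k / 10 : ℕ) ≤ a2 ∧ a2 + n2 - 1 ≤ m - (k / 10 : ℕ) - 1) ∧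
    (∀ i ∈ Finset.Ico a1 (a1 + n1) ∪ Finset.Ico a2 (a2 + n2),
      ∀ j ∈ Finset.Ico a1 (a1 + n1) ∪ Finset.Ico a2 (a2 + n2), i ≠ j → i + j + k - 1 ≠ K) := by
  by_cases h : (k : ℤ) ≤ |2 * x - K|
  · obtain ⟨a2, ha, hb, hc⟩ := halfBlock k hk m K
    refine ⟨k + 1 - k / 3, k / 3, x - k + 2 + (k / 10 : ℕ), a2, by omega, ⟨by omega, by omega⟩, ⟨ha, hb⟩, ?_⟩
    intro i hi j hj hij
    simp only [Finset.mem_union, Finset.mem_Ico] at hi hj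
    rcases hi with hi | hi <;> rcases hj with hj | hj
    · rw [le_abs] at h; omega
    · rw [le_abs] at h2; omega
    · rw [le_abs] at h2; omega
    · exact hc i j hi.1 hi.2 hj.1 hj.2 hij
  · have h' : (k : ℤ) ≤ |2 * m - K| := by
      rw [not_le, abs_lt] at h
      rw [le_abs] at h2 ⊢
      omega
    obtain ⟨a1, ha, hb, hc⟩ := halfBlock k hk x K
    refine ⟨k / 3, k + 1 - k / 3, a1, m - k + 2 + (k / 10 : ℕ), by omega, ⟨ha, hb⟩, ⟨by omega, by omega⟩, ?_⟩
    intro i hi j hj hij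
    simp only [Finset.mem_union, Finset.mem_Ico] at hi hj
    rcases hi with hi | hi <;> rcases hj with hj | hj
    · exact hc i j hi.1 hi.2 hj.1 hj.2 hij
    · rw [le_abs] at h2; omega
    · rw [le_abs] at h2; omega
    · rw [le_abs] at h'; omega

end AMO


namespace AMO

theorem stepGreen {V : ℝ → ℝ} {α θ : ℝ} {u : ℤ → ℝ} (hu : IsSol V α θ u) (k : ℕ) (Γ ν : ℝ) (hν : 0 ≤ ν)
    (hup : ∀ (j : ℕ) x, |P V α j x| ≤ Real.exp (Γ * j + ν * k)) (j x : ℤ)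
    (hlow : Real.exp (Γ * k - 3 * ν * k) ≤ |P V α k (θ + j * α)|)
    (h1 : x - k + 2 + (k / 10 : ℕ) ≤ j) (h2 : j ≤ x - (k / 10 : ℕ) - 1) :
    (k : ℝ) / 10 ≤ |(x : ℝ) - (j - 1 : ℤ)| ∧ (k : ℝ) / 10 ≤ |(x : ℝ) - (j + k : ℤ)| ∧
    |u x| ≤ Real.exp (-((Γ - 40 * ν) * |(x : ℝ) - (j - 1 : ℤ)|)) * |u (j - 1)|
      + Real.exp (-((Γ - 40 * ν) * |(x : ℝ) - (j + k : ℤ)|)) * |u (j + k)| := by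
  have hkg : k ≤ 10 * (k / 10) + 10 := by omega
  generalize k / 10 = g at h1 h2 hkg
  have hg : (k : ℝ) / 10 ≤ (g : ℝ) + 1 := by
    have : (k : ℝ) ≤ 10 * (g : ℝ) + 10 := by exact_mod_cast hkg
    linarith
  have h1' : (x : ℝ) - k + 2 + g ≤ j := by exact_mod_cast h1
  have h2' : (j : ℝ) ≤ x - g - 1 := by exact_mod_cast h2
  have hg0 : (0 : ℝ) ≤ (g : ℝ) := Nat.cast_nonneg _
  have e1 : |(x : ℝ) - (j - 1 : ℤ)| = x - (j - 1) := by push_cast; exact abs_of_nonneg (by linarith)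
  have e2 : |(x : ℝ) - (j + k : ℤ)| = j + k - x := by
    push_cast; rw [abs_of_nonpos (by linarith)]; ring
  rw [e1, e2]
  refine ⟨by linarith, by linarith, ?_⟩
  have h := greenB hu j k Γ (3 * ν * k) (ν * k) hup hlow x (by omega) (by omega)
  refine h.trans ?_
  have a1 := mul_le_mul_of_nonneg_left (show (k : ℝ) / 10 ≤ x - (j - 1) by linarith) hν
  have a2 := mul_le_mul_of_nonneg_left (show (k : ℝ) / 10 ≤ j + k - x by linarith) hν
  gcongr <;> linarith

/-- the good step -/
theorem goodStep {lam E α θ ν ε1 εR κ x0 Γ : ℝ} (X k : ℕ) {u : ℤ → ℝ} (hu : IsSol (W lam E) α θ u)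
    (hν : 0 < ν) (hε1 : ε1 ≤ ν * κ) (hε1' : 0 ≤ ε1) (hεR : 30 * εR ≤ ν * κ)
    (hkX : κ * X ≤ k) (hkX2 : k ≤ X) (hk : 100 ≤ k)
    (hR : ∀ (lam E θ x0 β : ℝ) (k n1 n2 : ℕ) (a1 a2 : ℤ), n1 + n2 = k + 1 → k + 1 ≤ 30 * X → 0 < β → β ≤ 1 →
      Disjoint (Finset.Ico a1 (a1 + n1)) (Finset.Ico a2 (a2 + n2)) →
      (∀ i ∈ Finset.Ico a1 (a1 + n1) ∪ Finset.Ico a2 (a2 + n2), |i| ≤ (30 * X : ℕ)) →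
      (∀ i ∈ Finset.Ico a1 (a1 + n1) ∪ Finset.Ico a2 (a2 + n2),
        ∀ j ∈ Finset.Ico a1 (a1 + n1) ∪ Finset.Ico a2 (a2 + n2), i ≠ j →
        β ≤ sn (2 * θ + ((i + j + k - 1 : ℤ) : ℝ) * α)) →
      ∃ j ∈ Finset.Ico a1 (a1 + n1) ∪ Finset.Ico a2 (a2 + n2),
        |P (W lam E) α k x0| ≤ |P (W lam E) α k (θ + j * α)| * (Real.exp (εR * (30 * X : ℕ)) / β))
    (hup : ∀ (j : ℕ) x, |P (W lam E) α j x| ≤ Real.exp (Γ * j + ν * k))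
    (hlow : Real.exp (Γ * k - ν * k) ≤ |P (W lam E) α k x0|)
    (m K : ℤ) (hmax : ∀ y, |u y| ≤ |u m|) (hum : u m ≠ 0) (hmX : |m| ≤ X)
    (hbig : 2 * Real.exp (-((Γ - 40 * ν) * (k / 10))) < 1) (hΓ : 40 * ν ≤ Γ)
    (hK : ∀ N : ℤ, |N| ≤ 30 * X → N ≠ K → Real.exp (-(ε1 * X)) ≤ sn (2 * θ + N * α))
    (x : ℤ) (hx : |x| ≤ 12 * X) (h1 : (k : ℤ) ≤ |x - m|) (h2 : (k : ℤ) ≤ |x + m - K|) :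
    ∃ x1 x2 : ℤ, |x - x1| ≤ k ∧ |x - x2| ≤ k ∧ (k : ℝ) / 10 ≤ |(x : ℝ) - x1| ∧ (k : ℝ) / 10 ≤ |(x : ℝ) - x2| ∧
    |u x| ≤ Real.exp (-((Γ - 40 * ν) * |(x : ℝ) - x1|)) * |u x1|
      + Real.exp (-((Γ - 40 * ν) * |(x : ℝ) - x2|)) * |u x2| := by
  obtain ⟨n1, n2, a1, a2, hn, ⟨hb1, hb2⟩, ⟨hb3, hb4⟩, hs⟩ := blocks k hk x m K h2
  rw [abs_le] at hx hmX
  obtain ⟨j, hj, hjP⟩ := hR lam E θ x0 (Real.exp (-(ε1 * X))) k n1 n2 a1 a2 hn (by omega) (Real.exp_pos _)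
    (by apply Real.exp_le_one_iff.2; have := mul_nonneg hε1' (Nat.cast_nonneg (α := ℝ) X); linarith)
    (by
      rw [Finset.disjoint_left]
      intro i hi hi'
      rw [Finset.mem_Ico] at hi hi'
      rw [le_abs] at h1
      omega)
    (by
      intro i hi
      rw [Finset.mem_union, Finset.mem_Ico, Finset.mem_Ico] at hi
      rw [abs_le]; push_cast
      omega)
    (by
      intro i hi j hj hij
      refine hK _ ?_ (hs i hi j hj hij)
      rw [Finset.mem_union, Finset.mem_Ico, Finset.mem_Ico] at hi hj
      rw [abs_le]
      omega)
  have hjP2 : Real.exp (Γ * k - 3 * ν * k) ≤ |P (W lam E) α k (θ + j * α)| := by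
    have h3 := hlow.trans hjP
    rw [Real.exp_neg, div_inv_eq_mul, ← Real.exp_add] at h3
    have h4 := mul_le_mul_of_nonneg_right h3 (Real.exp_pos (-(εR * (30 * X : ℕ) + ε1 * X))).le
    rw [mul_assoc, ← Real.exp_add, ← Real.exp_add, add_neg_cancel, Real.exp_zero, mul_one] at h4
    refine le_trans (Real.exp_le_exp.2 ?_) h4
    have hX0 : (0 : ℝ) ≤ X := Nat.cast_nonneg X
    have h5 := mul_le_mul_of_nonneg_right hε1 hX0
    have h6 := mul_le_mul_of_nonneg_right hεR hX0
    have h7 := mul_le_mul_of_nonneg_left hkX hν.le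
    push_cast
    linarith
  rw [Finset.mem_union, Finset.mem_Ico, Finset.mem_Ico] at hj
  rcases hj with hj | hj
  · obtain ⟨c1, c2, c3⟩ := stepGreen hu k Γ ν hν.le hup j x hjP2 (by omega) (by omega)
    refine ⟨j - 1, j + k, ?_, ?_, c1, c2, c3⟩ <;> rw [abs_le] <;> omega
  · exfalso
    obtain ⟨c1, c2, c3⟩ := stepGreen hu k Γ ν hν.le hup j m hjP2 (by omega) (by omega)
    have hp : 0 < |u m| := abs_pos.2 hum
    have hG : 0 ≤ Γ - 40 * ν := by linarith
    have aux : ∀ (t : ℝ) (z : ℤ), (k : ℝ) / 10 ≤ t → Real.exp (-((Γ - 40 * ν) * t)) * |u z| ≤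
        Real.exp (-((Γ - 40 * ν) * (k / 10))) * |u m| := by
      intro t z ht
      have := mul_le_mul_of_nonneg_left ht hG
      have := hmax z
      gcongr
    have c4 := aux _ (j - 1) c1
    have c5 := aux _ (j + k) c2
    have c6 := mul_lt_mul_of_pos_right hbig hp
    linarith

end AMO


namespace AMO

theorem dLip (m K X : ℝ) (x y : ℝ) :
    min (min |x - m| |x + m - K|) (12 * X - |x|) - min (min |y - m| |y + m - K|) (12 * X - |y|) ≤ |x - y| := by
  have h1 : |x - m| ≤ |x - y| + |y - m| := abs_sub_le x y m
  have h2 : |x + m - K| ≤ |x - y| + |y + m - K| := by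
    have := abs_add_le (x - y) (y + m - K)
    rwa [show x - y + (y + m - K) = x + m - K by ring] at this
  have h3 : |y| ≤ |x - y| + |x| := by
    have := abs_sub_le y x 0
    rw [abs_sub_comm y x] at this; simpa using this
  rcases min_choice (min |y - m| |y + m - K|) (12 * X - |y|) with h | h
  · rw [h]
    rcases min_choice |y - m| |y + m - K| with h' | h'
    · rw [h']
      have := (min_le_left (min |x - m| |x + m - K|) (12 * X - |x|)).trans (min_le_left _ _)
      linarith
    · rw [h']
      have := (min_le_left (min |x - m| |x + m - K|) (12 * X - |x|)).trans (min_le_right _ _)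
      linarith
  · rw [h]
    have := min_le_right (min |x - m| |x + m - K|) (12 * X - |x|)
    linarith

theorem two_exp_neg {t : ℝ} (ht : 1 ≤ t) : 2 * Real.exp (-t) < 1 := by
  have h1 := Real.add_one_lt_exp (show t ≠ 0 by linarith)
  rw [Real.exp_neg, ← div_eq_mul_inv, div_lt_one (Real.exp_pos _)]
  linarith

theorem decay {lam α c Emax : ℝ} {p : ℕ} (hl : 1 < lam) (hd : Dio α c p) (hE0 : 0 ≤ Emax) {η : ℝ} (hη : 0 < η) :
    ∃ ε1 : ℝ, 0 < ε1 ∧ ε1 ≤ η ∧ ∃ X0 : ℕ, ∀ X : ℕ, X0 ≤ X → ∀ E, |E| ≤ Emax → ∃ Γ, Real.log lam ≤ Γ ∧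
      Γ ≤ Real.log (2 * (Emax + 2 * lam + 1)) ∧ (∀ (j : ℕ) x, |P (W lam E) α j x| ≤ Real.exp (Γ * j + η * X)) ∧
      ∀ (θ : ℝ) (u : ℤ → ℝ) (m K : ℤ), IsSol (W lam E) α θ u → (∀ y, |u y| ≤ |u m|) → u m ≠ 0 → |m| ≤ X →
      (∀ N : ℤ, |N| ≤ 30 * X → N ≠ K → Real.exp (-(ε1 * X)) ≤ sn (2 * θ + N * α)) →
      ∀ x : ℤ, |x| ≤ 12 * X → ∀ D : ℝ, D ≤ |(x : ℝ) - m| → D ≤ |(x : ℝ) + m - K| → D ≤ 12 * X - |(x : ℝ)| →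
      |u x| ≤ |u m| * Real.exp (-(Γ * D) + η * X) := by
  set Λ := Real.log lam with hΛ
  have hΛ0 : 0 < Λ := Real.log_pos hl
  set A := Real.log (2 * (Emax + 2 * lam + 1)) with hA
  have hA0 : 0 ≤ A := Real.log_nonneg (by linarith)
  obtain ⟨ν, hν, hν1, hνΛ, hνη⟩ : ∃ ν : ℝ, 0 < ν ∧ ν ≤ 1 ∧ 41 * ν ≤ Λ ∧ (493 + A) * ν ≤ η := by
    refine ⟨min 1 (min (Λ / 41) (η / (493 + A))), by positivity, min_le_left _ _, ?_, ?_⟩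
    · have := (min_le_right 1 (min (Λ / 41) (η / (493 + A)))).trans (min_le_left _ _)
      linarith
    · have := (min_le_right 1 (min (Λ / 41) (η / (493 + A)))).trans (min_le_right _ _)
      rw [le_div_iff₀ (by positivity)] at this
      linarith
  obtain ⟨κ, hκ, X1, hX1⟩ := scale hl α Emax hE0 hν
  have hεR : 0 < ν * κ / 30 := by positivity
  obtain ⟨XR, hXR⟩ := lemR hd hεR
  obtain ⟨X2, hX2⟩ := exists_nat_ge (100 / κ)
  obtain ⟨X3, hX3⟩ := exists_nat_ge (10 / (ν * κ))
  refine ⟨min (ν * κ) η, by positivity, min_le_right _ _, max (max X1 XR) (max X2 X3), fun X hX E hE => ?_⟩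
  simp only [max_le_iff] at hX
  obtain ⟨⟨hXa, hXb⟩, hXc, hXd⟩ := hX
  obtain ⟨k, Γ, hΓ1, hΓ2, hup, ⟨x0, hlow⟩, hkX, hkX'⟩ := hX1 E hE X hXa
  have hX0 : (0 : ℝ) ≤ X := Nat.cast_nonneg X
  have hXc' : 100 ≤ κ * X := by
    have : (100 / κ) ≤ (X : ℝ) := hX2.trans (by exact_mod_cast hXc)
    rw [div_le_iff₀ hκ] at this; linarith
  have hXd' : 10 ≤ ν * κ * X := by
    have : (10 / (ν * κ)) ≤ (X : ℝ) := hX3.trans (by exact_mod_cast hXd)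
    rw [div_le_iff₀ (by positivity)] at this; linarith
  have hνX : ν * X ≤ X := mul_le_of_le_one_left hX0 hν1
  have hk100 : 100 ≤ k := by
    have : (100 : ℝ) ≤ k := hXc'.trans hkX
    exact_mod_cast this
  have hkX2 : k ≤ X := by
    have : (k : ℝ) ≤ X := hkX'.trans hνX
    exact_mod_cast this
  have hνk : 1 ≤ ν * (k / 10) := by
    have := mul_le_mul_of_nonneg_left hkX hν.le
    linarith
  have hνη' : ν * k ≤ η * X := by
    have h1 : ν * (k : ℝ) ≤ ν * X := mul_le_mul_of_nonneg_left (by exact_mod_cast hkX2) hν.le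
    have h2 : ν ≤ η := by
      have := mul_nonneg hA0 hν.le
      linarith
    exact h1.trans (mul_le_mul_of_nonneg_right h2 hX0)
  refine ⟨Γ, hΓ1, hΓ2, fun j x => (hup j x).trans (Real.exp_le_exp.2 (by linarith)), ?_⟩
  intro θ u m K hu hmax hum hmX hK
  have hG : 0 ≤ Γ - 41 * ν := by linarith
  have hmp := maxPrinciple u (fun x : ℤ => min (min |(x : ℝ) - m| |(x : ℝ) + m - K|) (12 * X - |(x : ℝ)|))
    (Finset.Icc (-(12 * X : ℤ)) (12 * X)) |u m| k (Γ - 41 * ν) ν (k / 10) hG hν.le (abs_nonneg _)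
    (fun x y => dLip _ _ _ _ _) (two_exp_neg hνk) (fun x _ => hmax x) (by
      intro x hx hdx
      rw [Finset.mem_Icc] at hx
      obtain ⟨hd1, hd3⟩ := lt_min_iff.1 hdx
      obtain ⟨hd1, hd2⟩ := lt_min_iff.1 hd1
      have hd1' : (k : ℤ) ≤ |x - m| := by exact_mod_cast hd1.le
      have hd2' : (k : ℤ) ≤ |x + m - K| := by exact_mod_cast hd2.le
      have hd3' : (k : ℤ) ≤ 12 * X - |x| := by exact_mod_cast hd3.le
      obtain ⟨x1, x2, g1, g2, g3, g4, g5⟩ := goodStep (ε1 := min (ν * κ) η) (εR := ν * κ / 30) (κ := κ) (ν := ν) X k hu hν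
        (min_le_left _ _) (by positivity) (by linarith) hkX hkX2 hk100
        (hXR (30 * X) (by omega)) hup hlow m K hmax hum hmX
        (by
          have h1 : ν * (k / 10 : ℝ) ≤ (Γ - 40 * ν) * (k / 10) := mul_le_mul_of_nonneg_right (by linarith) (by positivity)
          exact two_exp_neg (hνk.trans h1))
        (by linarith) hK x (abs_le.2 hx) hd1' hd2'
      rw [abs_le] at g1 g2
      have hax := le_abs_self x
      have hax' := neg_le_abs x
      refine ⟨x1, Finset.mem_Icc.2 ⟨by omega, by omega⟩, x2, Finset.mem_Icc.2 ⟨by omega, by omega⟩, g3, g4, ?_⟩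
      rw [show Γ - 41 * ν + ν = Γ - 40 * ν by ring]
      exact g5)
  intro x hx D hD1 hD2 hD3
  have h := hmp x (Finset.mem_Icc.2 (abs_le.1 hx))
  refine h.trans (mul_le_mul_of_nonneg_left (Real.exp_le_exp.2 ?_) (abs_nonneg _))
  set d := min (min |(x : ℝ) - m| |(x : ℝ) + m - K|) (12 * X - |(x : ℝ)|) with hdd
  have hDd : D ≤ d := le_min (le_min hD1 hD2) hD3
  have hd12 : d ≤ 12 * X := (min_le_right _ _).trans (by linarith [abs_nonneg (x : ℝ)])
  have e1 := mul_le_mul_of_nonneg_left hDd (by linarith : 0 ≤ Γ)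
  have e2 := mul_le_mul_of_nonneg_left hd12 hν.le
  have e3 : (Γ - 41 * ν) * k ≤ A * (ν * X) :=
    mul_le_mul (by linarith) hkX' (Nat.cast_nonneg _) hA0
  have e4 := mul_le_mul_of_nonneg_right hνη hX0
  have e5 : 0 ≤ ν * X := by positivity
  have e6 : -((Γ - 41 * ν) * (d - k)) = -(Γ * d) + 41 * (ν * d) + (Γ - 41 * ν) * k := by ring
  rw [e6]
  linarith

end AMO


namespace AMO

theorem edge (n m K z y D t X e : ℤ) (hy : y = n ∨ y = m) (hn : |n| ≤ X) (hm : |m| ≤ X) (hD : |n - m| = D)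
    (he : |n + m - K| = e) (hz : |z - y| = t) (ht : D - 2 ≤ 2 * t) (ht2 : t ≤ 2 * D) :
    |z| ≤ 12 * X ∧ D - t - 2 - e ≤ |z - m| ∧ D - t - 2 - e ≤ |z + m - K| ∧ D - t - 2 - e ≤ 12 * X - |z| := by
  rw [abs_le] at hn hm
  have h1 := abs_cases (n - m)
  have h2 := abs_cases (n + m - K)
  have h3 := abs_cases (z - y)
  have h4 := abs_cases z
  have h5 := abs_cases (z - m)
  have h6 := abs_cases (z + m - K)
  rw [hD] at h1
  rw [he] at h2
  rw [hz] at h3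
  have a0 : D ≤ 2 * X := by clear h2 h3 h4 h5 h6; omega
  have a1 : |z| ≤ X + 4 * X := by clear h1 h2 h5 h6; rcases hy with rfl | rfl <;> omega
  refine ⟨by omega, ?_, ?_, by omega⟩
  · rcases hy with rfl | rfl <;> omega
  · rcases hy with rfl | rfl <;> omega

theorem farL (n m K z D t X e : ℤ) (hn : |n| ≤ X) (hm : |m| ≤ X) (hD : |n - m| = D)
    (he : |n + m - K| = e) (hD1 : 1 ≤ D) (heD : e ≤ D) (ht : 2 * D - 1 ≤ t) (ht2 : t ≤ 2 * D)
    (hz : (m ≤ n ∧ z = m - t) ∨ (n ≤ m ∧ z = m + t)) :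
    |z| ≤ 12 * X ∧ 2 * D - 1 ≤ |z - m| ∧ 2 * D - 1 ≤ |z + m - K| ∧ 2 * D - 1 ≤ 12 * X - |z| := by
  rw [abs_le] at hn hm
  have h1 := abs_cases (n - m)
  have h2 := abs_cases (n + m - K)
  have h4 := abs_cases z
  have h5 := abs_cases (z - m)
  have h6 := abs_cases (z + m - K)
  rw [hD] at h1
  rw [he] at h2
  have a0 : D ≤ 2 * X := by clear h2 h4 h5 h6; omega
  have a1 : |z| ≤ X + 4 * X := by clear h1 h2 h5 h6; rcases hz with hz | hz <;> omega
  refine ⟨by omega, ?_, ?_, by omega⟩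
  · rcases hz with hz | hz <;> omega
  · rcases hz with hz | hz <;> omega

theorem kstar {V : ℝ → ℝ} {α θ : ℝ} {u : ℤ → ℝ} (hu : IsSol V α θ u) (m : ℤ) (r : ℕ) (M : ℝ)
    (h : (|u (m - (r + 1))| ≤ M ∧ |u (m - (r + 2))| ≤ M) ∨ (|u (m + (r + 1))| ≤ M ∧ |u (m + (r + 2))| ≤ M)) :
    ∃ k : ℕ, (k = r ∨ k = r + 1) ∧ ∃ x0, |u m| ≤ 2 * M * |P V α k x0| := by
  have key : ∀ p q : ℝ, ∀ y z : ℝ, |y| ≤ M → |z| ≤ M → |u m| ≤ |P V α (r + 1) p| * |y| + |P V α r q| * |z| →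
      ∃ k : ℕ, (k = r ∨ k = r + 1) ∧ ∃ x0, |u m| ≤ 2 * M * |P V α k x0| := by
    intro p q y z hy hz hh
    have a1 := mul_le_mul_of_nonneg_left hy (abs_nonneg (P V α (r + 1) p))
    have a2 := mul_le_mul_of_nonneg_left hz (abs_nonneg (P V α r q))
    have hM : 0 ≤ M := (abs_nonneg y).trans hy
    rcases le_total |P V α r q| |P V α (r + 1) p| with hc | hc
    · refine ⟨r + 1, Or.inr rfl, p, ?_⟩
      have := mul_le_mul_of_nonneg_right hc hM
      linarith
    · refine ⟨r, Or.inl rfl, q, ?_⟩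
      have := mul_le_mul_of_nonneg_right hc hM
      linarith
  rcases h with ⟨h1, h2⟩ | ⟨h1, h2⟩
  · refine key (θ + ((m - (r + 1) : ℤ) : ℝ) * α) (θ + (((m - (r + 1) : ℤ) : ℝ) + (0 : ℕ) + 1) * α) _ _ h1 h2 ?_
    have := green hu (m - (r + 1)) 0 r
    rw [P_zero, one_mul, show m - (r + 1 : ℤ) + (0 : ℕ) + r + 1 = m by push_cast; ring,
      show m - (r + 1 : ℤ) + (0 : ℕ) = m - (r + 1) by push_cast; ring,
      show m - (r + 1 : ℤ) - 1 = m - (r + 2) by ring, show 0 + 1 + r = r + 1 by ring] at this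
    rw [← sub_eq_iff_eq_add'] at this
    rw [← this, ← abs_mul, ← abs_mul]
    exact abs_sub _ _
  · refine key (θ + ((m + 1 : ℤ) : ℝ) * α) (θ + ((m + 1 : ℤ) : ℝ) * α) _ _ h1 h2 ?_
    have := green0 hu (m + 1) r
    rw [show m + 1 + (r : ℤ) + 1 = m + (r + 2) by ring, show m + 1 + (r : ℤ) = m + (r + 1) by ring,
      show m + 1 - 1 = m by ring] at this
    rw [← sub_eq_iff_eq_add] at this
    rw [← this, ← abs_mul, ← abs_mul]
    exact abs_sub _ _

end AMO


namespace AMO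

def RP (α εR : ℝ) (Y : ℕ) : Prop :=
    ∀ (lam E θ x0 β : ℝ) (k n1 n2 : ℕ) (a1 a2 : ℤ), n1 + n2 = k + 1 → k + 1 ≤ Y → 0 < β → β ≤ 1 →
    Disjoint (Finset.Ico a1 (a1 + n1)) (Finset.Ico a2 (a2 + n2)) →
    (∀ i ∈ Finset.Ico a1 (a1 + n1) ∪ Finset.Ico a2 (a2 + n2), |i| ≤ Y) →
    (∀ i ∈ Finset.Ico a1 (a1 + n1) ∪ Finset.Ico a2 (a2 + n2),
      ∀ j ∈ Finset.Ico a1 (a1 + n1) ∪ Finset.Ico a2 (a2 + n2), i ≠ j →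
      β ≤ sn (2 * θ + ((i + j + k - 1 : ℤ) : ℝ) * α)) →
    ∃ j ∈ Finset.Ico a1 (a1 + n1) ∪ Finset.Ico a2 (a2 + n2),
      |P (W lam E) α k x0| ≤ |P (W lam E) α k (θ + j * α)| * (Real.exp (εR * Y) / β)

/-- lower bound for the sup at scale 2D -/
theorem sharp1 {lam E α θ η Γ : ℝ} {X D : ℕ} {u : ℤ → ℝ} (hu : IsSol (W lam E) α θ u) (m n K e : ℤ) (hum : u m ≠ 0)
    (hΓ0 : 0 ≤ Γ)
    (hdec : ∀ x : ℤ, |x| ≤ 12 * X → ∀ D : ℝ, D ≤ |(x : ℝ) - m| → D ≤ |(x : ℝ) + m - K| → D ≤ 12 * X - |(x : ℝ)| →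
      |u x| ≤ |u m| * Real.exp (-(Γ * D) + η * X))
    (hn : |n| ≤ X) (hm : |m| ≤ X) (hD : |n - m| = D) (he : |n + m - K| = e) (hD1 : 1 ≤ D) (heD : e ≤ D)
    (hηX : 1 ≤ η * X) :
    ∃ k : ℕ, (k = 2 * D - 2 ∨ k = 2 * D - 1) ∧ ∃ x0, Real.exp (Γ * k - 2 * (η * X)) ≤ |P (W lam E) α k x0| := by
  have far : ∀ t z : ℤ, 2 * D - 1 ≤ t → t ≤ 2 * D → ((m ≤ n ∧ z = m - t) ∨ (n ≤ m ∧ z = m + t)) →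
      |u z| ≤ |u m| * Real.exp (-(Γ * (2 * D - 1)) + η * X) := by
    intro t z h1 h2 hz
    obtain ⟨f1, f2, f3, f4⟩ := farL n m K z D t X e hn hm hD he (by exact_mod_cast hD1) heD h1 h2 hz
    exact hdec z f1 (2 * D - 1) (by exact_mod_cast f2) (by exact_mod_cast f3) (by exact_mod_cast f4)
  have e1 : ((2 * D - 2 : ℕ) : ℤ) = 2 * D - 2 := by omega
  obtain ⟨k, hk, x0, hx0⟩ := kstar hu m (2 * D - 2) (|u m| * Real.exp (-(Γ * (2 * D - 1)) + η * X)) (by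
    rw [e1]
    rcases le_total m n with h | h
    · left
      exact ⟨far (2 * D - 1) _ (by omega) (by omega) (Or.inl ⟨h, by ring⟩), far (2 * D) _ (by omega) (by omega) (Or.inl ⟨h, by ring⟩)⟩
    · right
      exact ⟨far (2 * D - 1) _ (by omega) (by omega) (Or.inr ⟨h, by ring⟩), far (2 * D) _ (by omega) (by omega) (Or.inr ⟨h, by ring⟩)⟩)
  have hk2 : k + 1 ≤ 2 * D := by omega
  refine ⟨k, by omega, x0, ?_⟩
  have hp : 0 < |u m| := abs_pos.2 hum
  have h1 : |u m| * 1 ≤ |u m| * (2 * Real.exp (-(Γ * (2 * D - 1)) + η * X) * |P (W lam E) α k x0|) := by linarith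
  have h2 := le_of_mul_le_mul_left h1 hp
  have h3 : (2 : ℝ) ≤ Real.exp (η * X) := by
    have := Real.add_one_le_exp (η * X); linarith
  have hk' : (k : ℝ) ≤ 2 * D - 1 := by
    have : (k : ℝ) + 1 ≤ 2 * D := by exact_mod_cast hk2
    linarith
  have h4 : 2 * Real.exp (-(Γ * (2 * D - 1)) + η * X) ≤ Real.exp (-(Γ * k - 2 * (η * X))) := by
    calc _ ≤ Real.exp (η * X) * Real.exp (-(Γ * (2 * D - 1)) + η * X) := by gcongr
      _ ≤ _ := by
        rw [← Real.exp_add]; apply Real.exp_le_exp.2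
        have := mul_le_mul_of_nonneg_left hk' hΓ0
        linarith
  have h5 := h2.trans (mul_le_mul_of_nonneg_right h4 (abs_nonneg _))
  rw [Real.exp_neg, ← div_eq_inv_mul, one_le_div (Real.exp_pos _)] at h5
  exact h5

theorem sharp2 {lam E α θ η Γ δ' ε1 εR x0 : ℝ} {X D k : ℕ} (m n K : ℤ)
    (hR : RP α εR (30 * X)) (hεR : 30 * εR ≤ η) (hε1 : ε1 ≤ η) (hε1' : 0 ≤ ε1) (hδ' : 0 ≤ δ')
    (hn : |n| ≤ X) (hm : |m| ≤ X) (hD : |n - m| = D) (hD1 : 10 ≤ D)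
    (hK : ∀ N : ℤ, |N| ≤ 30 * X → N ≠ K → Real.exp (-(ε1 * X)) ≤ sn (2 * θ + N * α))
    (hKK : Real.exp (-(δ' * |(K : ℝ)|)) ≤ sn (2 * θ + K * α))
    (hk : k = 2 * D - 2 ∨ k = 2 * D - 1) (hP : Real.exp (Γ * k - 2 * (η * X)) ≤ |P (W lam E) α k x0|) :
    ∃ y j : ℤ, (y = n ∨ y = m) ∧ j ≤ y ∧ y < j + k ∧ D - 2 ≤ 2 * (y - (j - 1)) ∧ y - (j - 1) ≤ 2 * D ∧
      D - 2 ≤ 2 * (j + k - y) ∧ j + k - y ≤ 2 * D ∧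
      Real.exp (Γ * k - (δ' * |(K : ℝ)| + 4 * (η * X))) ≤ |P (W lam E) α k (θ + j * α)| := by
  have hX0 : (0 : ℝ) ≤ X := Nat.cast_nonneg X
  have hDX : D ≤ 2 * X := by
    rw [abs_le] at hn hm
    have h1 := abs_cases (n - m)
    omega
  have q1 : 0 ≤ δ' * |(K : ℝ)| := by positivity
  have q2 : 0 ≤ ε1 * X := by positivity
  obtain ⟨t0, ht0⟩ : ∃ t0 : ℕ, t0 = (D + 1) / 2 := ⟨_, rfl⟩
  obtain ⟨j, hj, hjP⟩ := hR lam E θ x0 (Real.exp (-(δ' * |(K : ℝ)| + ε1 * X))) k D (k + 1 - D)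
    (n + 2 - t0 - D) (m + 2 - t0 - D) (by omega) (by omega) (Real.exp_pos _)
    (by apply Real.exp_le_one_iff.2; linarith)
    (by
      rw [Finset.disjoint_left]
      intro i hi hi'
      rw [Finset.mem_Ico] at hi hi'
      have h1 := abs_cases (n - m)
      omega)
    (by
      intro i hi
      rw [Finset.mem_union, Finset.mem_Ico, Finset.mem_Ico] at hi
      rw [abs_le] at hn hm ⊢; push_cast
      omega)
    (by
      intro i hi j hj hij
      by_cases hN : i + j + k - 1 = K
      · rw [hN]
        refine le_trans (Real.exp_le_exp.2 ?_) hKK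
        linarith
      · refine le_trans (Real.exp_le_exp.2 ?_) (hK _ ?_ hN)
        · linarith
        · rw [Finset.mem_union, Finset.mem_Ico, Finset.mem_Ico] at hi hj
          rw [abs_le] at hn hm ⊢
          omega)
  have hjP2 : Real.exp (Γ * k - (δ' * |(K : ℝ)| + 4 * (η * X))) ≤ |P (W lam E) α k (θ + j * α)| := by
    have h3 := hP.trans hjP
    rw [Real.exp_neg, div_inv_eq_mul, ← Real.exp_add] at h3
    have h4 := mul_le_mul_of_nonneg_right h3 (Real.exp_pos (-(εR * (30 * X : ℕ) + (δ' * |(K : ℝ)| + ε1 * X)))).le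
    rw [mul_assoc, ← Real.exp_add, ← Real.exp_add, add_neg_cancel, Real.exp_zero, mul_one] at h4
    refine le_trans (Real.exp_le_exp.2 ?_) h4
    have h5 := mul_le_mul_of_nonneg_right hε1 hX0
    have h6 := mul_le_mul_of_nonneg_right hεR hX0
    push_cast
    linarith
  rw [Finset.mem_union, Finset.mem_Ico, Finset.mem_Ico] at hj
  rcases hj with hj | hj
  · exact ⟨n, j, Or.inl rfl, by omega, by omega, by omega, by omega, by omega, by omega, hjP2⟩
  · exact ⟨m, j, Or.inr rfl, by omega, by omega, by omega, by omega, by omega, by omega, hjP2⟩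

theorem sharp {lam E α θ η Γ δ' ε1 εR ε2 A : ℝ} {X D : ℕ} {u : ℤ → ℝ} (hu : IsSol (W lam E) α θ u) (m n K e : ℤ) (hum : u m ≠ 0)
    (hΓ0 : 0 ≤ Γ) (hΓA : Γ ≤ A)
    (hup : ∀ (j : ℕ) x, |P (W lam E) α j x| ≤ Real.exp (Γ * j + η * X))
    (hdec : ∀ x : ℤ, |x| ≤ 12 * X → ∀ D : ℝ, D ≤ |(x : ℝ) - m| → D ≤ |(x : ℝ) + m - K| → D ≤ 12 * X - |(x : ℝ)| →
      |u x| ≤ |u m| * Real.exp (-(Γ * D) + η * X))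
    (hR : RP α εR (30 * X)) (hεR : 30 * εR ≤ η) (hε1 : ε1 ≤ η) (hε1' : 0 ≤ ε1) (hδ' : 0 ≤ δ')
    (hn : |n| ≤ X) (hm : |m| ≤ X) (hD : |n - m| = D) (he : |n + m - K| = e) (hD1 : 10 ≤ D) (heD : e ≤ D)
    (heX : (e : ℝ) ≤ ε2 * X) (hA : A * (2 + ε2 * X) ≤ A * (2 * (ε2 * X)))
    (hηX : 1 ≤ η * X)
    (hK : ∀ N : ℤ, |N| ≤ 30 * X → N ≠ K → Real.exp (-(ε1 * X)) ≤ sn (2 * θ + N * α))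
    (hKK : Real.exp (-(δ' * |(K : ℝ)|)) ≤ sn (2 * θ + K * α)) :
    ∃ y : ℤ, (y = n ∨ y = m) ∧ |u y| ≤ |u m| * Real.exp (δ' * |(K : ℝ)| - Γ * D + 7 * (η * X) + A * (2 * (ε2 * X))) := by
  obtain ⟨k, hk, x0, hP⟩ := sharp1 hu m n K e hum hΓ0 hdec hn hm hD he (by omega) heD hηX
  obtain ⟨y, j, hy, hj1, hj2, t1, t2, t3, t4, hjP⟩ := sharp2 m n K hR hεR hε1 hε1' hδ' hn hm hD hD1 hK hKK hk hP
  refine ⟨y, hy, ?_⟩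
  have hg := greenB hu j k Γ _ (η * X) hup hjP y hj1 hj2
  have ed : ∀ z t : ℤ, |z - y| = t → D - 2 ≤ 2 * t → t ≤ 2 * D → ∀ t' : ℝ, t' = t →
      Real.exp (δ' * |(K : ℝ)| + 4 * (η * X) + η * X - Γ * t') * |u z| ≤
      |u m| * Real.exp (δ' * |(K : ℝ)| - Γ * D + 6 * (η * X) + A * (2 * (ε2 * X))) := by
    rintro z t hz ht ht2 _ rfl
    obtain ⟨f1, f2, f3, f4⟩ := edge n m K z y D t X e hy hn hm hD he hz ht ht2
    have h1 := hdec z f1 (D - t - 2 - e) (by exact_mod_cast f2) (by exact_mod_cast f3) (by exact_mod_cast f4)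
    refine (mul_le_mul_of_nonneg_left h1 (Real.exp_pos _).le).trans ?_
    rw [mul_left_comm, ← Real.exp_add]
    refine mul_le_mul_of_nonneg_left (Real.exp_le_exp.2 ?_) (abs_nonneg _)
    have h2 : Γ * (2 + e) ≤ A * (2 + ε2 * X) := by
      have he0 : (0 : ℝ) ≤ e := by rw [← he]; positivity
      exact mul_le_mul hΓA (by linarith) (by positivity) (hΓ0.trans hΓA)
    linarith
  have e1 := ed (j - 1) (y - (j - 1)) (by rw [abs_sub_comm]; exact abs_of_nonneg (by omega)) t1 t2 (y - (j - 1)) (by push_cast; ring)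
  have e2 := ed (j + k) (j + k - y) (abs_of_nonneg (by omega)) t3 t4 (j + k - y) (by push_cast; ring)
  have h3 : (2 : ℝ) ≤ Real.exp (η * X) := by
    have := Real.add_one_le_exp (η * X); linarith
  calc |u y| ≤ 2 * (|u m| * Real.exp (δ' * |(K : ℝ)| - Γ * D + 6 * (η * X) + A * (2 * (ε2 * X)))) := by linarith
    _ ≤ Real.exp (η * X) * (|u m| * Real.exp (δ' * |(K : ℝ)| - Γ * D + 6 * (η * X) + A * (2 * (ε2 * X)))) := by gcongr
    _ = _ := by rw [mul_left_comm, ← Real.exp_add]; ring_nf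

end AMO


namespace AMO

theorem existsK {α c : ℝ} {p : ℕ} (hd : Dio α c p) {ε1 : ℝ} (hε : 0 < ε1) : ∃ X0 : ℕ, ∀ X : ℕ, X0 ≤ X → ∀ θ : ℝ,
    ∃ K : ℤ, (sn (2 * θ + K * α) < Real.exp (-(ε1 * X)) ∨ K = 100 * X) ∧
      ∀ N : ℤ, |N| ≤ 30 * X → N ≠ K → Real.exp (-(ε1 * X)) ≤ sn (2 * θ + N * α) := by
  have hev : ∀ᶠ X : ℕ in atTop, ((30 * X : ℕ) : ℝ) ^ (p + 1) ≤ Real.exp (ε1 * X) := by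
    have h := (isLittleO_pow_exp_pos_mul_atTop (p + 1) hε).comp_tendsto tendsto_natCast_atTop_atTop
    have h2 := h.bound (c := 1 / 30 ^ (p + 1)) (by positivity)
    filter_upwards [h2] with X hX
    simp only [Function.comp, norm_pow, Real.norm_eq_abs, Real.abs_exp, Nat.abs_cast] at hX
    rw [one_div, ← div_eq_inv_mul, le_div_iff₀ (by positivity)] at hX
    push_cast
    rw [mul_pow]; linarith
  obtain ⟨X0, hX0⟩ := eventually_atTop.1 hev
  obtain ⟨X1, hX1⟩ := exists_nat_ge (2 ^ (p + 1) / c)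
  refine ⟨max X0 X1, fun X hX θ => ?_⟩
  have hXX1 : 2 ^ (p + 1) / c ≤ ((30 * X : ℕ) : ℝ) := hX1.trans (by
    have : X1 ≤ 30 * X := by have := (le_max_right X0 X1).trans hX; omega
    exact_mod_cast this)
  have hp : 0 < ((30 * X : ℕ) : ℝ) := lt_of_lt_of_le (div_pos (by positivity) hd.1) hXX1
  have hX2 := hX0 X ((le_max_left _ _).trans hX)
  by_cases h : ∃ K : ℤ, |K| ≤ 30 * X ∧ sn (2 * θ + K * α) < Real.exp (-(ε1 * X))
  · obtain ⟨K, hK, hKs⟩ := h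
    refine ⟨K, Or.inl hKs, fun N hN hNK => ?_⟩
    by_contra hc
    push Not at hc
    have h1 := dio_lower hd hXX1 (N - K) (sub_ne_zero.2 hNK) (by rw [abs_le] at *; push_cast; omega)
    have h2 := sn_sub (2 * θ + N * α) (2 * θ + K * α)
    rw [show 2 * θ + N * α - (2 * θ + K * α) = ((N - K : ℤ) : ℝ) * α by push_cast; ring] at h2
    have h3 : Real.exp (-(ε1 * X)) ≤ 1 / ((30 * X : ℕ) : ℝ) ^ (p + 1) := by
      rw [Real.exp_neg, ← one_div]
      exact one_div_le_one_div_of_le (by positivity) hX2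
    have h4 : 2 / ((30 * X : ℕ) : ℝ) ^ (p + 1) = 1 / ((30 * X : ℕ) : ℝ) ^ (p + 1) + 1 / ((30 * X : ℕ) : ℝ) ^ (p + 1) := by ring
    linarith
  · push Not at h
    exact ⟨100 * X, Or.inr rfl, fun N hN _ => h N hN⟩

theorem mainLoc {lam α c Emax : ℝ} {p : ℕ} (hl : 1 < lam) (hd : Dio α c p) (hE0 : 0 ≤ Emax) (θ : ℝ) {δ' : ℝ} (hδ' : 0 ≤ δ')
    (N0 : ℕ) (hsn : ∀ N : ℤ, (N0 : ℤ) ≤ |N| → Real.exp (-(δ' * |(N : ℝ)|)) ≤ sn (2 * θ + N * α)) {ε : ℝ} (hε : 0 < ε) (hε1 : ε ≤ 1) :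
    ∃ c' : ℝ, 0 < c' ∧ ∃ ε1 : ℝ, 0 < ε1 ∧ ∃ X0 : ℕ, ∀ X : ℕ, X0 ≤ X → ∀ E, |E| ≤ Emax →
      ∀ (u : ℤ → ℝ) (m n : ℤ), IsSol (W lam E) α θ u → (∀ y, |u y| ≤ |u m|) → u m ≠ 0 → |m| ≤ X → |n| ≤ X →
      ε * X ≤ |(n : ℝ) - m| →
      |u n| ≤ |u m| * Real.exp (-(c' * X)) ∨ ∃ K : ℤ, sn (2 * θ + K * α) < Real.exp (-(ε1 * X)) ∧
        |(n : ℝ) + m - K| ≤ ε * X ∧ (|K| < N0 ∨ Real.log lam * |(n : ℝ) - m| ≤ δ' * |(K : ℝ)| + ε * X) := by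
  set Λ := Real.log lam with hΛ
  have hΛ0 : 0 < Λ := Real.log_pos hl
  set A := Real.log (2 * (Emax + 2 * lam + 1)) with hA
  have hA0 : 0 ≤ A := Real.log_nonneg (by linarith)
  obtain ⟨ε2, hε2, hε2ε, hAε2⟩ : ∃ ε2 : ℝ, 0 < ε2 ∧ ε2 ≤ ε ∧ A * (2 * ε2) ≤ ε / 4 := by
    refine ⟨ε / (8 * (A + 1)), by positivity, div_le_self hε.le (by linarith), ?_⟩
    have : A * (2 * (ε / (8 * (A + 1)))) = (ε / 4) * (A / (A + 1)) := by field_simp; ring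
    rw [this]
    refine mul_le_of_le_one_right (by positivity) ?_
    rw [div_le_one (by positivity)]; linarith
  obtain ⟨η, hη, hη1, hη2⟩ : ∃ η : ℝ, 0 < η ∧ 7 * η ≤ ε / 4 ∧ η ≤ Λ * ε2 / 2 :=
    ⟨min (ε / 28) (Λ * ε2 / 2), by positivity, by linarith [min_le_left (ε / 28) (Λ * ε2 / 2)], min_le_right _ _⟩
  obtain ⟨ε1, hε1p, hε1η, X1, hX1⟩ := decay hl hd hE0 hη
  obtain ⟨X2, hX2⟩ := existsK hd hε1p
  obtain ⟨X3, hX3⟩ := lemR hd (show 0 < η / 30 by positivity)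
  obtain ⟨X4, hX4⟩ := exists_nat_ge (10 / ε)
  obtain ⟨X5, hX5⟩ := exists_nat_ge (2 / ε2)
  obtain ⟨X6, hX6⟩ := exists_nat_ge (1 / η)
  refine ⟨min (Λ * ε2 / 2) (ε / 2), by positivity, ε1, hε1p, max (max X1 (max X2 X3)) (max X4 (max X5 X6)), ?_⟩
  intro X hX E hE u m n hu hmax hum hm hn hnm
  simp only [max_le_iff] at hX
  obtain ⟨⟨hXa, hXb, hXc⟩, hXd, hXe, hXf⟩ := hX
  have hX0 : (0 : ℝ) ≤ X := Nat.cast_nonneg X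
  have hXd' : 10 ≤ ε * X := by
    have : (10 / ε) ≤ (X : ℝ) := hX4.trans (by exact_mod_cast hXd)
    rw [div_le_iff₀ hε] at this; linarith
  have hXe' : 2 ≤ ε2 * X := by
    have : (2 / ε2) ≤ (X : ℝ) := hX5.trans (by exact_mod_cast hXe)
    rw [div_le_iff₀ hε2] at this; linarith
  have hXf' : 1 ≤ η * X := by
    have : (1 / η) ≤ (X : ℝ) := hX6.trans (by exact_mod_cast hXf)
    rw [div_le_iff₀ hη] at this; linarith
  obtain ⟨Γ, hΓ1, hΓ2, hup, hdec⟩ := hX1 X hXa E hE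
  obtain ⟨K, hKs, hK⟩ := hX2 X hXb θ
  have hdec' := hdec θ u m K hu hmax hum hm hK
  have hp : 0 < |u m| := abs_pos.2 hum
  have hc1 : min (Λ * ε2 / 2) (ε / 2) * X ≤ Λ * ε2 / 2 * X := mul_le_mul_of_nonneg_right (min_le_left _ _) hX0
  have hc2 : min (Λ * ε2 / 2) (ε / 2) * X ≤ ε / 2 * X := mul_le_mul_of_nonneg_right (min_le_right _ _) hX0
  have hε2X : ε2 * X ≤ ε * X := mul_le_mul_of_nonneg_right hε2ε hX0
  have hεX : ε * X ≤ X := mul_le_of_le_one_left hX0 hε1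
  have hnR : |(n : ℝ)| ≤ X := by exact_mod_cast hn
  have hmR : |(m : ℝ)| ≤ X := by exact_mod_cast hm
  by_cases hes : ε2 * X ≤ |(n : ℝ) + m - K|
  · left
    have h := hdec' n (by omega) (ε2 * X) (by linarith) hes (by linarith)
    refine h.trans (mul_le_mul_of_nonneg_left (Real.exp_le_exp.2 ?_) (abs_nonneg _))
    have h1 := mul_le_mul_of_nonneg_right hΓ1 (show 0 ≤ ε2 * X by linarith)
    have h2 := mul_le_mul_of_nonneg_right hη2 hX0
    linarith
  · push Not at hes
    by_cases hN : |K| < N0 ∨ Λ * |(n : ℝ) - m| ≤ δ' * |(K : ℝ)| + ε * X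
    · right
      refine ⟨K, ?_, by linarith, hN⟩
      rcases hKs with h | h
      · exact h
      · exfalso
        rw [h] at hes
        push_cast at hes
        rw [abs_lt] at hes
        rw [abs_le] at hnR hmR
        linarith
    · left
      push Not at hN
      obtain ⟨hN1, hN2⟩ := hN
      obtain ⟨D, hD⟩ : ∃ D : ℕ, |n - m| = D := ⟨(n - m).natAbs, by simp⟩
      have hDR : |(n : ℝ) - m| = D := by exact_mod_cast hD
      rw [hDR] at hN2 hnm
      have heR : ((|n + m - K| : ℤ) : ℝ) = |(n : ℝ) + m - K| := by push_cast; rfl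
      have heD : |n + m - K| ≤ (D : ℤ) := by
        have : ((|n + m - K| : ℤ) : ℝ) ≤ D := by rw [heR]; linarith
        exact_mod_cast this
      have hD10 : 10 ≤ D := by
        have : (10 : ℝ) ≤ D := by linarith
        exact_mod_cast this
      obtain ⟨y, hy, hyb⟩ := sharp (δ' := δ') (ε2 := ε2) (A := A) hu m n K _ hum (by linarith) hΓ2 hup hdec' (hX3 (30 * X) (by omega)) (by linarith)
        hε1η hε1p.le hδ' hn hm hD rfl hD10 heD (by rw [heR]; linarith)
        (mul_le_mul_of_nonneg_left (by linarith) hA0) hXf' hK (hsn K hN1)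
      have h1 := mul_le_mul_of_nonneg_right hΓ1 (Nat.cast_nonneg (α := ℝ) D)
      have h2 := mul_le_mul_of_nonneg_right hη1 hX0
      have h3 := mul_le_mul_of_nonneg_right hAε2 hX0
      have hyb2 : |u y| ≤ |u m| * Real.exp (-(min (Λ * ε2 / 2) (ε / 2) * X)) := by
        refine hyb.trans (mul_le_mul_of_nonneg_left (Real.exp_le_exp.2 ?_) (abs_nonneg _))
        linarith
      rcases hy with rfl | rfl
      · exact hyb2
      · exfalso
        have h4 : |u y| * Real.exp (-(min (Λ * ε2 / 2) (ε / 2) * X)) < |u y| * 1 := by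
          refine mul_lt_mul_of_pos_left (Real.exp_lt_one_iff.2 ?_) hp
          have : 0 < (X : ℝ) := by linarith
          have : 0 < min (Λ * ε2 / 2) (ε / 2) * X := by positivity
          linarith
        linarith

end AMO


namespace AMO

theorem W_refl (lam E α θ : ℝ) (hl : 0 ≤ lam) (K n : ℤ) :
    |W lam E (θ + n * α) - W lam E (θ + (K - n : ℤ) * α)| ≤ 2 * lam * sn (2 * θ + K * α) := by
  have h : W lam E (θ + n * α) - W lam E (θ + (K - n : ℤ) * α) =
      2 * lam * (Real.cos (2 * π * (θ + (K - n : ℤ) * α)) - Real.cos (2 * π * (θ + n * α))) := by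
    unfold W; ring
  rw [h, abs_mul, sn_cos, abs_of_nonneg (by linarith)]
  refine mul_le_mul_of_nonneg_left ?_ (by linarith)
  have e : θ + ((K - n : ℤ) : ℝ) * α + (θ + n * α) = 2 * θ + K * α := by push_cast; ring
  rw [e]
  have h1 := sn_le_two (θ + ((K - n : ℤ) : ℝ) * α - (θ + n * α))
  have := mul_le_mul_of_nonneg_right h1 (sn_nonneg (2 * θ + K * α))
  linarith

theorem wronsk {lam E α θ : ℝ} (hl : 0 ≤ lam) {u : ℤ → ℝ} (hu : IsSol (W lam E) α θ u) (hs : Summable fun n => u n ^ 2)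
    (hs1 : ∑' n, u n ^ 2 ≤ 1) (K c : ℤ) :
    |u (c + 1) * u (K - c) - u c * u (K - (c + 1))| ≤ 2 * lam * sn (2 * θ + K * α) := by
  set μ := 2 * lam * sn (2 * θ + K * α) with hμ
  have hμ0 : 0 ≤ μ := by have := sn_nonneg (2 * θ + K * α); positivity
  set w : ℤ → ℝ := fun x => u (x + 1) * u (K - x) - u x * u (K - (x + 1)) with hw
  have hstep : ∀ x : ℤ, |w x - w (x - 1)| ≤ μ * |u x * u (K - x)| := by
    intro x
    have h1 := hu x
    have h2 := hu (K - x)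
    have e : w x - w (x - 1) = (W lam E (θ + x * α) - W lam E (θ + (K - x : ℤ) * α)) * (u x * u (K - x)) := by
      simp only [hw]
      rw [show K - (x - 1) = K - x + 1 by ring, show x - 1 + 1 = x by ring, show K - (x + 1) = K - x - 1 by ring, h1, h2]
      push_cast; ring
    rw [e, abs_mul]
    exact mul_le_mul_of_nonneg_right (W_refl lam E α θ hl K x) (abs_nonneg _)
  have hsum : ∀ j : ℕ, |w c| ≤ |w (c - j)| + μ * ∑ i ∈ Finset.range j, |u (c - i) * u (K - (c - i))| := by
    intro j
    induction j with
    | zero => simp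
    | succ j ih =>
      rw [Finset.sum_range_succ, mul_add]
      have h1 := hstep (c - j)
      have h2 : |w (c - j)| ≤ |w (c - (j + 1 : ℕ))| + |w (c - j) - w (c - j - 1)| := by
        have := abs_add_le (w (c - j - 1)) (w (c - j) - w (c - j - 1))
        rw [add_sub_cancel] at this
        rwa [show c - ((j + 1 : ℕ) : ℤ) = c - j - 1 by push_cast; ring]
      linarith
  have hb : ∀ j : ℕ, ∑ i ∈ Finset.range j, |u (c - i) * u (K - (c - i))| ≤ 1 := by
    intro j
    have h1 : ∑ i ∈ Finset.range j, u (c - i) ^ 2 ≤ 1 := by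
      rw [← Finset.sum_image (f := fun x => u x ^ 2) (s := Finset.range j) (g := fun i : ℕ => c - (i : ℤ))
        (by intro a _ b _ h; simpa using h)]
      exact (hs.sum_le_tsum _ (fun i _ => sq_nonneg _)).trans hs1
    have h2 : ∑ i ∈ Finset.range j, u (K - (c - i)) ^ 2 ≤ 1 := by
      rw [← Finset.sum_image (f := fun x => u x ^ 2) (s := Finset.range j) (g := fun i : ℕ => K - (c - (i : ℤ)))
        (by intro a _ b _ h; simpa using h)]
      exact (hs.sum_le_tsum _ (fun i _ => sq_nonneg _)).trans hs1
    have h3 : ∑ i ∈ Finset.range j, |u (c - i) * u (K - (c - i))| ≤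
        ∑ i ∈ Finset.range j, (u (c - i) ^ 2 + u (K - (c - i)) ^ 2) / 2 := by
      refine Finset.sum_le_sum fun i _ => ?_
      rw [abs_le]
      constructor
      · linarith [sq_nonneg (u (c - i) + u (K - (c - i)))]
      · linarith [sq_nonneg (u (c - i) - u (K - (c - i)))]
    rw [← Finset.sum_div, Finset.sum_add_distrib] at h3
    linarith
  have hu0 : Tendsto u cofinite (nhds 0) := by
    have h := hs.tendsto_cofinite_zero
    have h2 := h.sqrt
    simp only [Real.sqrt_sq_eq_abs, Real.sqrt_zero] at h2
    exact (tendsto_zero_iff_abs_tendsto_zero _).2 h2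
  have hinj : ∀ g : ℕ → ℤ, Function.Injective g → Tendsto (fun j => u (g j)) atTop (nhds 0) := by
    intro g hg
    have := hu0.comp hg.tendsto_cofinite
    rwa [Nat.cofinite_eq_atTop] at this
  have hlim : Tendsto (fun j : ℕ => |w (c - j)| + μ) atTop (nhds μ) := by
    have h1 := hinj (fun j => c - j + 1) (by intro a b h; simpa using h)
    have h2 := hinj (fun j => K - (c - j)) (by intro a b h; simpa using h)
    have h3 := hinj (fun j => c - j) (by intro a b h; simpa using h)
    have h4 := hinj (fun j => K - (c - j + 1)) (by intro a b h; simpa using h)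
    have h5 := (((h1.mul h2).sub (h3.mul h4)).abs).add_const μ
    simpa using h5
  refine ge_of_tendsto hlim (Eventually.of_forall fun j => ?_)
  have := hsum j
  have h2 := mul_le_mul_of_nonneg_left (hb j) hμ0
  linarith

theorem center {lam E α θ s C : ℝ} {u : ℤ → ℝ} (hu : IsSol (W lam E) α θ u) (K c : ℤ) (hKc : K = 2 * c ∨ K = 2 * c + 1)
    (hs : 0 ≤ s) (hC : 2 ≤ C) (hW : ∀ x, |W lam E x| ≤ C)
    (hw : |u (c + 1) * u (K - c) - u c * u (K - (c + 1))| ≤ s ^ 2) :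
    ∃ σ : ℝ, (σ = 1 ∨ σ = -1) ∧ |u c - σ * u (K - c)| ≤ C * s ∧ |u (c + 1) - σ * u (K - (c + 1))| ≤ C * s := by
  have hsC : s ≤ C * s := le_mul_of_one_le_left hs (by linarith)
  have hor : ∀ a b : ℝ, |a * b| ≤ s ^ 2 → |a| ≤ s ∨ |b| ≤ s := by
    intro a b h
    by_contra hcon
    push Not at hcon
    rw [abs_mul] at h
    nlinarith [mul_lt_mul'' hcon.1 hcon.2 hs hs]
  rcases hKc with rfl | rfl
  · have e1 : 2 * c - c = c := by ring
    have e2 : 2 * c - (c + 1) = c - 1 := by ring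
    rw [e1, e2] at hw ⊢
    rw [show u (c + 1) * u c - u c * u (c - 1) = u c * (u (c + 1) - u (c - 1)) by ring] at hw
    rcases hor _ _ hw with h | h
    · refine ⟨-1, Or.inr rfl, ?_, ?_⟩
      · rw [show u c - -1 * u c = 2 * u c by ring, abs_mul, abs_two]
        have := mul_le_mul_of_nonneg_right hC hs
        linarith
      · rw [hu c, show W lam E (θ + c * α) * u c - u (c - 1) - -1 * u (c - 1) = W lam E (θ + c * α) * u c by ring, abs_mul]
        exact mul_le_mul (hW _) h (abs_nonneg _) (by linarith)
    · refine ⟨1, Or.inl rfl, ?_, ?_⟩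
      · simp; positivity
      · rw [one_mul]; linarith
  · have e1 : 2 * c + 1 - c = c + 1 := by ring
    have e2 : 2 * c + 1 - (c + 1) = c := by ring
    rw [e1, e2] at hw ⊢
    rw [show u (c + 1) * u (c + 1) - u c * u c = (u (c + 1) - u c) * (u (c + 1) + u c) by ring] at hw
    rcases hor _ _ hw with h | h
    · refine ⟨1, Or.inl rfl, ?_, ?_⟩
      · rw [one_mul, abs_sub_comm]; linarith
      · rw [one_mul]; linarith
    · refine ⟨-1, Or.inr rfl, ?_, ?_⟩
      · rw [show u c - -1 * u (c + 1) = u (c + 1) + u c by ring]; linarith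
      · rw [show u (c + 1) - -1 * u c = u (c + 1) + u c by ring]; linarith

theorem propag (f g : ℤ → ℝ) (C F : ℝ) (c : ℤ) (hF : 0 ≤ F) (hC : 2 ≤ C) (hg : ∀ n, |g n| ≤ C - 2)
    (hf : ∀ n, |f (n + 1) + f (n - 1) - g n * f n| ≤ F) (h0 : |f c| ≤ F) (h1 : |f (c + 1)| ≤ F) :
    ∀ t : ℕ, (|f (c + 1 + t)| ≤ C ^ t * F ∧ |f (c + t)| ≤ C ^ t * F) ∧ (|f (c - t)| ≤ C ^ t * F ∧ |f (c - t + 1)| ≤ C ^ t * F) := by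
  intro t
  have one_st : ∀ (A B g' y F' : ℝ), |A| ≤ F' → |B| ≤ F' → |g'| ≤ C - 2 → F ≤ F' → |y + B - g' * A| ≤ F → |y| ≤ C * F' := by
    intro A B g' y F' hA hB hg' hFF h
    have e1 : |g' * A| ≤ (C - 2) * F' := by rw [abs_mul]; exact mul_le_mul hg' hA (abs_nonneg _) (by linarith)
    rw [abs_le] at *
    constructor <;> linarith
  have hCt : ∀ t : ℕ, F ≤ C ^ t * F := fun t => le_mul_of_one_le_left hF (one_le_pow₀ (by linarith))
  have hCt2 : ∀ t : ℕ, C ^ t * F ≤ C ^ (t + 1) * F := fun t => by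
    rw [pow_succ']
    have := mul_le_mul_of_nonneg_right (show 1 ≤ C by linarith) (hF.trans (hCt t))
    linarith
  induction t with
  | zero => simp [h0, h1]
  | succ t ih =>
    obtain ⟨⟨i1, i2⟩, i3, i4⟩ := ih
    refine ⟨⟨?_, ?_⟩, ?_, ?_⟩
    · have := hf (c + 1 + t)
      rw [show c + 1 + (t : ℤ) - 1 = c + t by ring] at this
      rw [show c + 1 + ((t + 1 : ℕ) : ℤ) = c + 1 + t + 1 by push_cast; ring, pow_succ', mul_assoc]
      exact one_st _ _ _ _ _ i1 i2 (hg _) (hCt t) this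
    · rw [show c + ((t + 1 : ℕ) : ℤ) = c + 1 + t by push_cast; ring]
      exact i1.trans (hCt2 t)
    · have := hf (c - t)
      rw [add_comm (f (c - t + 1))] at this
      rw [show c - ((t + 1 : ℕ) : ℤ) = c - t - 1 by push_cast; ring, pow_succ', mul_assoc]
      exact one_st _ _ _ _ _ i3 i4 (hg _) (hCt t) this
    · rw [show c - ((t + 1 : ℕ) : ℤ) + 1 = c - t by push_cast; ring]
      exact i3.trans (hCt2 t)

theorem gordon {lam E α θ Emax : ℝ} (hl : 0 < lam) (hl1 : 1 ≤ lam) (hE : |E| ≤ Emax) {u : ℤ → ℝ} (hu : IsSol (W lam E) α θ u)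
    (hs : Summable fun n => u n ^ 2) (hs1 : ∑' n, u n ^ 2 ≤ 1)
    (hK : ∀ A : ℝ, ∀ N : ℕ, ∃ K : ℤ, (N : ℤ) ≤ |K| ∧ sn (2 * θ + K * α) ≤ 7 * Real.exp (-(A * |(K : ℝ)|))) (x0 : ℤ) : u x0 = 0 := by
  have hEm : 0 ≤ Emax := (abs_nonneg E).trans hE
  set C := Emax + 2 * lam + 2 with hC
  have hC2 : 2 ≤ C := by linarith
  have hWC : ∀ x, |W lam E x| ≤ C - 2 := fun x => (W_bound hl.le x).trans (by linarith)
  have hu1 : ∀ n, |u n| ≤ 1 := by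
    intro n
    have h := (hs.le_tsum n (fun i _ => sq_nonneg (u i))).trans hs1
    exact (sq_le_one_iff_abs_le_one _).1 h
  have main : ∀ N : ℕ, ∃ K : ℤ, (N : ℤ) ≤ |K| ∧
      |u x0| ≤ |u (K - x0)| + 14 * lam * C ^ (x0.natAbs + 2) * Real.exp (-(N : ℝ)) := by
    intro N
    obtain ⟨K, hKN, hKs⟩ := hK (2 * (Real.log C + 1)) N
    refine ⟨K, hKN, ?_⟩
    set s := 14 * lam * Real.exp (-((Real.log C + 1) * |(K : ℝ)|)) with hsdef
    have hlog : 0 ≤ Real.log C := Real.log_nonneg (by linarith)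
    have he1 : Real.exp (-((Real.log C + 1) * |(K : ℝ)|)) ≤ 1 := by
      apply Real.exp_le_one_iff.2
      have : 0 ≤ (Real.log C + 1) * |(K : ℝ)| := by positivity
      linarith
    have he2 : Real.exp (-(2 * (Real.log C + 1) * |(K : ℝ)|)) = Real.exp (-((Real.log C + 1) * |(K : ℝ)|)) * Real.exp (-((Real.log C + 1) * |(K : ℝ)|)) := by
      rw [← Real.exp_add]; ring_nf
    set q := Real.exp (-((Real.log C + 1) * |(K : ℝ)|)) with hq
    have hq0 : 0 < q := Real.exp_pos _
    have hs0 : 0 ≤ s := by positivity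
    have hμ : 2 * lam * sn (2 * θ + K * α) ≤ 14 * lam * (q * q) := by
      rw [he2] at hKs
      have := mul_le_mul_of_nonneg_left hKs (show 0 ≤ 2 * lam by linarith)
      linarith
    have hμs : 2 * lam * sn (2 * θ + K * α) ≤ s := by
      refine hμ.trans (mul_le_mul_of_nonneg_left ?_ (by linarith))
      exact mul_le_of_le_one_left hq0.le he1
    have hμs2 : 2 * lam * sn (2 * θ + K * α) ≤ s ^ 2 := by
      refine hμ.trans ?_
      have e : s ^ 2 = (14 * lam) * (14 * lam * (q * q)) := by rw [hsdef]; ring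
      rw [e]
      exact le_mul_of_one_le_left (by positivity) (by linarith)
    have hc : K = 2 * (K / 2) ∨ K = 2 * (K / 2) + 1 := by omega
    obtain ⟨σ, hσ, hc0, hc1⟩ := center hu K (K / 2) hc hs0 hC2 (fun x => (hWC x).trans (by linarith))
      ((wronsk hl.le hu hs hs1 K (K / 2)).trans hμs2)
    have hσ1 : |σ| = 1 := by rcases hσ with h | h <;> rw [h] <;> simp
    have hsC : s ≤ C * s := le_mul_of_one_le_left hs0 (by linarith)
    have hp := propag (fun n => u n - σ * u (K - n)) (fun n => W lam E (θ + n * α)) C (C * s) (K / 2) (by positivity) hC2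
      (fun n => hWC _) (by
        intro n
        have h1 := hu n
        have h2 := hu (K - n)
        rw [show K - (n + 1) = K - n - 1 by ring, show K - (n - 1) = K - n + 1 by ring, h1, h2]
        have h3 := W_refl lam E α θ hl.le K n
        have e : W lam E (θ + n * α) * u n - u (n - 1) - σ * u (K - n - 1) + (u (n - 1) - σ * (W lam E (θ + (K - n : ℤ) * α) * u (K - n) - u (K - n - 1))) - W lam E (θ + n * α) * (u n - σ * u (K - n)) =
          σ * ((W lam E (θ + n * α) - W lam E (θ + (K - n : ℤ) * α)) * u (K - n)) := by ring
        rw [e, abs_mul, hσ1, one_mul, abs_mul]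
        have h4 := mul_le_mul h3 (hu1 (K - n)) (abs_nonneg _) ((abs_nonneg _).trans h3)
        linarith) hc0 hc1 (x0 - K / 2).natAbs
    have hfx : |u x0 - σ * u (K - x0)| ≤ C ^ (x0 - K / 2).natAbs * (C * s) := by
      rcases le_total (K / 2) x0 with h | h
      · have := hp.1.2
        rwa [show K / 2 + ((x0 - K / 2).natAbs : ℤ) = x0 by omega] at this
      · have := hp.2.1
        rwa [show K / 2 - ((x0 - K / 2).natAbs : ℤ) = x0 by omega] at this
    have h5 : |u x0| ≤ |u (K - x0)| + |u x0 - σ * u (K - x0)| := by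
      have := abs_add_le (σ * u (K - x0)) (u x0 - σ * u (K - x0))
      rw [add_sub_cancel, abs_mul, hσ1, one_mul] at this
      exact this
    refine h5.trans (by
      have h6 : C ^ (x0 - K / 2).natAbs * (C * s) ≤ 14 * lam * C ^ (x0.natAbs + 2) * Real.exp (-(N : ℝ)) := by
        have h7 : C ^ (x0 - K / 2).natAbs ≤ C ^ (x0.natAbs + 1 + K.natAbs) :=
          pow_le_pow_right₀ (by linarith) (by omega)
        have hqe : q = (C ^ K.natAbs)⁻¹ * Real.exp (-|(K : ℝ)|) := by
          rw [hq, show -((Real.log C + 1) * |(K : ℝ)|) = -(K.natAbs * Real.log C) + -|(K : ℝ)| by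
            rw [Nat.cast_natAbs]; push_cast; ring, Real.exp_add, Real.exp_neg, Real.exp_nat_mul, Real.exp_log (by linarith)]
        have hKN' : (N : ℝ) ≤ |(K : ℝ)| := by exact_mod_cast hKN
        calc C ^ (x0 - K / 2).natAbs * (C * s) ≤ C ^ (x0.natAbs + 1 + K.natAbs) * (C * s) := by gcongr
          _ = 14 * lam * C ^ (x0.natAbs + 2) * Real.exp (-|(K : ℝ)|) := by
            rw [hsdef, hqe, pow_add, pow_add, pow_add]
            have : C ^ K.natAbs ≠ 0 := by positivity
            field_simp
          _ ≤ _ := by gcongr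
      linarith)
  by_contra hne
  have hpos : 0 < |u x0| / 2 := half_pos (abs_pos.2 hne)
  have hu0 := hs.tendsto_cofinite_zero.sqrt
  simp only [Real.sqrt_sq_eq_abs, Real.sqrt_zero] at hu0
  have hfin := hu0.eventually (gt_mem_nhds hpos)
  rw [eventually_cofinite] at hfin
  obtain ⟨R, hR⟩ := (hfin.image Int.natAbs).bddAbove
  have hlim : Tendsto (fun N : ℕ => 14 * lam * C ^ (x0.natAbs + 2) * Real.exp (-(N : ℝ))) atTop (nhds 0) := by
    have h := (Real.tendsto_exp_neg_atTop_nhds_zero.comp tendsto_natCast_atTop_atTop).const_mul (14 * lam * C ^ (x0.natAbs + 2))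
    simpa using h
  obtain ⟨N, hN1, hN2⟩ := ((hlim.eventually (gt_mem_nhds hpos)).and (eventually_ge_atTop (R + 1 + x0.natAbs))).exists
  obtain ⟨K, hK1, hK2⟩ := main N
  have h8 : |u (K - x0)| < |u x0| / 2 := by
    by_contra hc
    have := hR (Set.mem_image_of_mem Int.natAbs (show K - x0 ∈ _ from hc))
    rw [Int.abs_eq_natAbs] at hK1
    omega
  linarith

end AMO

namespace AMO

theorem dio_conv {α : ℝ} (h : IsDiophantine α) : ∃ c : ℝ, ∃ p : ℕ, Dio α c p := by
  obtain ⟨κ, τ, hκ, hτ, hk⟩ := h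
  refine ⟨min 1 (4 * τ), ⌈κ⌉₊, lt_min one_pos (by linarith), min_le_left _ _, fun k hk0 => ?_⟩
  have h1 : (1 : ℝ) ≤ |(k : ℝ)| := by exact_mod_cast Int.one_le_abs hk0
  have h2 : |(k : ℝ)| ^ κ ≤ |(k : ℝ)| ^ ⌈κ⌉₊ := by
    rw [← Real.rpow_natCast]
    exact Real.rpow_le_rpow_of_exponent_le h1 (Nat.le_ceil κ)
  have h3 := hk k hk0
  have h4 := sn_lower (k * α)
  have h5 : 0 < |(k : ℝ)| ^ κ := Real.rpow_pos_of_pos (by linarith) _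
  unfold distToInt at h3
  calc min 1 (4 * τ) / |(k : ℝ)| ^ ⌈κ⌉₊ ≤ (4 * τ) / |(k : ℝ)| ^ κ :=
        div_le_div₀ (by linarith) (min_le_right _ _) h5 h2
    _ = 4 * (τ / |(k : ℝ)| ^ κ) := by ring
    _ ≤ _ := by linarith

theorem eig_bound {lam α θ E : ℝ} (hl : 0 ≤ lam) {φ : ℤ → ℝ} (h : IsEigenfunction (amoPot lam α θ) E φ) (m : ℤ)
    (hm : ∀ n, |φ n| ≤ |φ m|) (h0 : φ m ≠ 0) : |E| ≤ 2 + 2 * lam := by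
  have h1 := h m
  have h2 : |E| * |φ m| ≤ (2 + 2 * lam) * |φ m| := by
    rw [← abs_mul, ← h1]
    have h3 : |amoPot lam α θ m| ≤ 2 * lam := by
      unfold amoPot
      rw [abs_mul, abs_of_nonneg (by linarith : 0 ≤ 2 * lam)]
      exact mul_le_of_le_one_right (by linarith) (Real.abs_cos_le_one _)
    have h4 := mul_le_mul_of_nonneg_right h3 (abs_nonneg (φ m))
    have h5 := abs_add_le (φ (m + 1) + φ (m - 1)) (amoPot lam α θ m * φ m)
    have h6 := abs_add_le (φ (m + 1)) (φ (m - 1))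
    rw [abs_mul] at h5
    linarith [hm (m + 1), hm (m - 1)]
  exact le_of_mul_le_mul_right h2 (abs_pos.2 h0)

theorem eig_sol {lam α θ E : ℝ} {φ : ℤ → ℝ} (h : IsEigenfunction (amoPot lam α θ) E φ) :
    IsSol (W lam E) α θ φ := by
  intro n
  have h1 := h n
  unfold amoPot at h1
  unfold W
  linarith

theorem basis_sum_n (Φ : HilbertBasis ℕ ℝ (lp (fun _ : ℤ => ℝ) 2)) (s : ℕ) :
    HasSum (fun n : ℤ => (Φ s n) ^ 2) 1 := by
  have h := lp.hasSum_inner (𝕜 := ℝ) (Φ s) (Φ s)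
  rw [real_inner_self_eq_norm_sq, Φ.orthonormal.1 s] at h
  simpa [sq] using h

theorem basis_sum_s (Φ : HilbertBasis ℕ ℝ (lp (fun _ : ℤ => ℝ) 2)) (n : ℤ) :
    HasSum (fun s : ℕ => (Φ s n) ^ 2) 1 := by
  have h := Φ.hasSum_inner_mul_inner (lp.single 2 n (1 : ℝ)) (lp.single 2 n (1 : ℝ))
  simp only [lp.inner_single_left, lp.inner_single_right] at h
  simpa [sq] using h

theorem ev_natAbs {p : ℤ → Prop} (h : ∀ᶠ n in cofinite, p n) : ∃ N0 : ℕ, ∀ n : ℤ, (N0 : ℤ) ≤ |n| → p n := by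
  rw [eventually_cofinite] at h
  obtain ⟨R, hR⟩ := (h.image Int.natAbs).bddAbove
  refine ⟨R + 1, fun n hn => ?_⟩
  by_contra hc
  have := hR (Set.mem_image_of_mem Int.natAbs (show n ∈ _ from hc))
  rw [Int.abs_eq_natAbs] at hn
  omega

theorem ev_ge (N : ℕ) : ∀ᶠ n : ℤ in cofinite, (N : ℤ) ≤ |n| := by
  rw [eventually_cofinite]
  refine (Set.finite_Icc (-(N : ℤ)) N).subset fun n hn => ?_
  rw [Set.mem_ofPred_eq] at hn
  rw [Set.mem_Icc, ← abs_le]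
  omega

theorem delta_dich {α θ c : ℝ} {p : ℕ} (hd : Dio α c p) :
    (∀ A : ℝ, ∀ N : ℕ, ∃ K : ℤ, (N : ℤ) ≤ |K| ∧ sn (2 * θ + K * α) ≤ 7 * Real.exp (-(A * |(K : ℝ)|))) ∨
    (0 ≤ deltaPhase α θ ∧ ∀ δ', deltaPhase α θ < δ' → ∃ N0 : ℕ, ∀ N : ℤ, (N0 : ℤ) ≤ |N| → Real.exp (-(δ' * |(N : ℝ)|)) ≤ sn (2 * θ + N * α)) := by
  set f : ℤ → ℝ := fun n => -Real.log (distToInt (2 * θ + n * α)) / |(n : ℝ)| with hf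
  have hd0 : ∀ x, 0 ≤ distToInt x := fun x => abs_nonneg _
  have hd1 : ∀ x, distToInt x ≤ 1 := fun x => (abs_sub_round x).trans (by norm_num)
  have hf0 : ∀ n, 0 ≤ f n := fun n => div_nonneg (by linarith [Real.log_nonpos (hd0 (2 * θ + n * α)) (hd1 _)]) (abs_nonneg _)
  by_cases hb : IsBoundedUnder (· ≤ ·) cofinite f
  · right
    constructor
    · exact le_limsup_of_frequently_le (Filter.Eventually.of_forall hf0).frequently hb
    · intro δ' hδ'
      have e1 : ∀ᶠ n in cofinite, f n < δ' := eventually_lt_of_limsup_lt hδ' hb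
      have e2 : ∀ᶠ n : ℤ in cofinite, distToInt (2 * θ + n * α) ≠ 0 := by
        rw [eventually_cofinite]
        apply Set.Subsingleton.finite
        intro a ha b hb
        rw [Set.mem_ofPred_eq, not_not] at ha hb
        by_contra hab
        have h1 := hd.2.2 (a - b) (sub_ne_zero.2 hab)
        have h2 : 0 < c / |((a - b : ℤ) : ℝ)| ^ p := by
          have : (0 : ℝ) < |((a - b : ℤ) : ℝ)| := abs_pos.2 (by exact_mod_cast sub_ne_zero.2 hab)
          have := hd.1
          positivity
        have h3 := sn_upper (2 * θ + a * α)
        have h4 := sn_upper (2 * θ + b * α)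
        unfold distToInt at ha hb
        rw [ha] at h3
        rw [hb] at h4
        have h5 := sn_sub (2 * θ + a * α) (2 * θ + b * α)
        have e : 2 * θ + a * α - (2 * θ + b * α) = ((a - b : ℤ) : ℝ) * α := by push_cast; ring
        rw [e] at h5
        linarith
      obtain ⟨N0, hN0⟩ := ev_natAbs ((e1.and e2).and (ev_ge 1))
      refine ⟨N0, fun N hN => ?_⟩
      obtain ⟨⟨h1, h2⟩, h3⟩ := hN0 N hN
      have h4 : (0 : ℝ) < |(N : ℝ)| := by
        have : (1 : ℝ) ≤ |(N : ℝ)| := by exact_mod_cast h3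
        linarith
      have h5 : 0 < distToInt (2 * θ + N * α) := lt_of_le_of_ne (hd0 _) (Ne.symm h2)
      rw [hf] at h1
      have h6 := (div_lt_iff₀ h4).1 h1
      have h7 : Real.exp (-(δ' * |(N : ℝ)|)) ≤ distToInt (2 * θ + N * α) := by
        rw [← Real.exp_log h5]
        exact Real.exp_le_exp.2 (by linarith)
      have h8 := sn_lower (2 * θ + N * α)
      unfold distToInt at h7 h5
      linarith
  · left
    intro A N
    have h1 : ∃ᶠ n in cofinite, max A 0 < f n := by
      intro h
      apply hb
      refine ⟨max A 0, ?_⟩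
      rw [eventually_map]
      filter_upwards [h] with n hn
      exact not_lt.1 hn
    obtain ⟨K, hK1, hK2⟩ := (h1.and_eventually (ev_ge (N + 1))).exists
    refine ⟨K, by push_cast at hK2; linarith, ?_⟩
    have h4 : (0 : ℝ) < |(K : ℝ)| := by
      have h : (1 : ℤ) ≤ |K| := by push_cast at hK2; linarith [Int.natCast_nonneg N]
      have : (1 : ℝ) ≤ |(K : ℝ)| := by exact_mod_cast h
      linarith
    rw [hf] at hK1
    have h6 := (lt_div_iff₀ h4).1 hK1
    have h7 : A * |(K : ℝ)| ≤ max A 0 * |(K : ℝ)| := mul_le_mul_of_nonneg_right (le_max_left _ _) h4.le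
    have h8 : 0 ≤ max A 0 * |(K : ℝ)| := mul_nonneg (le_max_right _ _) h4.le
    have h5 : 0 < distToInt (2 * θ + K * α) := by
      refine lt_of_le_of_ne (hd0 _) (fun h => ?_)
      rw [← h, Real.log_zero] at h6
      linarith
    have h9 : distToInt (2 * θ + K * α) ≤ Real.exp (-(A * |(K : ℝ)|)) := by
      rw [← Real.exp_log h5]
      exact Real.exp_le_exp.2 (by linarith)
    have h10 := sn_upper (2 * θ + K * α)
    unfold distToInt at h9 h5
    refine h10.trans ?_
    exact mul_le_mul (by linarith [Real.pi_lt_d2]) h9 h5.le (by norm_num)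

end AMO

namespace AMO

theorem exp_tail {c e : ℝ} (hc : 0 < c) (he : 0 < e) : ∃ R : ℕ, ∀ T : Finset ℤ, (∀ j ∈ T, (R : ℤ) ≤ |j|) →
    ∑ j ∈ T, Real.exp (-(c * |(j : ℝ)|)) ^ 2 ≤ e := by
  have hnat : Summable fun n : ℕ => Real.exp (-(2 * c)) ^ n :=
    summable_geometric_of_lt_one (Real.exp_pos _).le (Real.exp_lt_one_iff.2 (by linarith))
  have hs : Summable fun j : ℤ => Real.exp (-(c * |(j : ℝ)|)) ^ 2 := by
    have e1 : ∀ n : ℕ, Real.exp (-(2 * c)) ^ n = Real.exp (-(c * (n : ℝ))) ^ 2 := by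
      intro n
      rw [← Real.exp_nat_mul, ← Real.exp_nat_mul]
      congr 1
      push_cast
      ring
    apply Summable.of_nat_of_neg
    · simpa [e1] using hnat
    · simpa [e1] using hnat
  obtain ⟨S, hS⟩ := summable_iff_vanishing_norm.1 hs e he
  obtain ⟨R, hR⟩ := (S.finite_toSet.image Int.natAbs).bddAbove
  refine ⟨R + 1, fun T hT => ?_⟩
  have := hS T (Finset.disjoint_left.2 fun j hj hjS => by
    have h1 := hT j hj
    have h2 := hR (Set.mem_image_of_mem Int.natAbs (show j ∈ (S : Set ℤ) from hjS))
    rw [Int.abs_eq_natAbs] at h1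
    omega)
  exact (le_abs_self _).trans this.le

theorem mass_ge {ι : Type*} [DecidableEq ι] {f : ι → ℝ} (hf0 : ∀ i, 0 ≤ f i) {a : ℝ} (hf : HasSum f a) (A : Finset ι) {b : ℝ}
    (h : ∀ T : Finset ι, Disjoint T A → ∑ i ∈ T, f i ≤ b) : a - b ≤ ∑ i ∈ A, f i := by
  have : a ≤ ∑ i ∈ A, f i + b := by
    refine hasSum_le_of_sum_le hf fun U => ?_
    have h1 := Finset.sum_inter_add_sum_sdiff U A f
    have h2 : ∑ i ∈ U ∩ A, f i ≤ ∑ i ∈ A, f i :=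
      Finset.sum_le_sum_of_subset_of_nonneg Finset.inter_subset_right fun i _ _ => hf0 i
    have h3 := h (U \ A) Finset.sdiff_disjoint
    linarith
  linarith

theorem count_upper {φ : ℕ → ℤ → ℝ} {m : ℕ → ℤ} (hn : ∀ s, HasSum (fun n => φ s n ^ 2) 1)
    (hs : ∀ n, HasSum (fun s => φ s n ^ 2) 1) {c e : ℝ} (hc : 0 < c) (he : 0 < e) (R0 : ℕ)
    (hdec : ∀ s n, (R0 : ℤ) ≤ |n| → |(m s : ℝ)| ≤ e * |(n : ℝ)| → |φ s n| ≤ Real.exp (-(c * |(n : ℝ)|))) :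
    ∃ C : ℝ, ∀ L : ℕ, {s | |m s| ≤ (L : ℤ)}.Finite ∧ (Set.ncard {s | |m s| ≤ (L : ℤ)} : ℝ) ≤ C * (2 * L + 1) := by
  obtain ⟨R, hR⟩ := exp_tail hc (show (0 : ℝ) < 1 / 2 by norm_num)
  set B := ⌈1 / e⌉₊ with hB
  have hBe : 1 ≤ e * B := by
    have h := Nat.le_ceil (1 / e)
    rw [div_le_iff₀ he] at h
    linarith
  have key : ∀ L : ℕ, ∀ T : Finset ℕ, (∀ s ∈ T, |m s| ≤ (L : ℤ)) → T.card ≤ 2 * (2 * (B * L + R + R0) + 1) := by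
    intro L T hT
    set M : ℕ := B * L + R + R0 with hM
    have hRM : R ≤ M ∧ R0 ≤ M ∧ B * L ≤ M := by refine ⟨?_, ?_, ?_⟩ <;> rw [hM] <;> omega
    have h1 : ∀ s ∈ T, (1 : ℝ) / 2 ≤ ∑ n ∈ Finset.Icc (-(M : ℤ)) M, φ s n ^ 2 := by
      intro s hsT
      have h2 := mass_ge (fun n => sq_nonneg (φ s n)) (hn s) (Finset.Icc (-(M : ℤ)) M) (b := 1 / 2) (by
        intro U hU
        have hj : ∀ j ∈ U, (M : ℤ) < |j| := by
          intro j hj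
          have := Finset.disjoint_left.1 hU hj
          rw [Finset.mem_Icc, ← abs_le] at this
          omega
        refine le_trans (Finset.sum_le_sum fun j hj' => ?_) (hR U (fun j hj' => by have := hj j hj'; omega))
        have h3 := hj j hj'
        have h4 := hdec s j (by omega) (by
          have h5 : |(m s : ℝ)| ≤ L := by exact_mod_cast hT s hsT
          have h6 : (M : ℝ) ≤ |(j : ℝ)| := by exact_mod_cast h3.le
          have h7 : (B * L : ℝ) ≤ M := by exact_mod_cast hRM.2.2
          have h8 := mul_le_mul_of_nonneg_left (h7.trans h6) he.le
          have h9 := mul_le_mul_of_nonneg_right hBe (Nat.cast_nonneg (α := ℝ) L)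
          linarith)
        rw [← sq_abs (φ s j)]
        exact pow_le_pow_left₀ (abs_nonneg _) h4 2)
      linarith
    have h2 : ∑ s ∈ T, ∑ n ∈ Finset.Icc (-(M : ℤ)) M, φ s n ^ 2 ≤ 2 * M + 1 := by
      rw [Finset.sum_comm]
      have h3 : ∑ n ∈ Finset.Icc (-(M : ℤ)) M, ∑ s ∈ T, φ s n ^ 2 ≤ ∑ n ∈ Finset.Icc (-(M : ℤ)) M, (1 : ℝ) :=
        Finset.sum_le_sum fun n _ => sum_le_hasSum T (fun s _ => sq_nonneg _) (hs n)
      refine h3.trans ?_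
      rw [Finset.sum_const, Int.card_Icc, nsmul_eq_mul, mul_one, show ((M : ℤ) + 1 - -(M : ℤ)).toNat = 2 * M + 1 by omega]
      push_cast
      exact le_rfl
    have h3 := Finset.sum_le_sum h1
    rw [Finset.sum_const, nsmul_eq_mul] at h3
    have h4 : (T.card : ℝ) ≤ ((2 * (2 * M + 1) : ℕ) : ℝ) := by push_cast; linarith
    exact_mod_cast h4
  refine ⟨2 * (2 * (B + R + R0) + 1), fun L => ?_⟩
  have hfin : {s | |m s| ≤ (L : ℤ)}.Finite := by
    by_contra hinf
    obtain ⟨T, hT1, hT2⟩ := Set.Infinite.exists_subset_card_eq hinf (2 * (2 * (B * L + R + R0) + 1) + 1)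
    have := key L T (fun s hs' => hT1 hs')
    omega
  refine ⟨hfin, ?_⟩
  have h := key L hfin.toFinset (fun s hs' => by simpa using hs')
  rw [Set.ncard_eq_toFinset_card _ hfin]
  have h' : (hfin.toFinset.card : ℝ) ≤ 2 * (2 * (B * L + R + R0) + 1) := by exact_mod_cast h
  refine h'.trans ?_
  have hL : (0 : ℝ) ≤ L := Nat.cast_nonneg L
  have hb : (0 : ℝ) ≤ B := Nat.cast_nonneg B
  have hr : (0 : ℝ) ≤ R := Nat.cast_nonneg R
  have hr0 : (0 : ℝ) ≤ R0 := Nat.cast_nonneg R0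
  nlinarith [mul_nonneg hb hL, mul_nonneg hr hL, mul_nonneg hr0 hL]

/-- weights grouped by the maximum point -/
theorem group_sum {φ : ℕ → ℤ → ℝ} {m : ℕ → ℤ} (hs : ∀ n, HasSum (fun s => φ s n ^ 2) 1) (g : ℤ → ℝ) (hg : ∀ j, 0 ≤ g j)
    (T : Finset ℕ) : ∑ s ∈ T, φ s (m s) ^ 2 * g (m s) ≤ ∑ j ∈ T.image m, g j := by
  rw [← Finset.sum_fiberwise_of_maps_to (fun s hs' => Finset.mem_image_of_mem m hs')]
  refine Finset.sum_le_sum fun j _ => ?_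
  have h1 : ∑ s ∈ T with m s = j, φ s (m s) ^ 2 * g (m s) = (∑ s ∈ T with m s = j, φ s j ^ 2) * g j := by
    rw [Finset.sum_mul]
    refine Finset.sum_congr rfl fun s hs' => ?_
    rw [(Finset.mem_filter.1 hs').2]
  rw [h1]
  exact mul_le_of_le_one_left (hg j) (sum_le_hasSum _ (fun s _ => sq_nonneg _) (hs j))

/-- lower count -/
theorem count_lower {φ : ℕ → ℤ → ℝ} {m : ℕ → ℤ} (hn : ∀ s, HasSum (fun n => φ s n ^ 2) 1)
    (hs : ∀ n, HasSum (fun s => φ s n ^ 2) 1) {c e : ℝ} (hc : 0 < c) (he : 0 < e) :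
    ∃ R : ℕ, ∀ L : ℕ, R ≤ L → {s | |m s| ≤ (L : ℤ)}.Finite → ∀ G : Finset ℤ,
    (∀ n ∈ G, ∀ s, (L : ℤ) < |m s| → |φ s n| ≤ |φ s (m s)| * Real.exp (-(c * |(m s : ℝ)|))) →
    (1 - e) * G.card ≤ (Set.ncard {s | |m s| ≤ (L : ℤ)} : ℝ) := by
  obtain ⟨R, hR⟩ := exp_tail hc he
  refine ⟨R, fun L hL hfin G hG => ?_⟩
  rw [Set.ncard_eq_toFinset_card _ hfin]
  have h1 : ∀ n ∈ G, 1 - e ≤ ∑ s ∈ hfin.toFinset, φ s n ^ 2 := by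
    intro n hnG
    refine mass_ge (fun s => sq_nonneg (φ s n)) (hs n) hfin.toFinset fun T hT => ?_
    have hT' : ∀ s ∈ T, (L : ℤ) < |m s| := by
      intro s hsT
      have := Finset.disjoint_left.1 hT hsT
      simpa using this
    refine le_trans (Finset.sum_le_sum fun s hsT => ?_) ((group_sum hs (fun j => Real.exp (-(c * |(j : ℝ)|)) ^ 2) (fun j => sq_nonneg _) T (m := m)).trans
      (hR (T.image m) ?_))
    · have h2 := pow_le_pow_left₀ (abs_nonneg _) (hG n hnG s (hT' s hsT)) 2
      rwa [mul_pow, sq_abs, sq_abs] at h2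
    · intro j hj
      obtain ⟨s, hsT, rfl⟩ := Finset.mem_image.1 hj
      have := hT' s hsT
      omega
  have h2 := Finset.sum_le_sum h1
  rw [Finset.sum_const, nsmul_eq_mul, Finset.sum_comm] at h2
  have h3 : ∑ s ∈ hfin.toFinset, ∑ n ∈ G, φ s n ^ 2 ≤ ∑ s ∈ hfin.toFinset, (1 : ℝ) :=
    Finset.sum_le_sum fun s _ => sum_le_hasSum G (fun s _ => sq_nonneg _) (hn s)
  rw [Finset.sum_const, nsmul_eq_mul, mul_one] at h3
  linarith

end AMO

namespace AMO

/-- localization alternative -/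
def Loc (φ : ℕ → ℤ → ℝ) (m : ℕ → ℤ) (α θ Λ δ' : ℝ) (N0 : ℕ) (e c' ε1 : ℝ) (X0 : ℕ) : Prop :=
  ∀ X : ℕ, X0 ≤ X → ∀ (s : ℕ) (n : ℤ), |m s| ≤ X → |n| ≤ X → e * X ≤ |(n : ℝ) - m s| →
    |φ s n| ≤ |φ s (m s)| * Real.exp (-(c' * X)) ∨ ∃ K : ℤ, sn (2 * θ + K * α) < Real.exp (-(ε1 * X)) ∧
        |(n : ℝ) + m s - K| ≤ e * X ∧ (|K| < N0 ∨ Λ * |(n : ℝ) - m s| ≤ δ' * |(K : ℝ)| + e * X)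

theorem loc_far {φ : ℕ → ℤ → ℝ} {m : ℕ → ℤ} {α θ Λ δ' : ℝ} {N0 : ℕ} {e c' ε1 : ℝ} {X0 : ℕ}
    (h : Loc φ m α θ Λ δ' N0 e c' ε1 X0) (hφ : ∀ s n, |φ s n| ≤ 1) (he : 0 < e) (he4 : e ≤ 1 / 4) (hδ' : 0 ≤ δ') (hΛ : 0 < Λ)
    (hel : e * (Λ + 2 * δ' + 1) < Λ - δ') :
    ∀ s n, ((X0 + 2 * N0 + 1 : ℕ) : ℤ) ≤ |n| → |(m s : ℝ)| ≤ e * |(n : ℝ)| → |φ s n| ≤ Real.exp (-(c' * |(n : ℝ)|)) := by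
  intro s n hn hms
  have hX : ((n.natAbs : ℕ) : ℝ) = |(n : ℝ)| := by rw [Nat.cast_natAbs]; push_cast; rfl
  have hXz : ((n.natAbs : ℕ) : ℤ) = |n| := (Int.abs_eq_natAbs n).symm
  have hnR : (X0 : ℝ) + 2 * N0 + 1 ≤ |(n : ℝ)| := by exact_mod_cast hn
  have hX0 : (0 : ℝ) ≤ X0 := Nat.cast_nonneg _
  have hN0 : (0 : ℝ) ≤ N0 := Nat.cast_nonneg _
  have h1 : e * |(n : ℝ)| ≤ 1 / 4 * |(n : ℝ)| := mul_le_mul_of_nonneg_right he4 (abs_nonneg _)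
  have h2 : |(n : ℝ)| - |(m s : ℝ)| ≤ |(n : ℝ) - m s| := abs_sub_abs_le_abs_sub _ _
  rcases h n.natAbs (by omega) s n (by
      rw [hXz]
      have : |(m s : ℝ)| ≤ |(n : ℝ)| := by linarith [abs_nonneg (n : ℝ)]
      exact_mod_cast this) (by rw [hXz]) (by rw [hX]; linarith [abs_nonneg (n : ℝ)]) with h3 | ⟨K, -, hK1, hK2⟩
  · rw [hX] at h3
    exact h3.trans (mul_le_of_le_one_left (Real.exp_pos _).le (hφ _ _))
  · exfalso
    rw [hX] at hK1 hK2
    have h4 : |(n : ℝ)| ≤ |(n : ℝ) + m s| + |(m s : ℝ)| := by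
      have := abs_sub (n + m s : ℝ) (m s)
      rwa [add_sub_cancel_right] at this
    have h5 : |(n : ℝ) + m s| ≤ |(n : ℝ) + m s - K| + |(K : ℝ)| := by
      have := abs_add_le ((n : ℝ) + m s - K) K
      rwa [sub_add_cancel] at this
    have h6 : |(K : ℝ)| ≤ |(n : ℝ)| + |(m s : ℝ)| + |(n : ℝ) + m s - K| := by
      have := abs_sub (n + m s : ℝ) (n + m s - K)
      rw [sub_sub_cancel] at this
      linarith [abs_add_le (n : ℝ) (m s)]
    rcases hK2 with hK2 | hK2
    · have : |(K : ℝ)| < N0 := by exact_mod_cast hK2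
      linarith
    · have h7 : |(n : ℝ)| * (1 - e) ≤ |(n : ℝ) - m s| := by linarith
      have h8 := mul_le_mul_of_nonneg_left h7 hΛ.le
      have h9 : |(K : ℝ)| ≤ |(n : ℝ)| * (1 + 2 * e) := by linarith
      have h10 := mul_le_mul_of_nonneg_left h9 hδ'
      have h11 := mul_lt_mul_of_pos_right hel (show 0 < |(n : ℝ)| by linarith)
      linarith

theorem badgeo {L n m K Λ d C1 e : ℝ} (hΛ : 0 < Λ) (hd0 : 0 ≤ d) (hd1 : d ≤ 1) (he : 0 < e) (hL : 0 < L)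
    (hn : |n| ≤ (1 - 2 * e) * L) (hm : L < m) (hmC : m ≤ C1 * L) (h1 : |n + m - K| ≤ e * m)
    (h2 : |n - m| ≤ d * |K| + e / Λ * m) :
    0 < K ∧ (1 - d) * K / 2 - e * (C1 * (1 + 1 / Λ)) * L ≤ n ∧ n ≤ (1 - d) * K / 2 + d * L + e * (C1 * (1 + 1 / Λ)) * L := by
  have a1 := abs_le.1 hn
  have a2 := abs_le.1 h1
  have hem : e * L ≤ e * m := mul_le_mul_of_nonneg_left hm.le he.le
  have hemC : e * m ≤ e * (C1 * L) := mul_le_mul_of_nonneg_left hmC he.le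
  have hK : 0 < K := by
    by_cases h : e ≤ 1
    · have : e * m ≤ 2 * e * m - e * m := by linarith
      have h3 : 0 < e * m := mul_pos he (by linarith)
      have h4 : (2 * e) * L + (1 - 2 * e) * m ≤ m + (2 * e) * (L - m) := by linarith
      nlinarith [mul_pos he hL]
    · exfalso
      have := abs_nonneg n
      nlinarith
  rw [abs_of_pos hK] at h2
  have a3 := abs_le.1 h2
  have hΛ' : 0 < 1 / Λ := by positivity
  have e1 : e / Λ * m = (1 / Λ) * (e * m) := by ring
  have e2 := mul_le_mul_of_nonneg_left hemC hΛ'.le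
  have hpos : 0 ≤ e * (C1 * L) := by
    have : 0 < e * m := mul_pos he (by linarith)
    linarith
  have hpos2 := mul_nonneg hΛ'.le hpos
  have e3 : e * (C1 * (1 + 1 / Λ)) * L = e * (C1 * L) + (1 / Λ) * (e * (C1 * L)) := by ring
  rw [e3]
  refine ⟨hK, by linarith, ?_⟩
  have u1 : n ≤ L := by nlinarith [mul_pos he hL]
  have u2 : n ≤ K / 2 + e * (C1 * L) / 2 := by linarith
  have u3 := mul_le_mul_of_nonneg_left u2 (sub_nonneg.2 hd1)
  have u4 := mul_le_mul_of_nonneg_left u1 hd0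
  have u5 : (1 - d) * (e * (C1 * L)) ≤ e * (C1 * L) := mul_le_of_le_one_left hpos (by linarith)
  linarith

end AMO

namespace AMO

def Bad (m : ℤ) (α θ Λ d e ε1 C1 : ℝ) (L : ℕ) (n K : ℤ) : Prop :=
  sn (2 * θ + K * α) < Real.exp (-(ε1 * L)) ∧ |(m : ℝ)| ≤ C1 * L ∧ |(K : ℝ)| ≤ (1 + 2 * C1) * L ∧
    |(n : ℝ) + m - K| ≤ e * |(m : ℝ)| ∧ |(n : ℝ) - m| ≤ d * |(K : ℝ)| + e / Λ * |(m : ℝ)|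

theorem loc_bad {φ : ℕ → ℤ → ℝ} {m : ℕ → ℤ} {α θ Λ δ' : ℝ} {N0 : ℕ} {e c' ε1 : ℝ} {X0 : ℕ}
    (h : Loc φ m α θ Λ δ' N0 e c' ε1 X0) (hε1 : 0 < ε1) (he : 0 < e) (he4 : e ≤ 1 / 4) (hδ' : 0 ≤ δ') (hΛ : 0 < Λ)
    (hδΛ : δ' < Λ) (hel : (δ' + 1) * e ≤ (Λ - δ') / 2) {L : ℕ} (hL0 : X0 ≤ L) (hLN : (N0 : ℝ) < e * L) (s : ℕ) (n : ℤ)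
    (hs : (L : ℤ) < |m s|) (hn : |(n : ℝ)| ≤ (1 - 2 * e) * L) :
    |φ s n| ≤ |φ s (m s)| * Real.exp (-(c' * |(m s : ℝ)|)) ∨ ∃ K, Bad (m s) α θ Λ (δ' / Λ) e ε1 (4 * Λ / (Λ - δ')) L n K := by
  have hX : (((m s).natAbs : ℕ) : ℝ) = |(m s : ℝ)| := by rw [Nat.cast_natAbs]; push_cast; rfl
  have hXz : (((m s).natAbs : ℕ) : ℤ) = |m s| := (Int.abs_eq_natAbs _).symm
  have hsR : (L : ℝ) < |(m s : ℝ)| := by exact_mod_cast hs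
  have hLp : (0 : ℝ) ≤ L := Nat.cast_nonneg _
  have heL : 0 ≤ e * L := by positivity
  have hem : e * L ≤ e * |(m s : ℝ)| := mul_le_mul_of_nonneg_left hsR.le he.le
  have hnL : |(n : ℝ)| ≤ L := by linarith
  have h0 : |(m s : ℝ)| - |(n : ℝ)| ≤ |(n : ℝ) - m s| := by
    rw [abs_sub_comm]; exact abs_sub_abs_le_abs_sub _ _
  have h0' : |(m s : ℝ)| - |(n : ℝ)| ≤ |(n : ℝ) + m s| := by
    have := abs_sub (n + m s : ℝ) n
    rw [add_sub_cancel_left] at this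
    linarith
  have hmn : 2 * e * |(m s : ℝ)| ≤ |(m s : ℝ)| - |(n : ℝ)| := by
    have := mul_le_mul_of_nonneg_left hsR.le (show 0 ≤ 1 - 2 * e by linarith)
    linarith
  have hemp : 0 ≤ e * |(m s : ℝ)| := by positivity
  rcases h (m s).natAbs (by omega) s n (by rw [hXz]) (by
      rw [hXz]
      have : |(n : ℝ)| ≤ |(m s : ℝ)| := by linarith
      exact_mod_cast this) (by rw [hX]; linarith) with h3 | ⟨K, hK0, hK1, hK2⟩
  · rw [hX] at h3
    exact Or.inl h3
  · right
    rw [hX] at hK0 hK1 hK2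
    have h5 : |(n : ℝ) + m s| ≤ |(n : ℝ) + m s - K| + |(K : ℝ)| := by
      have := abs_add_le ((n : ℝ) + m s - K) K
      rwa [sub_add_cancel] at this
    have h6 : |(K : ℝ)| ≤ |(n : ℝ)| + |(m s : ℝ)| + |(n : ℝ) + m s - K| := by
      have := abs_sub (n + m s : ℝ) (n + m s - K)
      rw [sub_sub_cancel] at this
      linarith [abs_add_le (n : ℝ) (m s)]
    rcases hK2 with hK2 | hK2
    · exfalso
      have : |(K : ℝ)| < N0 := by exact_mod_cast hK2
      linarith
    have hg : 0 < Λ - δ' := by linarith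
    have hmC : |(m s : ℝ)| ≤ 4 * Λ / (Λ - δ') * L := by
      have i1 := mul_le_mul_of_nonneg_left h0 hΛ.le
      have i2 := mul_le_mul_of_nonneg_left (h6.trans (add_le_add_right hK1 _)) hδ'
      have i3 := mul_le_mul_of_nonneg_right hel (abs_nonneg (m s : ℝ))
      have i4 := mul_le_mul_of_nonneg_left hnL (show 0 ≤ Λ + δ' by linarith)
      have i5 := mul_le_mul_of_nonneg_right hδΛ.le hLp
      have i6 : (Λ - δ') * |(m s : ℝ)| ≤ 4 * Λ * L := by linarith
      rw [div_mul_eq_mul_div, le_div_iff₀ hg]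
      linarith
    refine ⟨K, hK0.trans_le (Real.exp_le_exp.2 ?_), hmC, ?_, hK1, ?_⟩
    · have := mul_le_mul_of_nonneg_left hsR.le hε1.le
      linarith
    · have : e * |(m s : ℝ)| ≤ 1 / 4 * |(m s : ℝ)| := mul_le_mul_of_nonneg_right he4 (abs_nonneg _)
      linarith
    · have e1 : δ' / Λ * |(K : ℝ)| + e / Λ * |(m s : ℝ)| = (δ' * |(K : ℝ)| + e * |(m s : ℝ)|) / Λ := by ring
      rw [e1, le_div_iff₀ hΛ]
      linarith

theorem uniqueK {α θ c ε1 C2 : ℝ} {p : ℕ} (hd : Dio α c p) (hε1 : 0 < ε1) (hC2 : 0 < C2) :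
    ∃ L0 : ℕ, ∀ L : ℕ, L0 ≤ L → ∀ K K' : ℤ, sn (2 * θ + K * α) < Real.exp (-(ε1 * L)) → sn (2 * θ + K' * α) < Real.exp (-(ε1 * L)) →
      |(K : ℝ)| ≤ C2 * L → |(K' : ℝ)| ≤ C2 * L → K = K' := by
  have hlim := (Real.tendsto_pow_mul_exp_neg_atTop_nhds_zero p)
  have hc := hd.1
  have hl2 : Tendsto (fun L : ℕ => ε1 * (L : ℝ)) atTop atTop := tendsto_natCast_atTop_atTop.const_mul_atTop hε1
  have hl3 := (hlim.comp hl2).eventually (gt_mem_nhds (show 0 < c * ε1 ^ p / (2 * (2 * C2) ^ p) by positivity))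
  obtain ⟨L0, hL0⟩ := eventually_atTop.1 (hl3.and (eventually_gt_atTop 0))
  refine ⟨L0, fun L hL K K' h1 h2 h3 h4 => ?_⟩
  obtain ⟨h5, hLp⟩ := hL0 L hL
  have hLp' : (0 : ℝ) < L := by exact_mod_cast hLp
  by_contra hne
  have h6 := hd.2.2 (K - K') (sub_ne_zero.2 hne)
  have h7 := sn_sub (2 * θ + K * α) (2 * θ + K' * α)
  rw [show 2 * θ + K * α - (2 * θ + K' * α) = ((K - K' : ℤ) : ℝ) * α by push_cast; ring] at h7
  have h8 : |((K - K' : ℤ) : ℝ)| ≤ 2 * C2 * L := by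
    push_cast
    linarith [abs_sub (K : ℝ) K']
  have h8' : 0 < |((K - K' : ℤ) : ℝ)| := abs_pos.2 (by exact_mod_cast sub_ne_zero.2 hne)
  have h9 : c / (2 * C2 * L) ^ p ≤ c / |((K - K' : ℤ) : ℝ)| ^ p := by
    apply div_le_div_of_nonneg_left hc.le (by positivity)
    exact pow_le_pow_left₀ h8'.le h8 p
  have h10 : c / (2 * C2 * L) ^ p < 2 * Real.exp (-(ε1 * L)) := by linarith
  simp only [Function.comp] at h5
  rw [lt_div_iff₀ (by positivity)] at h5
  rw [div_lt_iff₀ (by positivity)] at h10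
  have h11 := mul_lt_mul_of_pos_right h10 (show 0 < ε1 ^ p by positivity)
  have e1 : 2 * Real.exp (-(ε1 * L)) * (2 * C2 * L) ^ p * ε1 ^ p = (ε1 * L) ^ p * Real.exp (-(ε1 * L)) * (2 * (2 * C2) ^ p) := by
    rw [mul_pow (2 * C2), mul_pow ε1]; ring
  linarith

theorem bad_interval {α θ c ε1 Λ d e C1 : ℝ} {p : ℕ} (hd : Dio α c p) (hε1 : 0 < ε1) (hC1 : 0 < C1)
    (hΛ : 0 < Λ) (hd0 : 0 ≤ d) (hd1 : d ≤ 1) (he : 0 < e) :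
    ∃ L0 : ℕ, ∀ L : ℕ, L0 ≤ L → ∃ a : ℝ, ∀ m n K : ℤ, (L : ℤ) < |m| → |(n : ℝ)| ≤ (1 - 2 * e) * L → Bad m α θ Λ d e ε1 C1 L n K →
      a ≤ n ∧ (n : ℝ) ≤ a + (d * L + 2 * (e * (C1 * (1 + 1 / Λ)) * L)) := by
  obtain ⟨L0, hL0⟩ := uniqueK (θ := θ) hd hε1 (show 0 < 1 + 2 * C1 by linarith)
  refine ⟨L0 + 1, fun L hL => ?_⟩
  have hLp : (0 : ℝ) < L := by exact_mod_cast (by omega : 0 < L)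
  have geo : ∀ m n K : ℤ, (L : ℤ) < |m| → |(n : ℝ)| ≤ (1 - 2 * e) * L → Bad m α θ Λ d e ε1 C1 L n K →
      (0 < (K : ℝ) ∧ (1 - d) * K / 2 - e * (C1 * (1 + 1 / Λ)) * L ≤ n ∧ (n : ℝ) ≤ (1 - d) * K / 2 + d * L + e * (C1 * (1 + 1 / Λ)) * L) ∨
      (0 < -(K : ℝ) ∧ (1 - d) * (-K) / 2 - e * (C1 * (1 + 1 / Λ)) * L ≤ -n ∧ -(n : ℝ) ≤ (1 - d) * (-K) / 2 + d * L + e * (C1 * (1 + 1 / Λ)) * L) := by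
    intro m n K hm hn ⟨_, b1, b2, b3, b4⟩
    have hmR : (L : ℝ) < |(m : ℝ)| := by exact_mod_cast hm
    rcases le_total 0 (m : ℝ) with h | h
    · rw [abs_of_nonneg h] at hmR b1 b3 b4
      exact Or.inl (badgeo hΛ hd0 hd1 he hLp hn hmR b1 b3 b4)
    · rw [abs_of_nonpos h] at hmR b1 b3 b4
      refine Or.inr (badgeo (m := -m) hΛ hd0 hd1 he hLp (by rwa [abs_neg]) hmR b1 ?_ ?_)
      · rw [show -(n : ℝ) + -m - -K = -(n + m - K) by ring, abs_neg]; exact b3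
      · rw [show -(n : ℝ) - -m = -(n - m) by ring, abs_neg, abs_neg]; exact b4
  by_cases hex : ∃ m n K : ℤ, (L : ℤ) < |m| ∧ |(n : ℝ)| ≤ (1 - 2 * e) * L ∧ Bad m α θ Λ d e ε1 C1 L n K
  · obtain ⟨m1, n1, K, hm1, hn1, hb1⟩ := hex
    rcases geo m1 n1 K hm1 hn1 hb1 with hK | hK
    · refine ⟨(1 - d) * K / 2 - e * (C1 * (1 + 1 / Λ)) * L, fun m n K' hm hn hb => ?_⟩
      obtain rfl := hL0 L (by omega) K K' hb1.1 hb.1 hb1.2.2.1 hb.2.2.1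
      rcases geo m n K hm hn hb with h | h
      · exact ⟨h.2.1, by linarith⟩
      · exfalso; linarith
    · refine ⟨-((1 - d) * (-K) / 2 + d * L + e * (C1 * (1 + 1 / Λ)) * L), fun m n K' hm hn hb => ?_⟩
      obtain rfl := hL0 L (by omega) K K' hb1.1 hb.1 hb1.2.2.1 hb.2.2.1
      rcases geo m n K hm hn hb with h | h
      · exfalso; linarith
      · exact ⟨by linarith, by linarith⟩
  · exact ⟨0, fun m n K hm hn hb => absurd ⟨m, n, K, hm, hn, hb⟩ hex⟩

end AMO

namespace AMO

theorem card_good (M : ℕ) (a w : ℝ) (hw : 0 ≤ w) (G : Finset ℤ)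
    (hG : ∀ n : ℤ, |n| ≤ (M : ℤ) → n ∉ G → a ≤ n ∧ (n : ℝ) ≤ a + w) : 2 * (M : ℝ) - w ≤ G.card := by
  have h1 : Finset.Icc (-(M : ℤ)) M ⊆ G ∪ Finset.Icc ⌈a⌉ ⌊a + w⌋ := by
    intro n hn
    rw [Finset.mem_Icc, ← abs_le] at hn
    rw [Finset.mem_union]
    by_cases h : n ∈ G
    · exact Or.inl h
    · obtain ⟨h2, h3⟩ := hG n hn h
      exact Or.inr (Finset.mem_Icc.2 ⟨Int.ceil_le.2 h2, Int.le_floor.2 h3⟩)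
  have h2 := (Finset.card_le_card h1).trans (Finset.card_union_le _ _)
  rw [Int.card_Icc, Int.card_Icc, show ((M : ℤ) + 1 - -(M : ℤ)).toNat = 2 * M + 1 by omega] at h2
  have h3 : (((⌊a + w⌋ + 1 - ⌈a⌉).toNat : ℕ) : ℝ) ≤ w + 1 := by
    have e1 : (((⌊a + w⌋ + 1 - ⌈a⌉).toNat : ℕ) : ℝ) = max ((⌊a + w⌋ : ℝ) + 1 - ⌈a⌉) 0 := by
      have : (((⌊a + w⌋ + 1 - ⌈a⌉).toNat : ℤ) : ℝ) = ((max (⌊a + w⌋ + 1 - ⌈a⌉) 0 : ℤ) : ℝ) := by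
        rw [Int.toNat_eq_max]
      push_cast at this
      exact this
    rw [e1]
    refine max_le ?_ (by linarith)
    linarith [Int.floor_le (a + w), Int.le_ceil a]
  have h4 : (2 * M + 1 : ℝ) ≤ G.card + ((⌊a + w⌋ + 1 - ⌈a⌉).toNat : ℕ) := by exact_mod_cast h2
  linarith

theorem sq_le_one_of_sum {φ : ℕ → ℤ → ℝ} (hn : ∀ s, HasSum (fun n => φ s n ^ 2) 1) (s : ℕ) (n : ℤ) : |φ s n| ≤ 1 :=
  (sq_le_one_iff_abs_le_one _).1 (le_hasSum (hn s) n fun _ _ => sq_nonneg _)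

theorem dens {φ : ℕ → ℤ → ℝ} {m : ℕ → ℤ} (hn : ∀ s, HasSum (fun n => φ s n ^ 2) 1)
    (hs : ∀ n, HasSum (fun s => φ s n ^ 2) 1) {α θ c Λ δ' : ℝ} {p N0 : ℕ} (hd : Dio α c p) (hδ' : 0 ≤ δ') (hΛ : 0 < Λ)
    (hδΛ : δ' < Λ)
    (hloc : ∀ e : ℝ, 0 < e → e ≤ 1 → ∃ c' : ℝ, 0 < c' ∧ ∃ ε1 : ℝ, 0 < ε1 ∧ ∃ X0 : ℕ, Loc φ m α θ Λ δ' N0 e c' ε1 X0)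
    {η : ℝ} (hη : 0 < η) :
    (∃ C : ℝ, ∀ L : ℕ, (Set.ncard {s | |m s| ≤ (L : ℤ)} : ℝ) ≤ C * (2 * L + 1)) ∧
    ∀ᶠ L : ℕ in atTop, (1 - δ' / Λ - η) * (2 * L + 1) ≤ (Set.ncard {s | |m s| ≤ (L : ℤ)} : ℝ) := by
  have hg : 0 < Λ - δ' := by linarith
  set C1 := 4 * Λ / (Λ - δ') with hC1
  have hC1p : 0 < C1 := by positivity
  set C := C1 * (1 + 1 / Λ) with hC
  have hCp : 0 < C := by positivity
  set d := δ' / Λ with hdd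
  have hd0 : 0 ≤ d := by positivity
  have hd1 : d ≤ 1 := by rw [hdd, div_le_one hΛ]; exact hδΛ.le
  obtain ⟨e, he, he4, heg, heη⟩ : ∃ e : ℝ, 0 < e ∧ e ≤ 1 / 4 ∧ e * (Λ + 2 * δ' + 1) ≤ (Λ - δ') / 2 ∧ e * (6 + 2 * C) ≤ η := by
    refine ⟨min (1 / 4) (min ((Λ - δ') / 2 / (Λ + 2 * δ' + 1)) (η / (6 + 2 * C))), by positivity, min_le_left _ _, ?_, ?_⟩
    · rw [← le_div_iff₀ (by positivity)]
      exact (min_le_right _ _).trans (min_le_left _ _)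
    · rw [← le_div_iff₀ (by positivity)]
      exact (min_le_right _ _).trans (min_le_right _ _)
  obtain ⟨c', hc', ε1, hε1, X0, hL⟩ := hloc e he (by linarith)
  have heδ : (δ' + 1) * e ≤ (Λ - δ') / 2 := by
    have : 0 ≤ e * (Λ + δ') := by positivity
    linarith
  obtain ⟨CC, hCC⟩ := count_upper hn hs hc' he _ (loc_far hL (sq_le_one_of_sum hn) he he4 hδ' hΛ (by linarith))
  refine ⟨⟨CC, fun L => (hCC L).2⟩, ?_⟩
  obtain ⟨R, hR⟩ := count_lower hn hs hc' he (m := m)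
  obtain ⟨L1, hL1⟩ := bad_interval (θ := θ) hd hε1 hC1p hΛ hd0 hd1 he
  have ev1 : ∀ᶠ L : ℕ in atTop, (N0 : ℝ) < e * L :=
    (tendsto_natCast_atTop_atTop.const_mul_atTop he).eventually_gt_atTop _
  have ev2 : ∀ᶠ L : ℕ in atTop, 3 < η * L :=
    (tendsto_natCast_atTop_atTop.const_mul_atTop hη).eventually_gt_atTop _
  filter_upwards [ev1, ev2, eventually_ge_atTop X0, eventually_ge_atTop R, eventually_ge_atTop L1] with L v1 v2 v3 v4 v5
  obtain ⟨a, ha⟩ := hL1 L v5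
  have hLp : (0 : ℝ) ≤ L := Nat.cast_nonneg _
  have hM0 : 0 ≤ (1 - 2 * e) * L := mul_nonneg (by linarith) hLp
  set M := ⌊(1 - 2 * e) * (L : ℝ)⌋₊ with hM
  have hM1 : (M : ℝ) ≤ (1 - 2 * e) * L := Nat.floor_le hM0
  have hM2 : (1 - 2 * e) * L < M + 1 := Nat.lt_floor_add_one _
  classical
  set G := (Finset.Icc (-(M : ℤ)) M).filter fun n => ∀ s, (L : ℤ) < |m s| → |φ s n| ≤ |φ s (m s)| * Real.exp (-(c' * |(m s : ℝ)|)) with hG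
  have h1 := hR L v4 (hCC L).1 G (fun n hnG => (Finset.mem_filter.1 hnG).2)
  have hw : 0 ≤ d * L + 2 * (e * C * L) := by positivity
  have h2 := card_good M a (d * L + 2 * (e * C * L)) hw G (by
    intro n hnM hnG
    rw [hG, Finset.mem_filter, Finset.mem_Icc, ← abs_le] at hnG
    have h3 : ¬ ∀ s, (L : ℤ) < |m s| → |φ s n| ≤ |φ s (m s)| * Real.exp (-(c' * |(m s : ℝ)|)) := fun h => hnG ⟨hnM, h⟩
    push Not at h3
    obtain ⟨s, hs1, hs2⟩ := h3
    have hnR : |(n : ℝ)| ≤ (1 - 2 * e) * L := by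
      have : |(n : ℝ)| ≤ M := by exact_mod_cast hnM
      linarith
    rcases loc_bad hL hε1 he he4 hδ' hΛ hδΛ heδ v3 v1 s n hs1 hnR with h | ⟨K, hK⟩
    · exact absurd h (not_le.2 hs2)
    · exact ha (m s) n K hs1 hnR hK)
  refine le_trans ?_ h1
  have h5 : 2 * (1 - 2 * e) * L - 2 - d * L - 2 * (e * C * L) ≤ G.card := by linarith
  have h6 := mul_le_mul_of_nonneg_left h5 (show 0 ≤ 1 - e by linarith)
  refine le_trans ?_ h6
  have h7 := mul_le_mul_of_nonneg_right heη hLp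
  have h8 : 0 ≤ e * (e * L) := by positivity
  have h9 : 0 ≤ e * (d * L) := by positivity
  have h10 : 0 ≤ e * (e * C * L) := by positivity
  have h11 : 0 ≤ d * L := by positivity
  linarith

end AMO

theorem amo_lower_density_bound
    (lam α θ : ℝ) (hlam : 1 < lam) (hα : IsDiophantine α)
    (hδ : deltaPhase α θ < Real.log lam)
    (Φ : HilbertBasis ℕ ℝ (lp (fun _ : ℤ => ℝ) 2))
    (heig : ∀ s : ℕ, ∃ E : ℝ, IsEigenfunction (amoPot lam α θ) E (fun n => Φ s n))
    (m : ℕ → ℤ) (hm : ∀ (s : ℕ) (n : ℤ), |Φ s n| ≤ |Φ s (m s)|) :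
    1 - deltaPhase α θ / Real.log lam
      ≤ liminf (fun L : ℕ => (Set.ncard {s : ℕ | |m s| ≤ (L : ℤ)} : ℝ) / (2 * L + 1)) atTop := by
  have hn := AMO.basis_sum_n Φ
  have hs := AMO.basis_sum_s Φ
  have hΛ : 0 < Real.log lam := Real.log_pos hlam
  have hne : ∀ s, Φ s (m s) ≠ 0 := by
    intro s h0
    have hz : ∀ n, Φ s n = 0 := by
      intro n
      have := hm s n
      rw [h0, abs_zero] at this
      exact abs_nonpos_iff.1 this
    have h1 := hn s
    have e0 : (fun n : ℤ => (Φ s n) ^ 2) = fun _ => (0 : ℝ) := by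
      funext n
      rw [hz n]
      norm_num
    rw [e0] at h1
    exact one_ne_zero (h1.unique hasSum_zero)
  have hE : ∀ s E, IsEigenfunction (amoPot lam α θ) E (fun n => Φ s n) → |E| ≤ 2 + 2 * lam :=
    fun s E h => AMO.eig_bound (by linarith) h (m s) (hm s) (hne s)
  obtain ⟨c, p, hd⟩ := AMO.dio_conv hα
  rcases AMO.delta_dich (θ := θ) hd with hK | ⟨hδ0, hδN⟩
  · exfalso
    obtain ⟨E, hEs⟩ := heig 0
    exact hne 0 (AMO.gordon (by linarith) hlam.le (hE 0 E hEs) (AMO.eig_sol hEs) (hn 0).summable (hn 0).tsum_eq.le hK (m 0))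
  have main : ∀ δ', deltaPhase α θ < δ' → δ' < Real.log lam → ∀ η : ℝ, 0 < η →
      (∃ C : ℝ, ∀ L : ℕ, (Set.ncard {s | |m s| ≤ (L : ℤ)} : ℝ) ≤ C * (2 * L + 1)) ∧
      ∀ᶠ L : ℕ in atTop, (1 - δ' / Real.log lam - η) * (2 * L + 1) ≤ (Set.ncard {s | |m s| ≤ (L : ℤ)} : ℝ) := by
    intro δ' h1 h2 η hη
    obtain ⟨N0, hN0⟩ := hδN δ' h1
    refine AMO.dens (N0 := N0) (θ := θ) hn hs hd (by linarith) hΛ h2 ?_ hη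
    intro e he he1
    obtain ⟨c', hc', ε1, hε1, X0, hX⟩ := AMO.mainLoc hlam hd (show 0 ≤ 2 + 2 * lam by linarith) θ (show 0 ≤ δ' by linarith) N0 hN0 he he1
    refine ⟨c', hc', ε1, hε1, X0, fun X hX0 s n h3 h4 h5 => ?_⟩
    obtain ⟨E, hEs⟩ := heig s
    exact hX X hX0 E (hE s E hEs) (fun n => Φ s n) (m s) n (AMO.eig_sol hEs) (hm s) (hne s) h3 h4 h5
  have hpos : ∀ L : ℕ, (0 : ℝ) < 2 * L + 1 := fun L => by positivity
  refine le_of_forall_pos_sub_le fun η hη => ?_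
  obtain ⟨δ', h1, h2, h3⟩ : ∃ δ', deltaPhase α θ < δ' ∧ δ' < Real.log lam ∧ δ' / Real.log lam ≤ deltaPhase α θ / Real.log lam + η / 2 := by
    obtain ⟨δ', h1, h2⟩ := exists_between (lt_min hδ (show deltaPhase α θ < deltaPhase α θ + η / 2 * Real.log lam by
      have : 0 < η / 2 * Real.log lam := by positivity
      linarith))
    refine ⟨δ', h1, h2.trans_le (min_le_left _ _), ?_⟩
    rw [div_le_iff₀ hΛ, add_mul, div_mul_cancel₀ _ hΛ.ne']
    exact (h2.trans_le (min_le_right _ _)).le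
  obtain ⟨⟨C, hC⟩, hev⟩ := main δ' h1 h2 (η / 2) (by linarith)
  refine le_liminf_of_le ?_ ?_
  · refine IsBoundedUnder.isCoboundedUnder_ge ⟨C, ?_⟩
    rw [eventually_map]
    exact Eventually.of_forall fun L => (div_le_iff₀ (hpos L)).2 (hC L)
  · filter_upwards [hev] with L hL
    rw [le_div_iff₀ (hpos L)]
    refine le_trans (mul_le_mul_of_nonneg_right ?_ (hpos L).le) hL
    linarith
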